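/- Let ω be an irrational number of bounded type and let l ∈ ℕ. For every κ > 0 there exist a 1-periodic C^l map D : ℝ → SL(2,ℝ) and a sequence of 1-periodic C^l maps C_k : ℝ → SL(2,ℝ) such that: (i) L(D) ≥ κ; (ii) for every k, L(C_k) = 0, i.e. the sequence (1/m)∫₀¹ log‖C_k^m(x)‖ dx tends to 0 as m → ∞; and (iii) C_k → D in the C^l topology, i.e. for each 0 ≤ j ≤ l, sup_x ‖(d^j/dx^j)(C_k − D)(x)‖ → 0 as k → ∞ (derivatives taken entrywise). -/

import Mathlib

open Real MeasureTheory Filter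

attribute [local instance] Matrix.normedAddCommGroup Matrix.normedSpace

/-- Operator norm of a 2×2 real matrix, acting on Euclidean space. -/
noncomputable def opNorm (A : Matrix (Fin 2) (Fin 2) ℝ) : ℝ :=
  ‖(Matrix.toEuclideanCLM (𝕜 := ℝ) A : EuclideanSpace ℝ (Fin 2) →L[ℝ] EuclideanSpace ℝ (Fin 2))‖

/-- Iterates of the quasi-periodic cocycle: A^n(x) = A(x+(n-1)ω)⋯A(x+ω)A(x). -/
noncomputable def cocycle (ω : ℝ) (A : ℝ → Matrix (Fin 2) (Fin 2) ℝ) :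
    ℕ → ℝ → Matrix (Fin 2) (Fin 2) ℝ
  | 0, _ => 1
  | n + 1, x => A (x + n * ω) * cocycle ω A n x

/-- Finite Lyapunov exponents L_n(A) = (1/n) ∫₀¹ log ‖A^n(x)‖ dx. -/
noncomputable def LEn (ω : ℝ) (A : ℝ → Matrix (Fin 2) (Fin 2) ℝ) (n : ℕ) : ℝ :=
  (1 / n) * ∫ x in (0:ℝ)..1, Real.log (opNorm (cocycle ω A n x))

/-- The Schrödinger cocycle S_v(x) = [[v(x), -1],[1,0]]. -/
def SchrodingerCocycle (v : ℝ → ℝ) (x : ℝ) : Matrix (Fin 2) (Fin 2) ℝ := !![v x, -1; 1, 0]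

/-- The denominators of the continued fraction convergents of ω. -/
noncomputable def cfDen (ω : ℝ) (k : ℕ) : ℝ := (GenContFract.of ω).dens k

lemma cf_notTerm (ω : ℝ) (hω : Irrational ω) (n : ℕ) : ¬ (GenContFract.of ω).TerminatedAt n := by
  intro h
  have : (GenContFract.of ω).Terminates := ⟨n, h⟩
  rw [GenContFract.terminates_iff_rat] at this
  obtain ⟨q, hq⟩ := this
  exact hω ⟨q, hq.symm⟩

lemma cf_contsAux_int (ω : ℝ) (hω : Irrational ω) (n : ℕ) :
    (∃ a b : ℤ, ((GenContFract.of ω).contsAux n).a = a ∧ ((GenContFract.of ω).contsAux n).b = b) ∧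
    (∃ a b : ℤ, ((GenContFract.of ω).contsAux (n+1)).a = a ∧
      ((GenContFract.of ω).contsAux (n+1)).b = b) := by
  induction n with
  | zero =>
    refine ⟨⟨1, 0, by simp [GenContFract.contsAux], by simp [GenContFract.contsAux]⟩,
      ⟨⌊ω⌋, 1, by simp [GenContFract.contsAux], by simp [GenContFract.contsAux]⟩⟩
  | succ n ih =>
    refine ⟨ih.2, ?_⟩
    obtain ⟨⟨a, b, ha, hb⟩, ⟨a', b', ha', hb'⟩⟩ := ih
    have hnt := cf_notTerm ω hω n
    obtain ⟨gp, hgp⟩ : ∃ gp, (GenContFract.of ω).s.get? n = some gp := by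
      rw [GenContFract.terminatedAt_iff_s_none] at hnt
      exact Option.ne_none_iff_exists'.mp hnt
    have hrec := GenContFract.contsAux_recurrence hgp rfl rfl
    obtain ⟨h1, z, hz⟩ := GenContFract.of_partNum_eq_one_and_exists_int_partDen_eq hgp
    refine ⟨z * a' + a, z * b' + b, ?_, ?_⟩
    · rw [hrec]; simp [h1, hz, ha, ha']
    · rw [hrec]; simp [h1, hz, hb, hb']

lemma cf_int (ω : ℝ) (hω : Irrational ω) (n : ℕ) :
    ∃ a b : ℤ, (GenContFract.of ω).nums n = a ∧ (GenContFract.of ω).dens n = b :=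
  (cf_contsAux_int ω hω n).2

lemma cf_dioph (ω : ℝ) (hω : Irrational ω)
    (M : ℝ) (hM : 1 ≤ M) (hbt : ∀ k : ℕ, cfDen ω (k + 1) ≤ M * cfDen ω k) :
    ∃ c0 > 0, c0 ≤ 1 ∧ ∀ (n : ℕ) (m : ℤ), 1 ≤ n → c0 / n ≤ |n * ω - m| := by
  refine ⟨1 / (4 * M), by positivity, ?_, ?_⟩
  · rw [div_le_one (by positivity)]; linarith
  intro q m hq
  have hq' : (1:ℝ) ≤ q := by exact_mod_cast hq
  have hnt := cf_notTerm ω hω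
  have hfib : ∀ n, (Nat.fib (n+1) : ℝ) ≤ cfDen ω n := fun n =>
    GenContFract.succ_nth_fib_le_of_nth_den (Or.inr (hnt _))
  have hex : ∃ k, 2 * (q:ℝ) < cfDen ω k := by
    refine ⟨2 * q + 5, lt_of_lt_of_le ?_ (hfib _)⟩
    have := Nat.le_fib_self (n := 2 * q + 5 + 1) (by omega)
    have h2 : 2 * q < Nat.fib (2 * q + 5 + 1) := by omega
    exact_mod_cast h2
  classical
  set k := Nat.find hex with hk
  have hk1 : 2 * (q:ℝ) < cfDen ω k := Nat.find_spec hex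
  have hk0 : k ≠ 0 := by
    intro h
    rw [h] at hk1
    have : cfDen ω 0 = 1 := by simp [cfDen]
    linarith
  obtain ⟨k', hk'⟩ := Nat.exists_eq_succ_of_ne_zero hk0
  have hk2 : cfDen ω k' ≤ 2 * q := by
    have := Nat.find_min hex (m := k') (by omega)
    linarith
  have hk3 : cfDen ω k ≤ M * (2 * q) := by
    rw [hk']
    exact (hbt k').trans (by gcongr)
  have hBpos : 0 < cfDen ω k := by linarith
  have hmono : cfDen ω k ≤ cfDen ω (k+1) := GenContFract.of_den_mono
  have happ : |ω * cfDen ω k - (GenContFract.of ω).nums k| ≤ 1 / cfDen ω k := by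
    have h := GenContFract.abs_sub_convs_le (hnt k)
    rw [GenContFract.conv_eq_num_div_den] at h
    change |ω - _ / cfDen ω k| ≤ 1 / (cfDen ω k * cfDen ω (k+1)) at h
    have : ω * cfDen ω k - (GenContFract.of ω).nums k
      = (ω - (GenContFract.of ω).nums k / cfDen ω k) * cfDen ω k := by field_simp
    rw [this, abs_mul, abs_of_pos hBpos]
    calc _ ≤ 1 / (cfDen ω k * cfDen ω (k+1)) * cfDen ω k := by gcongr
      _ = 1 / cfDen ω (k+1) := by field_simp
      _ ≤ _ := by gcongr
  have hdet : (GenContFract.of ω).nums k * cfDen ω (k+1) - cfDen ω k * (GenContFract.of ω).nums (k+1)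
     = (-1)^(k+1) := (SimpContFract.of ω).determinant (hnt k)
  obtain ⟨A, B, hA, hB⟩ := cf_int ω hω k
  obtain ⟨A', B', hA', hB'⟩ := cf_int ω hω (k+1)
  change cfDen ω k = B at hB
  change cfDen ω (k+1) = B' at hB'
  rw [hA, hA', hB, hB'] at hdet
  have hdetZ : A * B' - B * A' = (-1)^(k+1) := by exact_mod_cast hdet
  rw [hB] at hk1 hk3 hBpos happ
  rw [hA] at happ
  have hBposZ : 0 < B := by exact_mod_cast hBpos
  have hqB : 2 * (q:ℤ) < B := by exact_mod_cast hk1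
  have hne : (q:ℤ) * A - m * B ≠ 0 := by
    intro h0
    have h1 : (q:ℤ) * (-1)^(k+1) = B * (m * B' - q * A') := by
      rw [← hdetZ]; linear_combination B' * h0
    have h2 : B ∣ (q:ℤ) := by
      rcases neg_one_pow_eq_or ℤ (k+1) with h | h
      · rw [h] at h1; exact ⟨_, by simpa using h1⟩
      · rw [h] at h1; exact ⟨-(m * B' - q * A'), by linarith⟩
    have := Int.le_of_dvd (by omega) h2
    omega
  have h1 : (1:ℝ) ≤ |(q:ℝ) * A - m * B| := by
    have := Int.one_le_abs hne
    exact_mod_cast this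
  have h2 : |(q:ℝ) * A - m * B| ≤ q * (1 / B) + B * |q * ω - m| := by
    have : (q:ℝ) * A - m * B = -(q * (ω * B - A)) + B * (q * ω - m) := by ring
    rw [this]
    refine (abs_add_le _ _).trans ?_
    rw [abs_neg, abs_mul, abs_mul, abs_of_pos hBpos, abs_of_nonneg (by positivity : (0:ℝ) ≤ q)]
    gcongr
  have h3 : (q:ℝ) * (1 / B) ≤ 1/2 := by
    rw [mul_one_div, div_le_iff₀ hBpos]; linarith
  have h4 : 1/2 ≤ B * |q * ω - m| := by linarith
  have h5 : (B:ℝ) * |q * ω - m| ≤ M * (2 * q) * |q * ω - m| := by gcongr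
  rw [div_div, div_le_iff₀ (by positivity)]
  nlinarith


/-- Diophantine condition of bounded type. -/
def Dio (c0 α : ℝ) : Prop := ∀ (n : ℕ) (m : ℤ), 1 ≤ n → c0 / n ≤ |n * α - m|

/-- Being within `r` of an integer. -/
def near (r x : ℝ) : Prop := ∃ m : ℤ, |x - m| ≤ r

lemma Dio.neg {c0 α : ℝ} (h : Dio c0 α) : Dio c0 (-α) := by
  intro n m hn
  have := h n (-m) hn
  rw [← abs_neg]
  convert this using 2
  push_cast; ring

lemma near.mono {r r' x : ℝ} (h : near r x) (hr : r ≤ r') : near r' x := by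
  obtain ⟨m, hm⟩ := h
  exact ⟨m, hm.trans hr⟩

lemma near.add_one {r x : ℝ} : near r (x + 1) ↔ near r x := by
  constructor
  · rintro ⟨m, hm⟩
    exact ⟨m - 1, by push_cast; convert hm using 2; ring⟩
  · rintro ⟨m, hm⟩
    exact ⟨m + 1, by push_cast; convert hm using 2; ring⟩

lemma Dio.gap {c0 α : ℝ} (h : Dio c0 α) {r1 r2 x : ℝ} {n : ℕ} (hn : 1 ≤ n)
    (h1 : near r1 x) (h2 : near r2 (x + n * α)) : c0 / n ≤ r1 + r2 := by
  obtain ⟨m1, h1⟩ := h1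
  obtain ⟨m2, h2⟩ := h2
  refine (h n (m2 - m1) hn).trans ?_
  have : (n:ℝ) * α - ((m2 - m1 : ℤ) : ℝ) = (x + n * α - m2) - (x - m1) := by push_cast; ring
  rw [this]
  have := abs_sub (x + n * α - m2) (x - m1)
  linarith

lemma Dio.hit {c0 α : ℝ} (hc0 : 0 < c0) (h : Dio c0 α) {ε : ℝ} (hε : 0 < ε) (hε1 : ε ≤ 1) (x : ℝ) :
    ∃ m : ℕ, 1 ≤ m ∧ (m : ℝ) ≤ 12 / c0 / ε ^ 2 ∧ near ε (x + m * α) := by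
  set n := ⌈1 / ε⌉₊ with hn
  have hn0 : 0 < n := Nat.ceil_pos.mpr (by positivity)
  have hn1 : 1 / ε ≤ n := Nat.le_ceil _
  have h1e : 1 ≤ 1 / ε := by rw [le_div_iff₀ hε]; linarith
  have hn2 : (n:ℝ) ≤ 2 / ε := by
    have := (Nat.ceil_lt_add_one (by positivity : 0 ≤ 1 / ε)).le
    have h2 : 2 / ε = 1 / ε + 1 / ε := by ring
    rw [h2]; linarith
  obtain ⟨j, k', hk0, hkn, hk⟩ := Real.exists_int_int_abs_mul_sub_le α hn0
  obtain ⟨k, rfl⟩ := Int.eq_ofNat_of_zero_le hk0.le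
  have hk1 : 1 ≤ k := by exact_mod_cast hk0
  have hkn' : (k:ℝ) ≤ n := by exact_mod_cast hkn
  have hkR : (1:ℝ) ≤ k := by exact_mod_cast hk1
  have hδ1 := h k j hk1
  have hcast : ((k:ℤ):ℝ) = (k:ℝ) := by simp
  rw [hcast] at hk
  set δ := (k:ℝ) * α - j with hδ
  have hδlow : c0 * ε / 2 ≤ |δ| := by
    refine le_trans ?_ hδ1
    rw [le_div_iff₀ (by positivity)]
    have : (k:ℝ) ≤ 2 / ε := hkn'.trans hn2
    calc c0 * ε / 2 * k ≤ c0 * ε / 2 * (2 / ε) := by gcongr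
      _ = c0 := by field_simp
  have hδpos : 0 < |δ| := lt_of_lt_of_le (by positivity) hδlow
  have hδε : |δ| ≤ ε := by
    refine hk.trans ?_
    rw [div_le_iff₀ (by positivity)]
    rw [div_le_iff₀ hε] at hn1
    nlinarith
  obtain ⟨t, ht1, ht2, N, hN⟩ : ∃ t : ℕ, 1 ≤ t ∧ (t:ℝ) ≤ 3 / |δ| ∧ ∃ N : ℤ, |x + t * δ - N| ≤ |δ| := by
    have key : ∀ y : ℝ, 1 ≤ y → y ≤ 2 → ∃ t : ℕ, 1 ≤ t ∧ (t:ℝ) ≤ 3 / |δ| ∧ |y - t * (|δ|)| ≤ |δ| := by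
      intro y hy1 hy2
      have hyd : 0 < y / |δ| := by positivity
      refine ⟨⌈y / |δ|⌉₊, Nat.ceil_pos.mpr hyd, ?_, ?_⟩
      · have := (Nat.ceil_lt_add_one hyd.le).le
        refine this.trans ?_
        rw [div_add_one hδpos.ne']
        gcongr
        linarith
      · have h1 := Nat.le_ceil (y / |δ|)
        have h2 := (Nat.ceil_lt_add_one hyd.le).le
        rw [div_le_iff₀ hδpos] at h1
        rw [div_add_one hδpos.ne', le_div_iff₀ hδpos] at h2
        rw [abs_le]; constructor <;> linarith
    rcases lt_or_ge δ 0 with hneg | hpos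
    · obtain ⟨t, h1, h2, h3⟩ := key (x - (⌊x⌋ - 1 : ℤ)) (by push_cast; linarith [Int.floor_le x])
        (by push_cast; linarith [Int.lt_floor_add_one x])
      refine ⟨t, h1, h2, ⌊x⌋ - 1, ?_⟩
      convert h3 using 2
      rw [abs_of_neg hneg]; ring
    · obtain ⟨t, h1, h2, h3⟩ := key ((⌈x⌉ + 1 : ℤ) - x) (by push_cast; linarith [Int.le_ceil x])
        (by push_cast; linarith [Int.ceil_lt_add_one x])
      refine ⟨t, h1, h2, ⌈x⌉ + 1, ?_⟩
      rw [← abs_neg]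
      convert h3 using 2
      rw [abs_of_nonneg hpos]; ring
  refine ⟨t * k, Nat.one_le_iff_ne_zero.mpr (by positivity), ?_, N + t * j, ?_⟩
  · push_cast
    calc (t:ℝ) * k ≤ 3 / |δ| * (2 / ε) := by
          gcongr; exact hkn'.trans hn2
      _ ≤ 3 / (c0 * ε / 2) * (2 / ε) := by gcongr
      _ = _ := by field_simp; norm_num
  · refine le_trans (le_of_eq ?_) (hN.trans hδε)
    congr 1
    push_cast
    rw [hδ]; ring

/-- no two close visits -/
lemma Dio.no_near {c0 α : ℝ} (h : Dio c0 α) {r1 r2 x : ℝ} {n : ℕ} (hn : 1 ≤ n)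
    (h1 : near r1 x) (hs : (r1 + r2) * n < c0) : ¬ near r2 (x + n * α) := by
  intro h2
  have := h.gap hn h1 h2
  rw [div_le_iff₀ (by exact_mod_cast hn)] at this
  linarith


/-- `F` is `C^l` and its `j`-th derivative is dominated by `M^j H`. -/
def Dom (l : ℕ) (M : ℝ) (F H : ℝ → ℝ) : Prop :=
  ContDiff ℝ l F ∧ ∀ x, ∀ j ≤ l, |iteratedDeriv j F x| ≤ M ^ j * H x

namespace Dom
variable {l : ℕ} {M M' : ℝ} {F G H H' : ℝ → ℝ}

lemma le (h : Dom l M F H) (x : ℝ) : |F x| ≤ H x := by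
  simpa using h.2 x 0 (Nat.zero_le _)

lemma nonneg (h : Dom l M F H) (x : ℝ) : 0 ≤ H x := (abs_nonneg _).trans (h.le x)

lemma mono (h : Dom l M F H) (hM0 : 0 ≤ M) (hM : M ≤ M') (hH : ∀ x, H x ≤ H' x) : Dom l M' F H' := by
  refine ⟨h.1, fun x j hj => (h.2 x j hj).trans ?_⟩
  have := h.nonneg x
  have := hH x
  have hM' : 0 ≤ M' := hM0.trans hM
  gcongr

lemma monoM (h : Dom l M F H) (hM0 : 0 ≤ M) (hM : M ≤ M') : Dom l M' F H :=
  h.mono hM0 hM fun _ => le_rfl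

lemma monoH (h : Dom l M F H) (hM0 : 0 ≤ M) (hH : ∀ x, H x ≤ H' x) : Dom l M F H' :=
  h.mono hM0 le_rfl hH

lemma congr (h : Dom l M F H) (hF : ∀ x, F x = G x) : Dom l M G H := by
  have : F = G := funext hF
  rwa [← this]

lemma add (h : Dom l M F H) (h' : Dom l M G H') :
    Dom l M (fun x => F x + G x) (fun x => H x + H' x) := by
  refine ⟨h.1.add h'.1, fun x j hj => ?_⟩
  have hj' : (j : WithTop ℕ∞) ≤ l := by exact_mod_cast hj
  rw [iteratedDeriv_fun_add (h.1.of_le hj').contDiffAt (h'.1.of_le hj').contDiffAt]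
  have := h.2 x j hj
  have := h'.2 x j hj
  have := abs_add_le (iteratedDeriv j F x) (iteratedDeriv j G x)
  linarith

lemma const (c : ℝ) (hM : 0 ≤ M) : Dom l M (fun _ => c) (fun _ => |c|) := by
  refine ⟨contDiff_const, fun x j hj => ?_⟩
  rw [iteratedDeriv_const]
  split_ifs with h
  · simp [h]
  · simp; positivity

lemma sum {ι : Type*} (s : Finset ι) {F H : ι → ℝ → ℝ} (hM : 0 ≤ M) (h : ∀ i ∈ s, Dom l M (F i) (H i)) :
    Dom l M (fun x => ∑ i ∈ s, F i x) (fun x => ∑ i ∈ s, H i x) := by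
  classical
  induction s using Finset.induction_on with
  | empty => simpa using const (l := l) 0 hM
  | insert a s ha ih =>
    have := (h a (by simp)).add (ih fun i hi => h i (by simp [hi]))
    simpa [Finset.sum_insert ha] using this

lemma neg (h : Dom l M F H) : Dom l M (fun x => - F x) H := by
  refine ⟨h.1.neg, fun x j hj => ?_⟩
  rw [iteratedDeriv_fun_neg, abs_neg]
  exact h.2 x j hj

lemma translate (h : Dom l M F H) (t : ℝ) : Dom l M (fun x => F (x + t)) (fun x => H (x + t)) := by
  refine ⟨h.1.comp (contDiff_id.add contDiff_const), fun x j hj => ?_⟩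
  rw [iteratedDeriv_comp_add_const]
  exact h.2 _ j hj

lemma mul (hM : 0 ≤ M) (h : Dom l M F H) (h' : Dom l M' G H') :
    Dom l (M + M') (fun x => F x * G x) (fun x => H x * H' x) := by
  refine ⟨h.1.mul h'.1, fun x j hj => ?_⟩
  have hj' : (j : WithTop ℕ∞) ≤ l := by exact_mod_cast hj
  rw [iteratedDeriv_fun_mul (h.1.of_le hj').contDiffAt (h'.1.of_le hj').contDiffAt, add_pow, Finset.sum_mul]
  refine (Finset.abs_sum_le_sum_abs _ _).trans (Finset.sum_le_sum fun i hi => ?_)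
  have hi' : i ≤ j := by simpa [Nat.lt_succ_iff] using hi
  rw [abs_mul, abs_mul, Nat.abs_cast]
  have h1 := h.2 x i (hi'.trans hj)
  have h2 := h'.2 x (j - i) ((Nat.sub_le _ _).trans hj)
  have := h.nonneg x
  calc _ ≤ (j.choose i : ℝ) * (M ^ i * H x) * (M' ^ (j - i) * H' x) := by gcongr
    _ = _ := by ring

lemma self (hM : 0 ≤ M) {C : ℝ} (hC : 1 ≤ C) (hF : ∀ x, 0 ≤ F x) (h : Dom l M F (fun x => C * F x)) :
    Dom l (C * M) F F := by
  refine ⟨h.1, fun x j hj => ?_⟩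
  rcases Nat.eq_zero_or_pos j with rfl | hj0
  · simp [abs_of_nonneg (hF x)]
  · refine (h.2 x j hj).trans ?_
    rw [mul_pow]
    have h1 : C ≤ C ^ j := le_self_pow₀ hC (by omega)
    have h2 : 0 ≤ M ^ j * F x := mul_nonneg (by positivity) (hF x)
    nlinarith

lemma inv_aux (l j : ℕ) (hj : j ≤ l) : ((2 * l + 2 : ℝ) + 1) ^ j ≤ 2 * (2 * l + 2 : ℝ) ^ j := by
  have hA : (0:ℝ) < 2 * l + 2 := by positivity
  have h1 : (2 * l + 2 : ℝ) + 1 ≤ (2 * l + 2) * exp (1 / (2 * l + 2)) := by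
    have := add_one_le_exp (1 / (2 * l + 2 : ℝ))
    calc (2 * l + 2 : ℝ) + 1 = (2 * l + 2) * (1 / (2 * l + 2) + 1) := by field_simp; ring
      _ ≤ _ := by gcongr
  calc ((2 * l + 2 : ℝ) + 1) ^ j ≤ ((2 * l + 2) * exp (1 / (2 * l + 2))) ^ j := by gcongr
    _ = exp (j * (1 / (2 * l + 2))) * (2 * l + 2 : ℝ) ^ j := by rw [mul_pow, ← exp_nat_mul]; ring
    _ ≤ exp (1/2) * (2 * l + 2 : ℝ) ^ j := by
        gcongr
        rw [mul_one_div, div_le_div_iff₀ hA (by norm_num)]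
        have : (j:ℝ) ≤ l := by exact_mod_cast hj
        linarith
    _ ≤ _ := by
        gcongr
        have h := exp_one_lt_d9
        have h2 : exp (1/2) * exp (1/2) = exp 1 := by rw [← exp_add]; norm_num
        nlinarith [exp_pos (1/2:ℝ)]

lemma inv (hM : 0 ≤ M) (h : Dom l M F F) (hF : ∀ x, 0 < F x) :
    Dom l ((2 * l + 2) * M) (fun x => (F x)⁻¹) (fun x => (F x)⁻¹) := by
  have hc : ContDiff ℝ l (fun x => (F x)⁻¹) := h.1.inv fun x => (hF x).ne'
  refine ⟨hc, fun x j => ?_⟩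
  induction j using Nat.strong_induction_on with
  | _ j ih =>
    intro hj
    rcases Nat.eq_zero_or_pos j with rfl | hj0
    · simp [abs_of_pos (hF x)]
    have hj' : (j : WithTop ℕ∞) ≤ l := by exact_mod_cast hj
    have hprod : (fun y => F y * (F y)⁻¹) = fun _ => (1:ℝ) := by
      funext y; exact mul_inv_cancel₀ (hF y).ne'
    have h0 : iteratedDeriv j (fun y => F y * (F y)⁻¹) x = 0 := by
      rw [hprod, iteratedDeriv_const]; simp [hj0.ne']
    rw [iteratedDeriv_fun_mul (h.1.of_le hj').contDiffAt (hc.of_le hj').contDiffAt,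
      Finset.sum_range_succ'] at h0
    simp only [Nat.choose_zero_right, Nat.cast_one, one_mul, iteratedDeriv_zero, Nat.sub_zero] at h0
    set A : ℝ := 2 * l + 2 with hA
    have hApos : 0 < A := by positivity
    have hb : |F x * iteratedDeriv j (fun y => (F y)⁻¹) x| ≤ (A * M) ^ j := by
      have : F x * iteratedDeriv j (fun y => (F y)⁻¹) x = - ∑ i ∈ Finset.range j,
          (j.choose (i+1) : ℝ) * iteratedDeriv (i+1) F x *
          iteratedDeriv (j - (i+1)) (fun y => (F y)⁻¹) x := by linarith
      rw [this, abs_neg]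
      refine (Finset.abs_sum_le_sum_abs _ _).trans ?_
      have hterm : ∀ i ∈ Finset.range j, |(j.choose (i+1) : ℝ) * iteratedDeriv (i+1) F x *
          iteratedDeriv (j - (i+1)) (fun y => (F y)⁻¹) x| ≤
          M ^ j * ((1:ℝ) ^ (i+1) * A ^ (j - (i+1)) * (j.choose (i+1) : ℝ)) := by
        intro i hi
        have hij : i + 1 ≤ j := by simpa using hi
        rw [abs_mul, abs_mul, Nat.abs_cast]
        have h1 := h.2 x (i+1) (hij.trans hj)
        have h2 := ih (j - (i+1)) (by omega) (by omega)
        have hFp := hF x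
        calc _ ≤ (j.choose (i+1) : ℝ) * (M ^ (i+1) * F x) * ((A * M) ^ (j - (i+1)) * (F x)⁻¹) := by
              gcongr
          _ = (M ^ (i+1) * M ^ (j - (i+1))) * ((1:ℝ) ^ (i+1) * A ^ (j - (i+1)) * (j.choose (i+1) : ℝ))
                * (F x * (F x)⁻¹) := by rw [mul_pow]; ring
          _ = _ := by rw [← pow_add, Nat.add_sub_cancel' hij, mul_inv_cancel₀ hFp.ne', mul_one]
      refine (Finset.sum_le_sum hterm).trans ?_
      rw [← Finset.mul_sum, mul_pow, mul_comm (A ^ j)]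
      gcongr
      have h3 := inv_aux l j hj
      have h4 := add_pow (1:ℝ) A j
      rw [Finset.sum_range_succ'] at h4
      simp only [Nat.choose_zero_right, Nat.cast_one, mul_one, pow_zero, one_mul, Nat.sub_zero] at h4
      rw [← hA, add_comm A 1] at h3
      simp only [one_pow, one_mul] at h4 ⊢
      linarith
    rw [abs_mul, abs_of_pos (hF x)] at hb
    rw [← div_eq_mul_inv, le_div_iff₀ (hF x)]
    linarith

lemma pow_theta {θ : ℝ → ℝ} {T : ℝ} (hT : 0 ≤ T) (h0 : ∀ x, 0 ≤ θ x) (h1 : ∀ x, θ x ≤ 1)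
    (h : Dom l T θ (fun _ => 1)) (p : ℕ) :
    ContDiff ℝ l (fun x => θ x ^ p) ∧
    ∀ x, ∀ j ≤ l, |iteratedDeriv j (fun x => θ x ^ p) x| ≤ (p * T) ^ j * θ x ^ (p - j) := by
  induction p with
  | zero =>
    refine ⟨by simpa using contDiff_const, fun x j hj => ?_⟩
    simp only [pow_zero]
    rw [iteratedDeriv_const]
    split_ifs with hj0
    · simp [hj0]
    · simp [hj0]
  | succ p ih =>
    obtain ⟨hc, ih⟩ := ih
    refine ⟨h.1.pow _, fun x j hj => ?_⟩
    have hj' : (j : WithTop ℕ∞) ≤ l := by exact_mod_cast hj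
    have : (fun x => θ x ^ (p+1)) = fun x => θ x ^ p * θ x := by funext x; rw [pow_succ]
    rw [this, iteratedDeriv_fun_mul (hc.of_le hj').contDiffAt (h.1.of_le hj').contDiffAt]
    have e : ((p+1 : ℕ) * T) ^ j = ∑ m ∈ Finset.range (j+1), (p * T) ^ m * T ^ (j - m) * (j.choose m : ℝ) := by
      rw [← add_pow]; push_cast; ring
    rw [e, Finset.sum_mul]
    refine (Finset.abs_sum_le_sum_abs _ _).trans (Finset.sum_le_sum fun i hi => ?_)
    have hi' : i ≤ j := by simpa [Nat.lt_succ_iff] using hi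
    rw [abs_mul, abs_mul, Nat.abs_cast]
    have a1 := ih x i (hi'.trans hj)
    have hx0 := h0 x
    have key : θ x ^ (p - i) * |iteratedDeriv (j - i) θ x| ≤ T ^ (j - i) * θ x ^ (p + 1 - j) := by
      rcases hi'.eq_or_lt with rfl | hlt
      · simp only [Nat.sub_self, iteratedDeriv_zero, pow_zero, one_mul, abs_of_nonneg hx0]
        rw [← pow_succ]
        exact pow_le_pow_of_le_one hx0 (h1 x) (by omega)
      · have a2 := h.2 x (j - i) ((Nat.sub_le _ _).trans hj)
        rw [mul_one] at a2
        have a3 : θ x ^ (p - i) ≤ θ x ^ (p + 1 - j) := pow_le_pow_of_le_one hx0 (h1 x) (by omega)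
        rw [mul_comm]
        gcongr
    calc _ ≤ (j.choose i : ℝ) * ((p * T) ^ i * θ x ^ (p - i)) * |iteratedDeriv (j - i) θ x| := by gcongr
      _ = (j.choose i : ℝ) * (p * T) ^ i * (θ x ^ (p - i) * |iteratedDeriv (j - i) θ x|) := by ring
      _ ≤ (j.choose i : ℝ) * (p * T) ^ i * (T ^ (j - i) * θ x ^ (p + 1 - j)) := by gcongr
      _ = _ := by ring

lemma chi {θ : ℝ → ℝ} {T : ℝ} (hT : 0 ≤ T) (h0 : ∀ x, 0 ≤ θ x) (h1 : ∀ x, θ x ≤ 1)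
    (h : Dom l T θ (fun _ => 1)) (P : ℕ) :
    Dom l ((l + P : ℕ) * T) (fun x => θ x ^ (l + P)) (fun x => 2 ^ l * (θ x ^ (l + P) + (1/2) ^ P)) := by
  obtain ⟨hc, hd⟩ := pow_theta hT h0 h1 h (l + P)
  refine ⟨hc, fun x j hj => (hd x j hj).trans ?_⟩
  have hx0 := h0 x
  gcongr
  show θ x ^ (l + P - j) ≤ 2 ^ l * (θ x ^ (l + P) + (1 / 2) ^ P)
  rcases le_total (1/2) (θ x) with hx | hx
  · have : θ x ^ (l + P) = θ x ^ (l + P - j) * θ x ^ j := by rw [← pow_add]; congr 1; omega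
    have h2 : 1 ≤ 2 ^ l * θ x ^ j := by
      calc (1:ℝ) = 2 ^ j * (1/2) ^ j := by rw [← mul_pow]; norm_num
        _ ≤ 2 ^ l * θ x ^ j := by
          gcongr
          norm_num
    rw [this]
    have h3 : 0 ≤ θ x ^ (l + P - j) := by positivity
    have h4 : (0:ℝ) ≤ 2 ^ l * (1/2) ^ P := by positivity
    nlinarith
  · calc θ x ^ (l + P - j) ≤ θ x ^ P := pow_le_pow_of_le_one hx0 (h1 x) (by omega)
      _ ≤ 1 * (θ x ^ (l+P) + (1/2) ^ P) := by
        have : θ x ^ P ≤ (1/2) ^ P := by gcongr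
        have h4 : 0 ≤ θ x ^ (l + P) := by positivity
        linarith
      _ ≤ _ := by
        gcongr
        exact one_le_pow₀ (by norm_num)

end Dom


lemma exists_theta (l : ℕ) : ∃ T0 : ℝ, 1 ≤ T0 ∧ ∀ ε : ℝ, 0 < ε → ε ≤ 1/8 → ∃ θ : ℝ → ℝ,
    Function.Periodic θ 1 ∧ (∀ x, 0 ≤ θ x) ∧ (∀ x, θ x ≤ 1) ∧ (∀ x, near ε x → θ x = 1) ∧
    (∀ x, ¬ near (2 * ε) x → θ x = 0) ∧ Dom l (T0 / ε) θ (fun _ => 1) := by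
  let φ : ContDiffBump (0:ℝ) := ⟨1, 2, by norm_num, by norm_num⟩
  have hφc : ContDiff ℝ l φ := φ.contDiff
  have hbd : ∀ j ≤ l, ∃ B, ∀ x, |iteratedDeriv j φ x| ≤ B := by
    intro j hj
    have hc : Continuous (iteratedDeriv j φ) :=
      (hφc.continuous_iteratedDeriv j (by exact_mod_cast hj))
    have hs : HasCompactSupport (iteratedDeriv j φ) := by
      clear hc hj
      induction j with
      | zero => simpa using φ.hasCompactSupport
      | succ j ih => rw [iteratedDeriv_succ]; exact ih.deriv
    obtain ⟨C, hC⟩ := hs.exists_bound_of_continuous hc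
    exact ⟨C, fun x => hC x⟩
  choose! B hB using hbd
  have hB0 : ∀ j ≤ l, 0 ≤ B j := fun j hj => (abs_nonneg _).trans (hB j hj 0)
  set T0 : ℝ := 1 + ∑ j ∈ Finset.range (l+1), B j with hT0
  have hsum : 0 ≤ ∑ j ∈ Finset.range (l+1), B j :=
    Finset.sum_nonneg fun j hj => hB0 j (by simpa [Nat.lt_succ_iff] using hj)
  have hT1 : 1 ≤ T0 := by linarith
  have hφ1 : ∀ x, |x| ≤ 1 → φ x = 1 := fun x hx => φ.one_of_mem_closedBall (by simpa using hx)
  have hφ0 : ∀ x, 2 ≤ |x| → φ x = 0 := fun x hx => φ.zero_of_le_dist (by simpa using hx)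
  have hφd : ∀ j ≤ l, ∀ x, |iteratedDeriv j φ x| ≤ T0 ^ j := by
    intro j hj x
    rcases Nat.eq_zero_or_pos j with rfl | hj0
    · simp only [iteratedDeriv_zero, pow_zero]
      rw [abs_of_nonneg φ.nonneg]; exact φ.le_one
    · refine (hB j hj x).trans ?_
      have h1 : B j ≤ ∑ j ∈ Finset.range (l+1), B j :=
        Finset.single_le_sum (f := B) (fun j hj => hB0 j (by simpa [Nat.lt_succ_iff] using hj))
          (by simp; omega)
      have h2 : T0 ≤ T0 ^ j := le_self_pow₀ hT1 (by omega)
      linarith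
  refine ⟨T0, hT1, fun ε hε hε8 => ?_⟩
  have hloc : ∀ (m : ℤ) (y : ℝ), |y - m| < 3/4 → φ ((y - round y) / ε) = φ ((y - m) / ε) := by
    intro m y hy
    by_cases hr : round y = m
    · rw [hr]
    · have hge : 1/4 ≤ |y - round y| := by
        have h1 : (1:ℝ) ≤ |(round y : ℝ) - m| := by
          have := Int.one_le_abs (sub_ne_zero.mpr hr)
          exact_mod_cast this
        have h2 : |(round y : ℝ) - m| ≤ |y - m| + |y - round y| := by
          have := abs_sub (y - m) (y - round y)
          have e : (round y : ℝ) - m = (y - m) - (y - round y) := by ring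
          rw [e]; exact this
        linarith
      have hge' : 1/4 ≤ |y - m| := hge.trans (round_le y m)
      rw [hφ0, hφ0]
      · rw [abs_div, abs_of_pos hε, le_div_iff₀ hε]; linarith
      · rw [abs_div, abs_of_pos hε, le_div_iff₀ hε]; linarith
  have hev : ∀ x : ℝ, (fun y => φ ((y - round y) / ε)) =ᶠ[nhds x]
      (fun y => φ (ε⁻¹ * (y - (round x : ℝ)))) := by
    intro x
    have h1 : |x - round x| < 3/4 := lt_of_le_of_lt (abs_sub_round x) (by norm_num)
    have : ∀ᶠ y in nhds x, |y - (round x : ℝ)| < 3/4 := by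
      have hc : Continuous fun y : ℝ => |y - (round x : ℝ)| := by fun_prop
      exact hc.continuousAt.eventually_lt continuousAt_const h1
    filter_upwards [this] with y hy
    rw [hloc _ y hy, div_eq_inv_mul]
  refine ⟨fun y => φ ((y - round y) / ε), ?_, fun x => φ.nonneg, fun x => φ.le_one, ?_, ?_, ?_, ?_⟩
  · intro x
    simp only [round_add_one]
    push_cast
    congr 2; ring
  · rintro x ⟨m, hm⟩
    apply hφ1
    rw [abs_div, abs_of_pos hε, div_le_one hε]
    exact (round_le x m).trans hm
  · intro x hx
    apply hφ0
    rw [abs_div, abs_of_pos hε, le_div_iff₀ hε]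
    by_contra hcon
    exact hx ⟨round x, by linarith⟩
  · rw [contDiff_iff_contDiffAt]
    intro x
    refine ContDiffAt.congr_of_eventuallyEq ?_ (hev x)
    exact (hφc.comp (by fun_prop : ContDiff ℝ l fun y : ℝ => ε⁻¹ * (y - (round x : ℝ)))).contDiffAt
  · intro x j hj
    have hj' : (j : WithTop ℕ∞) ≤ l := by exact_mod_cast hj
    rw [(hev x).iteratedDeriv_eq]
    have := iteratedDeriv_comp_sub_const j (fun z => φ (ε⁻¹ * z)) (round x : ℝ)
    rw [this]
    rw [iteratedDeriv_comp_const_mul (hφc.of_le hj') ε⁻¹]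
    simp only
    rw [abs_mul, abs_of_nonneg (by positivity : 0 ≤ ε⁻¹ ^ j), div_pow, mul_one, inv_pow, mul_comm,
      ← div_eq_mul_inv]
    gcongr
    exact hφd j hj _


/-- The recursion `G_{i+1} = G_i + J_i / a`, `J_{i+1} = J_i + c G_{i+1}` along the orbit of `s`. -/
noncomputable def GJ (α : ℝ) (a c : ℝ → ℝ) : ℕ → ℝ → ℝ × ℝ
  | 0, _ => (0, 1)
  | i + 1, s => ((GJ α a c i s).1 + (GJ α a c i s).2 / a (s + i * α),
      (GJ α a c i s).2 + c (s + (i + 1) * α) *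
        ((GJ α a c i s).1 + (GJ α a c i s).2 / a (s + i * α)))

noncomputable def GG (α : ℝ) (a c : ℝ → ℝ) (i : ℕ) (s : ℝ) : ℝ := (GJ α a c i s).1
noncomputable def JJ (α : ℝ) (a c : ℝ → ℝ) (i : ℕ) (s : ℝ) : ℝ := (GJ α a c i s).2

section rec
variable {α : ℝ} {a c : ℝ → ℝ}

lemma GG_zero (s : ℝ) : GG α a c 0 s = 0 := rfl
lemma JJ_zero (s : ℝ) : JJ α a c 0 s = 1 := rfl
lemma GG_succ (i : ℕ) (s : ℝ) :
    GG α a c (i+1) s = GG α a c i s + JJ α a c i s / a (s + i * α) := rfl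
lemma JJ_succ (i : ℕ) (s : ℝ) :
    JJ α a c (i+1) s = JJ α a c i s + c (s + (i + 1) * α) * GG α a c (i+1) s := rfl

lemma GJ_pos (ha : ∀ x, 0 < a x) (hc : ∀ x, 0 ≤ c x) (i : ℕ) (s : ℝ) :
    0 ≤ GG α a c i s ∧ 1 ≤ JJ α a c i s := by
  induction i with
  | zero => simp [GG_zero, JJ_zero]
  | succ i ih =>
    have h1 : 0 ≤ GG α a c (i+1) s := by
      rw [GG_succ]
      have := ha (s + i * α)
      have := ih.1
      have := ih.2
      positivity
    refine ⟨h1, ?_⟩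
    rw [JJ_succ]
    have := mul_nonneg (hc (s + (i+1) * α)) h1
    linarith [ih.2]

lemma GG_nonneg (ha : ∀ x, 0 < a x) (hc : ∀ x, 0 ≤ c x) (i : ℕ) (s : ℝ) : 0 ≤ GG α a c i s :=
  (GJ_pos ha hc i s).1

lemma JJ_one_le (ha : ∀ x, 0 < a x) (hc : ∀ x, 0 ≤ c x) (i : ℕ) (s : ℝ) : 1 ≤ JJ α a c i s :=
  (GJ_pos ha hc i s).2

lemma GG_succ_pos (ha : ∀ x, 0 < a x) (hc : ∀ x, 0 ≤ c x) (i : ℕ) (s : ℝ) : 0 < GG α a c (i+1) s := by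
  rw [GG_succ]
  have := ha (s + i * α)
  have := GG_nonneg (α := α) ha hc i s
  have := JJ_one_le (α := α) ha hc i s
  positivity

lemma GG_pos (ha : ∀ x, 0 < a x) (hc : ∀ x, 0 ≤ c x) {i : ℕ} (hi : 1 ≤ i) (s : ℝ) : 0 < GG α a c i s := by
  obtain ⟨k, rfl⟩ := Nat.exists_eq_add_of_le' hi
  exact GG_succ_pos ha hc k s

lemma GG_mono (ha : ∀ x, 0 < a x) (hc : ∀ x, 0 ≤ c x) {i j : ℕ} (hij : i ≤ j) (s : ℝ) :
    GG α a c i s ≤ GG α a c j s := by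
  refine monotone_nat_of_le_succ (f := fun i => GG α a c i s) (fun i => ?_) hij
  rw [GG_succ]
  have := ha (s + i * α)
  have := JJ_one_le (α := α) ha hc i s
  have : 0 ≤ JJ α a c i s / a (s + i * α) := by positivity
  linarith

lemma JJ_mono (ha : ∀ x, 0 < a x) (hc : ∀ x, 0 ≤ c x) {i j : ℕ} (hij : i ≤ j) (s : ℝ) :
    JJ α a c i s ≤ JJ α a c j s := by
  refine monotone_nat_of_le_succ (f := fun i => JJ α a c i s) (fun i => ?_) hij
  rw [JJ_succ]
  have := mul_nonneg (hc (s + (i+1) * α)) (GG_nonneg (α := α) ha hc (i+1) s)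
  linarith

/-- `J_i ≤ a G_{i+1}` -/
lemma JJ_le_GG_succ (ha : ∀ x, 0 < a x) (hc : ∀ x, 0 ≤ c x) (i : ℕ) (s : ℝ) :
    JJ α a c i s ≤ a (s + i * α) * GG α a c (i+1) s := by
  rw [GG_succ, mul_add, mul_div_cancel₀ _ (ha _).ne']
  have := mul_nonneg (ha (s + i * α)).le (GG_nonneg (α := α) ha hc i s)
  linarith

lemma GJ_split (ha : ∀ x, 0 < a x) (hc : ∀ x, 0 ≤ c x) (k m : ℕ) (s : ℝ) :
    GG α a c (k + (m+1)) s ≤ (GG α a c k s * a (s + k * α) + JJ α a c k s) * GG α a c (m+1) (s + k * α) ∧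
    JJ α a c (k + (m+1)) s ≤ (GG α a c k s * a (s + k * α) + JJ α a c k s) * JJ α a c (m+1) (s + k * α) := by
  have hG := GG_nonneg (α := α) ha hc k s
  have hJ := JJ_one_le (α := α) ha hc k s
  induction m with
  | zero =>
    have e : GG α a c (k + (0+1)) s =
        (GG α a c k s * a (s + k * α) + JJ α a c k s) * GG α a c (0+1) (s + k * α) := by
      rw [← add_assoc, add_zero, GG_succ, GG_succ, GG_zero, JJ_zero]
      have := ha (s + k * α)
      simp
      field_simp
    refine ⟨e.le, ?_⟩
    rw [← add_assoc, add_zero, JJ_succ, JJ_succ]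
    have e' : GG α a c (k + 1) s = GG α a c (k + (0+1)) s := rfl
    rw [e', e, JJ_zero]
    have e2 : s + k * α + (((0:ℕ):ℝ) + 1) * α = s + (k + 1) * α := by push_cast; ring
    rw [e2]
    have := mul_nonneg hG (ha (s + k * α)).le
    ring_nf
    linarith
  | succ m ih =>
    set K := GG α a c k s * a (s + k * α) + JJ α a c k s with hK
    obtain ⟨ih1, ih2⟩ := ih
    have e1 : s + k * α + ((m+1 : ℕ):ℝ) * α = s + ((k + (m+1) : ℕ):ℝ) * α := by push_cast; ring
    have e2 : s + k * α + (((m+1 : ℕ):ℝ) + 1) * α = s + (((k + (m+1) : ℕ):ℝ) + 1) * α := by push_cast; ring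
    have h1 : GG α a c (k + (m+1+1)) s ≤ K * GG α a c (m+1+1) (s + k * α) := by
      rw [← add_assoc k (m+1) 1, GG_succ, GG_succ (m+1), e1, mul_add, ← mul_div_assoc]
      have := ha (s + ((k + (m+1) : ℕ):ℝ) * α)
      gcongr
    refine ⟨h1, ?_⟩
    rw [← add_assoc k (m+1) 1, JJ_succ, JJ_succ (m+1), e2, mul_add]
    have h3 := mul_le_mul_of_nonneg_left h1 (hc (s + (((k + (m+1) : ℕ):ℝ) + 1) * α))
    rw [← add_assoc k (m+1) 1] at h3
    linarith

lemma GG_split (ha : ∀ x, 0 < a x) (hc : ∀ x, 0 ≤ c x) (k m : ℕ) (s : ℝ) :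
    GG α a c ((k+1) + (m+1)) s ≤ GG α a c (k+1) s *
      (a (s + (k+1) * α) + a (s + k * α) + c (s + (k+1) * α)) * GG α a c (m+1) (s + (k+1) * α) := by
  have h := (GJ_split (α := α) ha hc (k+1) m s).1
  push_cast at h
  refine h.trans ?_
  have h0 := GG_nonneg (α := α) ha hc (m+1) (s + (k+1) * α)
  refine mul_le_mul_of_nonneg_right ?_ h0
  rw [JJ_succ]
  have := JJ_le_GG_succ (α := α) ha hc k s
  nlinarith

lemma GG_doubling_iter (W : ℕ) (hd : ∀ s i, 2 * GG α a c i s ≤ GG α a c (i + W) s) (R i : ℕ) (s : ℝ) :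
    2 ^ R * GG α a c i s ≤ GG α a c (i + W * R) s := by
  induction R with
  | zero => simp
  | succ R ih =>
    have := hd s (i + W * R)
    rw [pow_succ, Nat.mul_succ, ← add_assoc]
    linarith

lemma GG_exp (ha : ∀ x, 0 < a x) (hc : ∀ x, 0 ≤ c x) {K : ℝ}
    (hK : ∀ x y, (1 + c x) * (1 + 1 / a y) ≤ K) (i : ℕ) (s : ℝ) :
    GG α a c i s + JJ α a c i s ≤ K ^ i := by
  induction i with
  | zero => simp [GG_zero, JJ_zero]
  | succ i ih =>
    have h := hK (s + (i+1) * α) (s + i * α)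
    have hG := GG_nonneg (α := α) ha hc i s
    have hJ := JJ_one_le (α := α) ha hc i s
    have hac := ha (s + i * α)
    have hcc := hc (s + (i+1) * α)
    rw [JJ_succ, GG_succ]
    set A := 1 / a (s + i * α) with hA
    have hA0 : 0 < A := by positivity
    have e : JJ α a c i s / a (s + i * α) = JJ α a c i s * A := by rw [hA]; ring
    rw [e, pow_succ]
    set C := c (s + (i+1) * α)
    set G := GG α a c i s
    set J := JJ α a c i s
    calc G + J * A + (J + C * (G + J * A)) ≤ (G + J) * ((1 + C) * (1 + A)) := by
          have h1 : 0 ≤ G * A := by positivity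
          have h2 : 0 ≤ G * C * A := by positivity
          have h3 : 0 ≤ J * C := by positivity
          nlinarith
      _ ≤ (G + J) * K := by gcongr
      _ ≤ K ^ i * K := by
          have : 0 ≤ K := le_trans (by positivity) h
          gcongr

/-- bound for the flux after a valley -/
lemma JJ_valley (ha : ∀ x, 0 < a x) (hc : ∀ x, 0 ≤ c x) {b C : ℝ} (_hC0 : 0 ≤ C) (hC : ∀ x, c x ≤ C) (i m : ℕ)
    (s : ℝ) (hv : a (s + i * α) ≤ b) :
    JJ α a c (i + m) s ≤ (b + m * C) * GG α a c (i + m + 1) s := by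
  induction m with
  | zero =>
    simp only [add_zero, Nat.cast_zero, zero_mul]
    refine (JJ_le_GG_succ ha hc i s).trans ?_
    have := GG_nonneg (α := α) ha hc (i+1) s
    gcongr
  | succ m ih =>
    rw [← add_assoc, JJ_succ]
    have h1 : GG α a c (i + m + 1) s ≤ GG α a c (i + m + 1 + 1) s := GG_mono ha hc (by omega) s
    have h0 := GG_nonneg (α := α) ha hc (i + m + 1) s
    have hb : 0 ≤ b := (ha _).le.trans hv
    push_cast
    have h2 : c (s + ((i:ℝ) + m + 1) * α) * GG α a c (i + m + 1) s ≤ C * GG α a c (i + m + 1) s := by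
      gcongr; exact hC _
    have h3 : (b + (m+1) * C) * GG α a c (i + m + 1) s ≤ (b + (m+1) * C) * GG α a c (i + m + 1 + 1) s := by
      gcongr
    linarith

end rec

section tents
variable (α : ℝ) (a c χ : ℝ → ℝ) (n : ℕ)

noncomputable def kap (s : ℝ) : ℝ := χ (s + n * α) / GG α a c n s
noncomputable def PP (x : ℝ) : ℝ :=
  ∑ i ∈ Finset.range n, kap α a c χ n (x - i * α) * GG α a c i (x - i * α)
noncomputable def UU (x : ℝ) : ℝ :=
  ∑ i ∈ Finset.range n, kap α a c χ n (x - i * α) * JJ α a c i (x - i * α)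
/-- flux coefficient -/
noncomputable def jj (x : ℝ) : ℝ := JJ α a c (n-1) (x - n * α) / GG α a c n (x - n * α)

variable {α a c χ n}

lemma PP_identity (ha : ∀ x, 0 < a x) (hc : ∀ x, 0 ≤ c x) (hn : 1 ≤ n) (x : ℝ) :
    χ (x + α) + PP α a c χ n (x + α) - PP α a c χ n x = UU α a c χ n x / a x := by
  obtain ⟨k, rfl⟩ := Nat.exists_eq_add_of_le' hn
  have h1 : PP α a c χ (k+1) (x + α) + χ (x + α) =
      ∑ i ∈ Finset.range (k+1), kap α a c χ (k+1) (x - i * α) * GG α a c (i+1) (x - i * α) := by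
    rw [Finset.sum_range_succ, PP, Finset.sum_range_succ']
    have e0 : GG α a c 0 (x + α - ((0:ℕ):ℝ) * α) = 0 := rfl
    rw [e0, mul_zero, add_zero]
    congr 1
    · refine Finset.sum_congr rfl fun i _ => ?_
      have : x + α - ((i+1:ℕ):ℝ) * α = x - i * α := by push_cast; ring
      rw [this]
    · rw [kap, div_mul_cancel₀ _ (GG_succ_pos ha hc k _).ne']
      congr 1; push_cast; ring
  have h2 : χ (x + α) + PP α a c χ (k+1) (x + α) - PP α a c χ (k+1) x =
    (PP α a c χ (k+1) (x + α) + χ (x + α)) - PP α a c χ (k+1) x := by ring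
  rw [h2, h1, PP, UU, ← Finset.sum_sub_distrib, Finset.sum_div]
  refine Finset.sum_congr rfl fun i _ => ?_
  rw [GG_succ]
  have : x - i * α + i * α = x := by ring
  rw [this]; ring

lemma UU_identity (ha : ∀ x, 0 < a x) (hc : ∀ x, 0 ≤ c x) (hn : 1 ≤ n) (x : ℝ) :
    UU α a c χ n x - UU α a c χ n (x - α) =
      c x * PP α a c χ n x + χ (x + n * α) / GG α a c n x - χ x * jj α a c n x := by
  obtain ⟨k, rfl⟩ := Nat.exists_eq_add_of_le' hn
  have h1 : UU α a c χ (k+1) (x - α) =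
      ∑ i ∈ Finset.range k, kap α a c χ (k+1) (x - ((i+1:ℕ):ℝ) * α) * JJ α a c i (x - ((i+1:ℕ):ℝ) * α)
        + χ x * jj α a c (k+1) x := by
    rw [UU, Finset.sum_range_succ]
    congr 1
    · refine Finset.sum_congr rfl fun i _ => ?_
      have : x - α - (i:ℝ) * α = x - ((i+1:ℕ):ℝ) * α := by push_cast; ring
      rw [this]
    · have : x - α - (k:ℝ) * α = x - ((k+1:ℕ):ℝ) * α := by push_cast; ring
      rw [this, kap, jj]
      have : x - ((k+1:ℕ):ℝ) * α + ((k+1:ℕ):ℝ) * α = x := by ring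
      rw [this]
      simp only [Nat.add_sub_cancel]
      ring
  rw [h1, UU, PP, Finset.sum_range_succ', Finset.sum_range_succ']
  simp only [Nat.cast_zero, zero_mul, sub_zero, GG_zero, JJ_zero, mul_zero, add_zero, mul_one]
  have h3 : ∀ i ∈ Finset.range k, kap α a c χ (k+1) (x - ((i+1:ℕ):ℝ) * α) * JJ α a c (i+1) (x - ((i+1:ℕ):ℝ) * α)
     = kap α a c χ (k+1) (x - ((i+1:ℕ):ℝ) * α) * JJ α a c i (x - ((i+1:ℕ):ℝ) * α)
      + c x * (kap α a c χ (k+1) (x - ((i+1:ℕ):ℝ) * α) * GG α a c (i+1) (x - ((i+1:ℕ):ℝ) * α)) := by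
    intro i _
    rw [JJ_succ]
    have : x - ((i+1:ℕ):ℝ) * α + ((i:ℝ) + 1) * α = x := by push_cast; ring
    rw [this]; ring
  rw [Finset.sum_congr rfl h3, Finset.sum_add_distrib, ← Finset.mul_sum, kap]
  ring

end tents


def aa (f : ℝ → ℝ) (α x : ℝ) : ℝ := f x * f (x + α)
def cc (f : ℝ → ℝ) (b x : ℝ) : ℝ := b * f x ^ 2
/-- The potential with positive ground state `f`. -/
noncomputable def pot (ω : ℝ) (f : ℝ → ℝ) (x : ℝ) : ℝ := (f (x + ω) + f (x - ω)) / f x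

noncomputable def Gf (f : ℝ → ℝ) (b α : ℝ) (i : ℕ) (s : ℝ) : ℝ := GG α (aa f α) (cc f b) i s
noncomputable def Jf (f : ℝ → ℝ) (b α : ℝ) (i : ℕ) (s : ℝ) : ℝ := JJ α (aa f α) (cc f b) i s
noncomputable def Pf (f : ℝ → ℝ) (b : ℝ) (χ : ℝ → ℝ) (n : ℕ) (α x : ℝ) : ℝ := PP α (aa f α) (cc f b) χ n x
noncomputable def Uf (f : ℝ → ℝ) (b : ℝ) (χ : ℝ → ℝ) (n : ℕ) (α x : ℝ) : ℝ := UU α (aa f α) (cc f b) χ n x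
noncomputable def jf (f : ℝ → ℝ) (b : ℝ) (n : ℕ) (α x : ℝ) : ℝ := jj α (aa f α) (cc f b) n x
noncomputable def ef (f : ℝ → ℝ) (b : ℝ) (χ : ℝ → ℝ) (n : ℕ) (α x : ℝ) : ℝ := χ (x + n * α) / Gf f b α n x
noncomputable def gf (ω : ℝ) (f : ℝ → ℝ) (b : ℝ) (χ : ℝ → ℝ) (n : ℕ) (x : ℝ) : ℝ :=
  χ x + Pf f b χ n ω x + Pf f b χ n (-ω) x

section
variable {ω : ℝ} {f : ℝ → ℝ} {b : ℝ} {χ : ℝ → ℝ} {n : ℕ}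

lemma aa_pos (hf : ∀ x, 0 < f x) (α x : ℝ) : 0 < aa f α x := mul_pos (hf _) (hf _)
lemma cc_nonneg (hb : 0 ≤ b) (x : ℝ) : 0 ≤ cc f b x := mul_nonneg hb (sq_nonneg _)

lemma Pf_identity (hf : ∀ x, 0 < f x) (hb : 0 ≤ b) (hn : 1 ≤ n) (α x : ℝ) :
    aa f α x * (χ (x + α) + Pf f b χ n α (x + α) - Pf f b χ n α x) = Uf f b χ n α x := by
  have := PP_identity (α := α) (χ := χ) (aa_pos hf α) (cc_nonneg (f := f) hb) hn x
  rw [Pf, Pf, this, mul_div_cancel₀ _ (aa_pos hf α x).ne', Uf]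

lemma Uf_identity (hf : ∀ x, 0 < f x) (hb : 0 ≤ b) (hn : 1 ≤ n) (α x : ℝ) :
    Uf f b χ n α x - Uf f b χ n α (x - α) =
      b * f x ^ 2 * Pf f b χ n α x + ef f b χ n α x - χ x * jf f b n α x :=
  UU_identity (χ := χ) (aa_pos hf α) (cc_nonneg (f := f) hb) hn x

lemma step_identity (hf : ∀ x, 0 < f x) (hb : 0 ≤ b) (hn : 1 ≤ n)
    (hg : ∀ x, 0 < gf ω f b χ n x) (x : ℝ) :
    pot ω (fun y => f y * gf ω f b χ n y) x = pot ω f x + b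
      - χ x * (b * f x ^ 2 + jf f b n ω x + jf f b n (-ω) x) / (f x ^ 2 * gf ω f b χ n x)
      + (ef f b χ n ω x + ef f b χ n (-ω) x) / (f x ^ 2 * gf ω f b χ n x) := by
  have p1 := Pf_identity (χ := χ) hf hb hn ω x
  have p2 := Pf_identity (χ := χ) hf hb hn ω (x - ω)
  have p3 := Pf_identity (χ := χ) hf hb hn (-ω) x
  have p4 := Pf_identity (χ := χ) hf hb hn (-ω) (x + ω)
  have u1 := Uf_identity (χ := χ) hf hb hn ω x
  have u2 := Uf_identity (χ := χ) hf hb hn (-ω) x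
  have hfx := hf x
  have hgx := hg x
  have ha1 : aa f ω x = f x * f (x + ω) := rfl
  have ha2 : aa f ω (x - ω) = f (x - ω) * f x := by rw [aa]; congr 2; ring
  have ha3 : aa f (-ω) x = f x * f (x - ω) := by rw [aa]; congr 2
  have ha4 : aa f (-ω) (x + ω) = f (x + ω) * f x := by rw [aa]; congr 2; ring
  have e1 : x - ω + ω = x := by ring
  have e2 : x + ω + -ω = x := by ring
  have e3 : x - -ω = x + ω := by ring
  have e4 : x + -ω = x - ω := by ring
  rw [ha1] at p1
  rw [ha2, e1] at p2
  rw [ha3, e4] at p3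
  rw [ha4, e2] at p4
  rw [e3] at u2
  have hmain : f x * (f (x + ω) * gf ω f b χ n (x + ω) + f (x - ω) * gf ω f b χ n (x - ω))
     = f x * (f (x + ω) + f (x - ω)) * gf ω f b χ n x + b * f x ^ 2 * gf ω f b χ n x
      - χ x * (b * f x ^ 2 + jf f b n ω x + jf f b n (-ω) x)
      + (ef f b χ n ω x + ef f b χ n (-ω) x) := by
    simp only [gf]
    linear_combination p1 - p2 + p3 - p4 + u1 + u2
  rw [pot, pot]
  have h2 : 0 < f x ^ 2 * gf ω f b χ n x := by positivity
  have e5 : (f (x + ω) * gf ω f b χ n (x + ω) + f (x - ω) * gf ω f b χ n (x - ω)) / (f x * gf ω f b χ n x)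
     = (f x * (f (x + ω) * gf ω f b χ n (x + ω) + f (x - ω) * gf ω f b χ n (x - ω))) /
        (f x ^ 2 * gf ω f b χ n x) := by
    field_simp
  rw [e5, hmain]
  field_simp

end


section
variable {ω : ℝ} {f : ℝ → ℝ} {b : ℝ} {χ : ℝ → ℝ} {n : ℕ}

lemma Gf_nonneg (hf : ∀ x, 0 < f x) (hb : 0 ≤ b) (α : ℝ) (i : ℕ) (s : ℝ) : 0 ≤ Gf f b α i s :=
  GG_nonneg (aa_pos hf α) (cc_nonneg hb) i s
lemma Gf_pos (hf : ∀ x, 0 < f x) (hb : 0 ≤ b) (α : ℝ) {i : ℕ} (hi : 1 ≤ i) (s : ℝ) : 0 < Gf f b α i s :=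
  GG_pos (aa_pos hf α) (cc_nonneg hb) hi s
lemma Gf_mono (hf : ∀ x, 0 < f x) (hb : 0 ≤ b) (α : ℝ) {i j : ℕ} (hi : i ≤ j) (s : ℝ) :
    Gf f b α i s ≤ Gf f b α j s :=
  GG_mono (aa_pos hf α) (cc_nonneg hb) hi s
lemma Jf_one_le (hf : ∀ x, 0 < f x) (hb : 0 ≤ b) (α : ℝ) (i : ℕ) (s : ℝ) : 1 ≤ Jf f b α i s :=
  JJ_one_le (aa_pos hf α) (cc_nonneg hb) i s

lemma Pf_eq (α x : ℝ) : Pf f b χ n α x =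
    ∑ i ∈ Finset.range n, χ (x + ((n:ℝ) - i) * α) / Gf f b α n (x - i * α) * Gf f b α i (x - i * α) := by
  rw [Pf, PP]
  refine Finset.sum_congr rfl fun i _ => ?_
  rw [kap, Gf, Gf]
  congr 3; ring

lemma Pf_term_nonneg (hf : ∀ x, 0 < f x) (hb : 0 ≤ b) (hχ0 : ∀ x, 0 ≤ χ x) (α x : ℝ) (i : ℕ) :
    0 ≤ χ (x + ((n:ℝ) - i) * α) / Gf f b α n (x - i * α) * Gf f b α i (x - i * α) := by
  have := hχ0 (x + ((n:ℝ) - i) * α)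
  have := Gf_nonneg hf hb α n (x - i * α)
  have := Gf_nonneg hf hb α i (x - i * α)
  positivity

lemma Pf_nonneg (hf : ∀ x, 0 < f x) (hb : 0 ≤ b) (hχ0 : ∀ x, 0 ≤ χ x) (α x : ℝ) :
    0 ≤ Pf f b χ n α x := by
  rw [Pf_eq]
  exact Finset.sum_nonneg fun i _ => Pf_term_nonneg hf hb hχ0 α x i

lemma Pf_le (hf : ∀ x, 0 < f x) (hb : 0 ≤ b) (hχ0 : ∀ x, 0 ≤ χ x) (hχ1 : ∀ x, χ x ≤ 1) (α x : ℝ) :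
    Pf f b χ n α x ≤ n := by
  rw [Pf_eq]
  calc _ ≤ ∑ i ∈ Finset.range n, (1:ℝ) := by
        refine Finset.sum_le_sum fun i hi => ?_
        have hi' : i < n := by simpa using hi
        have h1 := hχ0 (x + ((n:ℝ) - i) * α)
        have h2 := hχ1 (x + ((n:ℝ) - i) * α)
        have h3 := Gf_pos hf hb α (i := n) (by omega) (x - i * α)
        have h4 := Gf_nonneg hf hb α i (x - i * α)
        have h5 := Gf_mono hf hb α hi'.le (x - i * α)
        rw [div_mul_eq_mul_div, div_le_one h3]
        nlinarith
    _ = n := by simp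

lemma gf_ge_chi (hf : ∀ x, 0 < f x) (hb : 0 ≤ b) (hχ0 : ∀ x, 0 ≤ χ x) (x : ℝ) :
    χ x ≤ gf ω f b χ n x := by
  rw [gf]
  linarith [Pf_nonneg (n := n) hf hb hχ0 ω x, Pf_nonneg (n := n) hf hb hχ0 (-ω) x]

lemma gf_ge_Pf (hf : ∀ x, 0 < f x) (hb : 0 ≤ b) (hχ0 : ∀ x, 0 ≤ χ x) (x : ℝ) {α : ℝ}
    (hα : α = ω ∨ α = -ω) : Pf f b χ n α x ≤ gf ω f b χ n x := by
  rw [gf]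
  have := hχ0 x
  rcases hα with rfl | rfl
  · linarith [Pf_nonneg (n := n) hf hb hχ0 (-α) x]
  · linarith [Pf_nonneg (n := n) hf hb hχ0 ω x]

lemma gf_le (hf : ∀ x, 0 < f x) (hb : 0 ≤ b) (hχ0 : ∀ x, 0 ≤ χ x) (hχ1 : ∀ x, χ x ≤ 1) (x : ℝ) :
    gf ω f b χ n x ≤ 2 * n + 1 := by
  rw [gf]
  linarith [Pf_le (n := n) hf hb hχ0 hχ1 ω x, Pf_le (n := n) hf hb hχ0 hχ1 (-ω) x, hχ1 x]

/-- lower bound from one visit to the core -/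
lemma Pf_lower (hf : ∀ x, 0 < f x) {F : ℝ} (hF : ∀ x, f x ≤ F) (hb : 0 ≤ b) (hχ0 : ∀ x, 0 ≤ χ x)
    (α x : ℝ) {m : ℕ} (hm : 1 ≤ m) (hmn : m < n) (hχm : χ (x + m * α) = 1) :
    1 ≤ Pf f b χ n α x * ((2 * F ^ 2 + b * F ^ 2) * Gf f b α m x) := by
  obtain ⟨m', rfl⟩ := Nat.exists_eq_add_of_le' hm
  obtain ⟨k, hk⟩ : ∃ k, n = (k + 1) + (m' + 1) := ⟨n - m' - 2, by omega⟩
  have hterm : Gf f b α (k+1) (x - ((k+1:ℕ):ℝ) * α) / Gf f b α n (x - ((k+1:ℕ):ℝ) * α) ≤ Pf f b χ n α x := by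
    rw [Pf_eq]
    refine le_trans (le_of_eq ?_) (Finset.single_le_sum (f := fun i : ℕ =>
      χ (x + ((n:ℝ) - i) * α) / Gf f b α n (x - i * α) * Gf f b α i (x - i * α))
      (fun i _ => Pf_term_nonneg hf hb hχ0 α x i) (Finset.mem_range.mpr (by omega : k + 1 < n)))
    have : x + ((n:ℝ) - ((k+1:ℕ):ℝ)) * α = x + ((m'+1:ℕ):ℝ) * α := by rw [hk]; push_cast; ring
    simp only [this, hχm]
    ring
  set s := x - ((k+1:ℕ):ℝ) * α with hs
  have hsx : s + ((k:ℝ) + 1) * α = x := by rw [hs]; push_cast; ring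
  have hsp := GG_split (α := α) (aa_pos hf α) (cc_nonneg (f := f) hb) k m' s
  rw [hsx] at hsp
  change Gf f b α (k + 1 + (m'+1)) s ≤ Gf f b α (k+1) s * _ * Gf f b α (m'+1) x at hsp
  rw [← hk] at hsp
  have hF0 : 0 ≤ F := (hf 0).le.trans (hF 0)
  have haa : ∀ y, aa f α y ≤ F ^ 2 := by
    intro y
    rw [aa, sq]
    have := (hf y).le
    have := (hf (y+α)).le
    gcongr
    · exact hF _
    · exact hF _
  have hcc : cc f b x ≤ b * F ^ 2 := by
    rw [cc]
    have := (hf x).le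
    gcongr
    exact hF _
  have hGn := Gf_pos hf hb α (i := n) (by omega) s
  have hGk := Gf_nonneg hf hb α (k+1) s
  have hGm := Gf_nonneg hf hb α (m'+1) x
  have h1 : Gf f b α n s ≤ Gf f b α (k+1) s * ((2 * F ^ 2 + b * F ^ 2) * Gf f b α (m'+1) x) := by
    refine hsp.trans ?_
    rw [mul_assoc]
    have := haa x
    have := haa (s + k * α)
    gcongr
    linarith
  calc (1:ℝ) = Gf f b α n s / Gf f b α n s := (div_self hGn.ne').symm
    _ ≤ Gf f b α (k+1) s * ((2 * F ^ 2 + b * F ^ 2) * Gf f b α (m'+1) x) / Gf f b α n s := by gcongr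
    _ = Gf f b α (k+1) s / Gf f b α n s * ((2 * F ^ 2 + b * F ^ 2) * Gf f b α (m'+1) x) := by ring
    _ ≤ _ := by gcongr

lemma Gf_decay (hf : ∀ x, 0 < f x) (hb : 0 ≤ b) {α : ℝ} {W : ℕ}
    (hd : ∀ s i, 2 * Gf f b α i s ≤ Gf f b α (i + W) s) (i k : ℕ) (s : ℝ) :
    2 ^ (k / W) * Gf f b α i s ≤ Gf f b α (i + k) s := by
  refine (GG_doubling_iter W hd (k / W) i s).trans ?_
  exact Gf_mono hf hb α (by have := Nat.mul_div_le k W; omega) s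

lemma Pf_decay (hf : ∀ x, 0 < f x) (hb : 0 ≤ b) (hχ0 : ∀ x, 0 ≤ χ x) (hχ1 : ∀ x, χ x ≤ 1) {α : ℝ} {W : ℕ}
    (hd : ∀ s i, 2 * Gf f b α i s ≤ Gf f b α (i + W) s) (z : ℝ) (j : ℕ)
    (hz : ∀ k : ℕ, 1 ≤ k → k < j → χ (z + k * α) = 0) :
    Pf f b χ n α z ≤ n * (1/2) ^ (j / W) := by
  rw [Pf_eq]
  calc _ ≤ ∑ i ∈ Finset.range n, (1/2:ℝ) ^ (j / W) := by
        refine Finset.sum_le_sum fun i hi => ?_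
        have hi' : i < n := by simpa using hi
        have hk : ((n:ℝ) - i) = ((n - i : ℕ) : ℝ) := by rw [Nat.cast_sub hi'.le]
        rw [hk]
        by_cases hkj : n - i < j
        · rw [hz (n - i) (by omega) hkj]; simp
        · have h1 := hχ0 (z + ((n - i : ℕ) : ℝ) * α)
          have h2 := hχ1 (z + ((n - i : ℕ) : ℝ) * α)
          have h3 := Gf_pos hf hb α (i := n) (by omega) (z - i * α)
          have h4 := Gf_nonneg hf hb α i (z - i * α)
          have h5 := Gf_decay hf hb hd i (n - i) (z - i * α)
          rw [Nat.add_sub_cancel' hi'.le] at h5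
          have h6 : (2:ℝ) ^ (j / W) ≤ 2 ^ ((n - i) / W) := by
            gcongr
            · norm_num
            · omega
          rw [div_mul_eq_mul_div, div_le_iff₀ h3, one_div, inv_pow, ← div_eq_inv_mul, le_div_iff₀ (by positivity)]
          calc _ ≤ 1 * Gf f b α i (z - i * α) * 2 ^ ((n - i) / W) := by gcongr
            _ ≤ _ := by linarith
    _ = _ := by simp

lemma jf_nonneg (hf : ∀ x, 0 < f x) (hb : 0 ≤ b) (α x : ℝ) : 0 ≤ jf f b n α x := by
  rw [jf, jj]
  have := Gf_nonneg hf hb α n (x - n * α)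
  have := Jf_one_le hf hb α (n-1) (x - n * α)
  rw [Gf] at *
  rw [Jf] at *
  positivity

lemma jf_le (hf : ∀ x, 0 < f x) {F : ℝ} (hF : ∀ x, f x ≤ F) (hb : 0 ≤ b) (hn : 1 ≤ n) (α x : ℝ) :
    jf f b n α x ≤ F ^ 2 := by
  obtain ⟨k, rfl⟩ := Nat.exists_eq_add_of_le' hn
  rw [jf, jj]
  have h1 := GG_succ_pos (α := α) (aa_pos hf α) (cc_nonneg (f := f) hb) k (x - ((k+1:ℕ):ℝ) * α)
  rw [div_le_iff₀ h1, Nat.add_sub_cancel]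
  refine (JJ_le_GG_succ (aa_pos hf α) (cc_nonneg hb) k _).trans ?_
  gcongr
  rw [aa, sq]
  have := (hf (x - ((k+1:ℕ):ℝ) * α + k * α)).le
  have := (hf (x - ((k+1:ℕ):ℝ) * α + k * α + α)).le
  have hF0 : 0 ≤ F := (hf 0).le.trans (hF 0)
  gcongr
  · exact hF _
  · exact hF _

lemma jf_valley (hf : ∀ x, 0 < f x) {F : ℝ} (hF : ∀ x, f x ≤ F) (hb : 0 ≤ b) (α x : ℝ) {m : ℕ}
    (hmn : m < n) (hv : f (x + m * (-α)) * f (x + (m + 1) * (-α)) ≤ b) :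
    jf f b n α x ≤ b + m * (b * F ^ 2) := by
  obtain ⟨i, hi⟩ : ∃ i, n = i + m + 1 := ⟨n - m - 1, by omega⟩
  rw [jf, jj]
  set s := x - n * α with hs
  have h1 : 0 < GG α (aa f α) (cc f b) n s := Gf_pos hf hb α (by omega) s
  rw [div_le_iff₀ h1]
  have hC : ∀ y, cc f b y ≤ b * F ^ 2 := by
    intro y
    rw [cc]
    have := (hf y).le
    gcongr
    exact hF _
  have hv' : aa f α (s + i * α) ≤ b := by
    rw [aa, mul_comm]
    refine le_trans (le_of_eq ?_) hv
    congr 2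
    · rw [hs, hi]; push_cast; ring
    · rw [hs, hi]; push_cast; ring
  have := JJ_valley (α := α) (aa_pos hf α) (cc_nonneg (f := f) hb) (by positivity) hC i m s hv'
  have e : n - 1 = i + m := by omega
  rw [e]
  rwa [← hi] at this

lemma ef_nonneg (hf : ∀ x, 0 < f x) (hb : 0 ≤ b) (hχ0 : ∀ x, 0 ≤ χ x) (α x : ℝ) : 0 ≤ ef f b χ n α x := by
  rw [ef]
  have := Gf_nonneg hf hb α n x
  have := hχ0 (x + n * α)
  positivity

end


section
variable {ω : ℝ} {f : ℝ → ℝ} {b : ℝ} {χ : ℝ → ℝ} {n l : ℕ} {Y Mχ η : ℝ}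

lemma aa_Dom (hY : 0 ≤ Y) (h : Dom l Y f f) (α : ℝ) : Dom l (2 * Y) (aa f α) (aa f α) := by
  have := Dom.mul hY h (h.translate α)
  rw [two_mul]; exact this

lemma cc_Dom (hY : 0 ≤ Y) (h : Dom l Y f f) (hb : 0 ≤ b) : Dom l (2 * Y) (cc f b) (cc f b) := by
  have h1 := Dom.mul hY h h
  have h2 := Dom.mul le_rfl (Dom.const (l := l) b le_rfl) h1
  have e : (fun x => b * (f x * f x)) = cc f b := by funext x; rw [cc, sq]
  have e' : (fun x => |b| * (f x * f x)) = cc f b := by funext x; rw [cc, sq, abs_of_nonneg hb]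
  rw [e, e'] at h2
  have e3 : 2 * Y = 0 + (Y + Y) := by ring
  rw [e3]; exact h2

lemma GJ_Dom (hY : 0 ≤ Y) (h : Dom l Y f f) (hf : ∀ x, 0 < f x) (hb : 0 ≤ b) (α : ℝ) (i : ℕ) :
    Dom l (2 * i * ((2 * l + 2) * (2 * Y))) (Gf f b α i) (Gf f b α i) ∧
    Dom l (2 * i * ((2 * l + 2) * (2 * Y))) (Jf f b α i) (Jf f b α i) := by
  set μ := (2 * (l:ℝ) + 2) * (2 * Y) with hμ
  have hμ0 : 0 ≤ μ := by positivity
  have h2Y : 2 * Y ≤ μ := by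
    rw [hμ]
    have : (0:ℝ) ≤ l := by positivity
    nlinarith
  have hia : Dom l μ (fun x => (aa f α x)⁻¹) (fun x => (aa f α x)⁻¹) :=
    Dom.inv (by positivity) (aa_Dom hY h α) (aa_pos hf α)
  have hcc : Dom l μ (cc f b) (cc f b) := (cc_Dom hY h hb).monoM (by positivity) h2Y
  induction i with
  | zero =>
    constructor
    · have := Dom.const (l := l) (M := 2 * ((0:ℕ):ℝ) * μ) 0 (by positivity)
      have e : Gf f b α 0 = fun _ => 0 := rfl
      rw [e]; simpa using this
    · have := Dom.const (l := l) (M := 2 * ((0:ℕ):ℝ) * μ) 1 (by positivity)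
      have e : Jf f b α 0 = fun _ => 1 := rfl
      rw [e]; simpa using this
  | succ i ih =>
    have hM0 : 0 ≤ 2 * (i:ℝ) * μ := by positivity
    have hG : Dom l (2 * i * μ + μ) (Gf f b α (i+1)) (Gf f b α (i+1)) := by
      have h1 := Dom.mul hM0 ih.2 (hia.translate (i * α))
      have h2 := (ih.1.monoM (M' := 2 * i * μ + μ) hM0 (by linarith)).add h1
      have e : (fun x => Gf f b α i x + Jf f b α i x * (aa f α (x + i * α))⁻¹) = Gf f b α (i+1) := by
        funext x; rw [Gf, Gf, Jf, GG_succ, div_eq_mul_inv]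
      rwa [e] at h2
    have hJ : Dom l (2 * ((i+1:ℕ):ℝ) * μ) (Jf f b α (i+1)) (Jf f b α (i+1)) := by
      have h1 := Dom.mul hμ0 (hcc.translate ((i + 1) * α)) hG
      have h2 := (ih.2.monoM (M' := μ + (2 * i * μ + μ)) hM0 (by linarith)).add h1
      have e : (fun x => Jf f b α i x + cc f b (x + (i + 1) * α) * Gf f b α (i+1) x) = Jf f b α (i+1) := by
        funext x; rw [Jf, Jf, Gf, JJ_succ]
      rw [e] at h2
      have e3 : 2 * ((i+1:ℕ):ℝ) * μ = μ + (2 * i * μ + μ) := by push_cast; ring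
      rwa [e3]
    exact ⟨hG.monoM (by positivity) (by push_cast; linarith), hJ⟩

/-- derivative scale of the tents -/
noncomputable def Mten (l n : ℕ) (Y Mχ : ℝ) : ℝ :=
  Mχ + (2 * l + 2) * (2 * n * ((2 * l + 2) * (2 * Y))) + 2 * n * ((2 * l + 2) * (2 * Y))

lemma ef_Dom (hY : 0 ≤ Y) (h : Dom l Y f f) (hf : ∀ x, 0 < f x) (hb : 0 ≤ b) (hn : 1 ≤ n) (hMχ : 0 ≤ Mχ)
    (hχ : Dom l Mχ χ (fun x => 2 ^ l * (χ x + η))) (α : ℝ) :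
    Dom l (Mten l n Y Mχ) (ef f b χ n α) (fun x => 2 ^ l * (χ (x + n * α) + η) / Gf f b α n x) := by
  have hG := (GJ_Dom hY h hf hb α n).1
  have hGi := Dom.inv (by positivity) hG (fun x => Gf_pos hf hb α hn x)
  have h1 := Dom.mul hMχ (hχ.translate (n * α)) hGi
  refine (h1.mono (by positivity) ?_ (fun x => le_of_eq ?_))
  · rw [Mten]
    have : 0 ≤ 2 * (n:ℝ) * ((2 * l + 2) * (2 * Y)) := by positivity
    linarith
  · simp only [div_eq_mul_inv]

lemma Pf_Dom (hY : 0 ≤ Y) (h : Dom l Y f f) (hf : ∀ x, 0 < f x) (hb : 0 ≤ b) (hη : 0 ≤ η) (hMχ : 0 ≤ Mχ)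
    (hχ : Dom l Mχ χ (fun x => 2 ^ l * (χ x + η))) (α : ℝ) :
    Dom l (Mten l n Y Mχ) (Pf f b χ n α) (fun x => 2 ^ l * (Pf f b χ n α x + η * n)) := by
  have hM0 : 0 ≤ Mten l n Y Mχ := by rw [Mten]; positivity
  have h1 : ∀ i ∈ Finset.range n, Dom l (Mten l n Y Mχ)
      (fun x => χ (x + ((n:ℝ) - i) * α) / Gf f b α n (x - i * α) * Gf f b α i (x - i * α))
      (fun x => 2 ^ l * (χ (x + ((n:ℝ) - i) * α) / Gf f b α n (x - i * α) * Gf f b α i (x - i * α) + η)) := by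
    intro i hi
    have hi' : i < n := by simpa using hi
    have hn : 1 ≤ n := by omega
    have hG := (GJ_Dom hY h hf hb α n).1
    have hGi := Dom.inv (by positivity) hG (fun x => Gf_pos hf hb α hn x)
    have hGi' := (GJ_Dom hY h hf hb α i).1
    have h2 := Dom.mul hMχ (hχ.translate (((n:ℝ) - i) * α)) (hGi.translate (-(i * α)))
    have h3 := Dom.mul (by positivity) h2 (hGi'.translate (-(i * α)))
    have h4 := h3.congr (G := fun x => χ (x + ((n:ℝ) - i) * α) / Gf f b α n (x - i * α) *
      Gf f b α i (x - i * α)) (fun x => by simp only [div_eq_mul_inv, sub_eq_add_neg])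
    refine h4.mono (by positivity) ?_ (fun x => ?_)
    · rw [Mten]
      have : (i:ℝ) ≤ n := by exact_mod_cast hi'.le
      gcongr
    · simp only [← sub_eq_add_neg]
      have g1 := Gf_pos hf hb α hn (x - i * α)
      have g2 := Gf_nonneg hf hb α i (x - i * α)
      have g3 := Gf_mono hf hb α hi'.le (x - i * α)
      have g4 : Gf f b α i (x - i * α) / Gf f b α n (x - i * α) ≤ 1 := by rwa [div_le_one g1]
      have g5 : η * (Gf f b α i (x - i * α) / Gf f b α n (x - i * α)) ≤ η * 1 := by gcongr
      have : (2:ℝ) ^ l * (χ (x + ((n:ℝ) - i) * α) + η) * (Gf f b α n (x - i * α))⁻¹ * Gf f b α i (x - i * α)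
        = 2 ^ l * (χ (x + ((n:ℝ) - i) * α) / Gf f b α n (x - i * α) * Gf f b α i (x - i * α)
          + η * (Gf f b α i (x - i * α) / Gf f b α n (x - i * α))) := by ring
      rw [this]
      gcongr
      linarith
  have h2 := Dom.sum (Finset.range n) hM0 h1
  have h3 := h2.congr (G := Pf f b χ n α) (fun x => (Pf_eq α x).symm)
  refine h3.monoH hM0 (fun x => le_of_eq ?_)
  rw [← Finset.mul_sum, Finset.sum_add_distrib, ← Pf_eq]
  simp [mul_comm]

lemma gf_Dom (hY : 0 ≤ Y) (h : Dom l Y f f) (hf : ∀ x, 0 < f x) (hb : 0 ≤ b) (hη : 0 ≤ η) (hMχ : 0 ≤ Mχ)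
    (hχ : Dom l Mχ χ (fun x => 2 ^ l * (χ x + η))) (hg0 : ∀ x, 0 ≤ gf ω f b χ n x)
    (hηg : ∀ x, η * (2 * n + 1) ≤ gf ω f b χ n x) :
    Dom l (2 ^ (l+1) * Mten l n Y Mχ) (gf ω f b χ n) (gf ω f b χ n) := by
  have hM0 : 0 ≤ Mten l n Y Mχ := by rw [Mten]; positivity
  have hM1 : Mχ ≤ Mten l n Y Mχ := by
    rw [Mten]
    have : 0 ≤ 2 * (n:ℝ) * ((2 * l + 2) * (2 * Y)) := by positivity
    have : 0 ≤ (2 * (l:ℝ) + 2) * (2 * (n:ℝ) * ((2 * l + 2) * (2 * Y))) := by positivity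
    linarith
  have h1 := ((hχ.monoM hMχ hM1).add (Pf_Dom (n := n) hY h hf hb hη hMχ hχ ω)).add
    (Pf_Dom (n := n) hY h hf hb hη hMχ hχ (-ω))
  have h2 : Dom l (Mten l n Y Mχ) (gf ω f b χ n) (fun x => 2 ^ (l+1) * gf ω f b χ n x) := by
    refine Dom.monoH h1 hM0 (fun x => ?_)
    have h3 := hηg x
    have : 2 ^ l * (χ x + η) + 2 ^ l * (Pf f b χ n ω x + η * n) + 2 ^ l * (Pf f b χ n (-ω) x + η * n)
      = 2 ^ l * (gf ω f b χ n x + η * (2 * n + 1)) := by rw [gf]; ring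
    rw [this, pow_succ, mul_assoc]
    gcongr
    linarith
  exact Dom.self hM0 (one_le_pow₀ (by norm_num)) hg0 h2

lemma jf_Dom (hY : 0 ≤ Y) (h : Dom l Y f f) (hf : ∀ x, 0 < f x) (hb : 0 ≤ b) (hn : 1 ≤ n) (hMχ : 0 ≤ Mχ) (α : ℝ) :
    Dom l (Mten l n Y Mχ) (jf f b n α) (jf f b n α) := by
  have hG := (GJ_Dom hY h hf hb α n).1
  have hJ := (GJ_Dom hY h hf hb α (n-1)).2
  have hGi := Dom.inv (by positivity) hG (fun x => Gf_pos hf hb α hn x)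
  have h1 := (Dom.mul (by positivity) hJ hGi).translate (-(n * α))
  have e : (fun x => Jf f b α (n-1) (x + -(n * α)) * (Gf f b α n (x + -(n * α)))⁻¹) = jf f b n α := by
    funext x
    rw [jf, jj, div_eq_mul_inv, ← sub_eq_add_neg, Jf, Gf]
  simp only [e] at h1
  refine h1.monoM (by positivity) ?_
  rw [Mten]
  have : ((n-1:ℕ):ℝ) ≤ n := by exact_mod_cast Nat.sub_le _ _
  have h5 : 2 * ((n-1:ℕ):ℝ) * ((2 * l + 2) * (2 * Y)) ≤ 2 * (n:ℝ) * ((2 * l + 2) * (2 * Y)) := by gcongr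
  linarith

/-- The correction `v' - v`. -/
noncomputable def corr (ω : ℝ) (f : ℝ → ℝ) (b : ℝ) (χ : ℝ → ℝ) (n : ℕ) (x : ℝ) : ℝ :=
  b - χ x * (b * f x ^ 2 + jf f b n ω x + jf f b n (-ω) x) / (f x ^ 2 * gf ω f b χ n x)
      + (ef f b χ n ω x + ef f b χ n (-ω) x) / (f x ^ 2 * gf ω f b χ n x)

/-- derivative scale of the correction -/
noncomputable def Mcor (l n : ℕ) (Y Mχ : ℝ) : ℝ :=
  Mten l n Y Mχ + Mten l n Y Mχ + 2 * Y + (2 * l + 2) * (2 * Y + 2 ^ (l+1) * Mten l n Y Mχ)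

lemma corr_Dom (hY : 0 ≤ Y) (h : Dom l Y f f) (hf : ∀ x, 0 < f x) (hb : 0 ≤ b) (hη : 0 ≤ η) (hMχ : 0 ≤ Mχ)
    (hn : 1 ≤ n)
    (hχ : Dom l Mχ χ (fun x => 2 ^ l * (χ x + η))) (hg0 : ∀ x, 0 < gf ω f b χ n x)
    (hηg : ∀ x, η * (2 * n + 1) ≤ gf ω f b χ n x) :
    Dom l (Mcor l n Y Mχ) (corr ω f b χ n) (fun x => b +
      2 ^ l * (χ x + η) * (b * f x ^ 2 + jf f b n ω x + jf f b n (-ω) x) / (f x ^ 2 * gf ω f b χ n x)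
      + (2 ^ l * (χ (x + n * ω) + η) / Gf f b ω n x + 2 ^ l * (χ (x + n * (-ω)) + η) / Gf f b (-ω) n x)
          / (f x ^ 2 * gf ω f b χ n x)) := by
  have hM0 : 0 ≤ Mten l n Y Mχ := by rw [Mten]; positivity
  have hM1 : Mχ ≤ Mten l n Y Mχ := by
    rw [Mten]
    have : 0 ≤ 2 * (n:ℝ) * ((2 * l + 2) * (2 * Y)) := by positivity
    have : 0 ≤ (2 * (l:ℝ) + 2) * (2 * (n:ℝ) * ((2 * l + 2) * (2 * Y))) := by positivity
    linarith
  set Mt := Mten l n Y Mχ with hMt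
  have hD : Dom l ((2 * l + 2) * (2 * Y + 2 ^ (l+1) * Mt)) (fun x => (f x ^ 2 * gf ω f b χ n x)⁻¹)
      (fun x => (f x ^ 2 * gf ω f b χ n x)⁻¹) := by
    refine Dom.inv (by positivity) ?_ (fun x => by have := hf x; have := hg0 x; positivity)
    have h1 := Dom.mul hY h h
    have h2 := Dom.mul (by positivity) h1 (gf_Dom hY h hf hb hη hMχ hχ (fun x => (hg0 x).le) hηg)
    simp only [← sq, ← two_mul] at h2
    exact h2
  have hjs : Dom l (Mt + 2 * Y) (fun x => b * f x ^ 2 + jf f b n ω x + jf f b n (-ω) x)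
      (fun x => b * f x ^ 2 + jf f b n ω x + jf f b n (-ω) x) := by
    have h1 : Dom l (Mt + 2 * Y) (fun x => b * f x ^ 2) (fun x => b * f x ^ 2) :=
      (cc_Dom hY h hb).monoM (by positivity) (by linarith)
    have h2 := (jf_Dom (Mχ := Mχ) hY h hf hb hn hMχ ω).monoM (M' := Mt + 2 * Y) hM0 (by linarith)
    have h3 := (jf_Dom (Mχ := Mχ) hY h hf hb hn hMχ (-ω)).monoM (M' := Mt + 2 * Y) hM0 (by linarith)
    exact (h1.add h2).add h3
  have t1 := Dom.mul (by positivity) (Dom.mul hMχ hχ hjs) hD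
  have he := (ef_Dom hY h hf hb hn hMχ hχ ω).add (ef_Dom hY h hf hb hn hMχ hχ (-ω))
  have t2 := Dom.mul (by positivity) he hD
  have hMc : Mcor l n Y Mχ = Mt + Mt + 2 * Y + (2 * l + 2) * (2 * Y + 2 ^ (l+1) * Mt) := rfl
  have hMc0 : 0 ≤ Mcor l n Y Mχ := by rw [hMc]; positivity
  have t0 := Dom.const (l := l) (M := Mcor l n Y Mχ) b hMc0
  have t1' := (t1.monoM (M' := Mcor l n Y Mχ) (by positivity) (by rw [hMc]; linarith)).neg
  have t2' := t2.monoM (M' := Mcor l n Y Mχ) (by positivity) (by rw [hMc]; linarith)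
  have t := (t0.add t1').add t2'
  refine (t.congr (G := corr ω f b χ n) (fun x => ?_)).monoH hMc0 (fun x => le_of_eq ?_)
  · rw [corr]; ring
  · rw [abs_of_nonneg hb]; ring

end


/-- `Y` is large enough. -/
structure Big (c0 T0 : ℝ) (l Y : ℕ) : Prop where
  h100 : (100:ℝ) ≤ Y
  hc : 12 / c0 ≤ Y
  hT : T0 ≤ Y
  hl : (2:ℝ) ^ (l+5) ≤ Y
  he : 1000 * 2 ^ l * (Y:ℝ) ^ 50 ≤ exp Y

lemma eventually_big (c0 T0 : ℝ) (l : ℕ) : ∀ᶠ Y : ℕ in atTop, Big c0 T0 l Y := by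
  have hcast : Tendsto (fun Y : ℕ => (Y:ℝ)) atTop atTop := tendsto_natCast_atTop_atTop
  have h1 := hcast.eventually_ge_atTop (100:ℝ)
  have h2 := hcast.eventually_ge_atTop (12 / c0)
  have h3 := hcast.eventually_ge_atTop T0
  have h4 := hcast.eventually_ge_atTop ((2:ℝ) ^ (l+5))
  have h5 : ∀ᶠ Y : ℕ in atTop, 1000 * 2 ^ l * (Y:ℝ) ^ 50 ≤ exp Y := by
    have := (Real.tendsto_exp_div_pow_atTop 50).comp hcast
    filter_upwards [this.eventually_ge_atTop (1000 * 2 ^ l), h1] with Y hY hY1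
    simp only [Function.comp] at hY
    rwa [le_div_iff₀ (by positivity)] at hY
  filter_upwards [h1, h2, h3, h4, h5] with Y a1 a2 a3 a4 a5
  exact ⟨a1, a2, a3, a4, a5⟩

/-- Input of the inductive step. -/
structure StepIn (ω : ℝ) (l Y : ℕ) (f : ℝ → ℝ) (b : ℝ) (W : ℕ) : Prop where
  per : Function.Periodic f 1
  dom : Dom l Y f f
  lo : ∀ x, exp (-Y) ≤ f x
  hi : ∀ x, f x ≤ Y
  bpos : 0 < b
  ble : b ≤ Y
  W1 : 1 ≤ W
  WY : W ≤ Y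
  dbl : ∀ α, α = ω ∨ α = -ω → ∀ s i, 2 * Gf f b α i s ≤ Gf f b α (i + W) s
  core : ∀ y, near (2 / (Y:ℝ) ^ 10) y → 1 ≤ f y

/-- The cutoff. -/
structure ChiIn (l Y : ℕ) (χ : ℝ → ℝ) : Prop where
  per : Function.Periodic χ 1
  nn : ∀ x, 0 ≤ χ x
  le1 : ∀ x, χ x ≤ 1
  one : ∀ x, near (1 / (Y:ℝ) ^ 10) x → χ x = 1
  zero : ∀ x, ¬ near (2 / (Y:ℝ) ^ 10) x → χ x = 0
  dom : Dom l (3 * (Y:ℝ) ^ 35) χ (fun x => 2 ^ l * (χ x + (1/2) ^ (2 * Y ^ 24)))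

lemma Big.l_le {c0 T0 : ℝ} {l Y : ℕ} (h : Big c0 T0 l Y) : (2 * (l:ℝ) + 2) ≤ Y := by
  have h1 : l + 1 < 2 ^ (l+1) := Nat.lt_two_pow_self
  have h2 : ((l + 1 : ℕ) : ℝ) < ((2 ^ (l+1) : ℕ) : ℝ) := by exact_mod_cast h1
  push_cast at h2
  have h3 := h.hl
  have h4 : (2:ℝ) ^ (l+5) = 2 ^ (l+1) * 16 := by ring
  linarith

lemma exists_chi {c0 T0 : ℝ} {l Y : ℕ} (hB : Big c0 T0 l Y) (hT1 : 1 ≤ T0)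
    (hθ : ∀ ε : ℝ, 0 < ε → ε ≤ 1/8 → ∃ θ : ℝ → ℝ,
    Function.Periodic θ 1 ∧ (∀ x, 0 ≤ θ x) ∧ (∀ x, θ x ≤ 1) ∧ (∀ x, near ε x → θ x = 1) ∧
    (∀ x, ¬ near (2 * ε) x → θ x = 0) ∧ Dom l (T0 / ε) θ (fun _ => 1)) :
    ∃ χ, ChiIn l Y χ := by
  have hY := hB.h100
  have hYpos : (0:ℝ) < Y := by linarith
  have h8 : (8:ℝ) ≤ (Y:ℝ) ^ 10 := by
    have : (Y:ℝ) ≤ (Y:ℝ) ^ 10 := le_self_pow₀ (by linarith) (by norm_num)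
    linarith
  obtain ⟨θ, p, t0, t1, tn, tz, td⟩ := hθ (1 / (Y:ℝ) ^ 10) (by positivity)
    (by rw [div_le_div_iff₀ (by positivity) (by norm_num)]; linarith)
  have hPpos : l + 2 * Y ^ 24 ≠ 0 := by
    have : 0 < Y := by exact_mod_cast hYpos
    positivity
  refine ⟨fun x => θ x ^ (l + 2 * Y ^ 24), ?_, fun x => pow_nonneg (t0 x) _,
    fun x => pow_le_one₀ (t0 x) (t1 x), fun x hx => by simp [tn x hx], ?_, ?_⟩
  · intro x; simp only [p x]
  · intro x hx
    have : θ x = 0 := tz x (by rwa [mul_one_div])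
    simp only [this]
    exact zero_pow hPpos
  · refine (Dom.chi (by positivity) t0 t1 td (2 * Y ^ 24)).monoM (by positivity) ?_
    have hl : (l:ℝ) ≤ Y := by linarith [hB.l_le, (by positivity : (0:ℝ) ≤ l)]
    have hl' : (Y:ℝ) ≤ (Y:ℝ) ^ 24 := le_self_pow₀ (by linarith) (by norm_num)
    have hT := hB.hT
    rw [div_div_eq_mul_div, div_one]
    push_cast
    calc ((l:ℝ) + 2 * (Y:ℝ) ^ 24) * (T0 * (Y:ℝ) ^ 10) ≤ ((Y:ℝ) ^ 24 + 2 * (Y:ℝ) ^ 24) * (Y * (Y:ℝ) ^ 10) := by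
          gcongr; linarith
      _ = _ := by ring


lemma near_congr_add_one {r x : ℝ} : near r (x + 1) ↔ near r x := near.add_one

lemma GJ_per {α : ℝ} {a c : ℝ → ℝ} (ha : Function.Periodic a 1) (hc : Function.Periodic c 1) (i : ℕ) :
    Function.Periodic (GJ α a c i) 1 := by
  induction i with
  | zero => intro s; rfl
  | succ i ih =>
    intro s
    have e1 : s + 1 + i * α = s + i * α + 1 := by ring
    have e2 : s + 1 + ((i:ℝ) + 1) * α = s + (i + 1) * α + 1 := by ring
    simp only [GJ, ih s, e1, e2, ha _, hc _]

lemma aa_per {f : ℝ → ℝ} (hf : Function.Periodic f 1) (α : ℝ) : Function.Periodic (aa f α) 1 := by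
  intro s
  have e1 : s + 1 + α = s + α + 1 := by ring
  simp only [aa, e1, hf _]

lemma cc_per {f : ℝ → ℝ} (hf : Function.Periodic f 1) (b : ℝ) : Function.Periodic (cc f b) 1 := by
  intro s
  simp only [cc, hf _]

lemma Pf_per {f χ : ℝ → ℝ} (hf : Function.Periodic f 1) (hχ : Function.Periodic χ 1) (b : ℝ) (n : ℕ) (α : ℝ) :
    Function.Periodic (Pf f b χ n α) 1 := by
  intro x
  rw [Pf_eq, Pf_eq]
  refine Finset.sum_congr rfl fun i _ => ?_
  have e1 : x + 1 + ((n:ℝ) - i) * α = x + ((n:ℝ) - i) * α + 1 := by ring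
  have e2 : x + 1 - i * α = x - i * α + 1 := by ring
  have h := fun j => GJ_per (α := α) (aa_per hf α) (cc_per hf b) j (x - i * α)
  rw [e1, e2, hχ, Gf, Gf, Gf, Gf, GG, GG, GG, GG, h, h]

lemma gf_per {ω : ℝ} {f χ : ℝ → ℝ} (hf : Function.Periodic f 1) (hχ : Function.Periodic χ 1) (b : ℝ) (n : ℕ) :
    Function.Periodic (gf ω f b χ n) 1 := by
  intro x
  rw [gf, gf, hχ, Pf_per hf hχ, Pf_per hf hχ]

/-- All standing hypotheses of one step. -/
structure Ctx (ω c0 T0 : ℝ) (l Y : ℕ) (f : ℝ → ℝ) (b : ℝ) (W : ℕ) (χ : ℝ → ℝ) : Prop where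
  c0pos : 0 < c0
  dio : Dio c0 ω
  big : Big c0 T0 l Y
  st : StepIn ω l Y f b W
  ch : ChiIn l Y χ

namespace Ctx
variable {ω c0 T0 : ℝ} {l Y : ℕ} {f : ℝ → ℝ} {b : ℝ} {W : ℕ} {χ : ℝ → ℝ}

lemma Y1 (C : Ctx ω c0 T0 l Y f b W χ) : (1:ℝ) ≤ Y := by linarith [C.big.h100]
lemma Y0 (C : Ctx ω c0 T0 l Y f b W χ) : (0:ℝ) < Y := by linarith [C.big.h100]
lemma fpos (C : Ctx ω c0 T0 l Y f b W χ) (x : ℝ) : 0 < f x := (exp_pos _).trans_le (C.st.lo x)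

lemma dioα (C : Ctx ω c0 T0 l Y f b W χ) {α : ℝ} (hα : α = ω ∨ α = -ω) : Dio c0 α := by
  rcases hα with rfl | rfl
  · exact C.dio
  · exact C.dio.neg

/-- polynomial factors are absorbed by `exp Y` -/
lemma poly (C : Ctx ω c0 T0 l Y f b W χ) {k : ℕ} (hk : k ≤ 50) : 1000 * 2 ^ l * (Y:ℝ) ^ k ≤ exp Y := by
  refine le_trans ?_ C.big.he
  have := pow_le_pow_right₀ C.Y1 hk
  gcongr

lemma poly' (C : Ctx ω c0 T0 l Y f b W χ) {k : ℕ} (hk : k ≤ 50) : 1000 * (Y:ℝ) ^ k ≤ exp Y := by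
  refine le_trans ?_ (C.poly hk)
  have h1 : (1:ℝ) ≤ 2 ^ l := one_le_pow₀ (by norm_num)
  have : 0 < (Y:ℝ) ^ k := by have := C.Y0; positivity
  nlinarith

lemma hit (C : Ctx ω c0 T0 l Y f b W χ) {α : ℝ} (hα : α = ω ∨ α = -ω) (x : ℝ) :
    ∃ m : ℕ, 1 ≤ m ∧ m ≤ Y ^ 21 ∧ near (1 / (Y:ℝ) ^ 10) (x + m * α) := by
  have hY := C.Y0
  obtain ⟨m, h1, h2, h3⟩ := (C.dioα hα).hit C.c0pos (ε := 1 / (Y:ℝ) ^ 10) (by positivity)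
    (by rw [div_le_one (by positivity)]; exact one_le_pow₀ C.Y1) x
  refine ⟨m, h1, ?_, h3⟩
  have : (m:ℝ) ≤ (Y:ℝ) ^ 21 := by
    refine h2.trans ?_
    have e : 12 / c0 / (1 / (Y:ℝ) ^ 10) ^ 2 = 12 / c0 * (Y:ℝ) ^ 20 := by field_simp
    rw [e]
    calc 12 / c0 * (Y:ℝ) ^ 20 ≤ Y * (Y:ℝ) ^ 20 := by gcongr; exact C.big.hc
      _ = _ := by ring
  exact_mod_cast this

lemma Kbound (C : Ctx ω c0 T0 l Y f b W χ) (α x y : ℝ) :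
    (1 + cc f b x) * (1 + 1 / aa f α y) ≤ exp (4 * Y) := by
  have hY := C.Y0
  have h1 : cc f b x ≤ (Y:ℝ) ^ 3 := by
    rw [cc]
    have := C.st.ble
    have := C.st.hi x
    have := (C.fpos x).le
    calc b * f x ^ 2 ≤ Y * (Y:ℝ) ^ 2 := by gcongr
      _ = _ := by ring
  have h2 : 1 / aa f α y ≤ exp (2 * Y) := by
    rw [one_div, inv_le_comm₀ (aa_pos C.fpos α y) (exp_pos _), ← exp_neg, aa]
    calc exp (-(2 * Y)) = exp (-Y) * exp (-Y) := by rw [← exp_add]; congr 1; ring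
      _ ≤ _ := by
        have := C.st.lo y
        have := C.st.lo (y + α)
        have := (C.fpos y).le
        gcongr
  have h3 := C.poly' (k := 3) (by norm_num)
  have h4 : (1:ℝ) ≤ (Y:ℝ) ^ 3 := one_le_pow₀ C.Y1
  have h0 : 0 ≤ 1 / aa f α y := by have := aa_pos C.fpos α y; positivity
  have hE : exp (2 * Y) = exp Y * exp Y := by rw [← exp_add]; congr 1; ring
  have hE4 : exp (4 * Y) = exp Y * exp Y * (exp Y * exp Y) := by
    rw [← exp_add, ← exp_add]; congr 1; ring
  rw [hE] at h2
  rw [hE4]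
  have hb : (0:ℝ) < exp Y := exp_pos _
  have hY2 : 2 ≤ exp (Y:ℝ) := by nlinarith
  calc (1 + cc f b x) * (1 + 1 / aa f α y) ≤ exp Y * (exp Y * exp Y * exp Y) := by
        gcongr
        · linarith
        · nlinarith [mul_pos hb hb]
    _ = _ := by ring

lemma Gexp (C : Ctx ω c0 T0 l Y f b W χ) (α : ℝ) {m : ℕ} (hm : m ≤ Y ^ 21) (x : ℝ) :
    Gf f b α m x ≤ exp (4 * (Y:ℝ) ^ 22) := by
  have h := GG_exp (α := α) (aa_pos C.fpos α) (cc_nonneg (f := f) C.st.bpos.le) (C.Kbound α) m x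
  have hJ := Jf_one_le C.fpos C.st.bpos.le α m x
  rw [Jf] at hJ
  rw [Gf]
  rw [← exp_nat_mul] at h
  refine le_trans (by linarith) (h.trans (exp_le_exp.mpr ?_))
  have hm' : (m:ℝ) ≤ (Y:ℝ) ^ 21 := by exact_mod_cast hm
  have hY := C.Y0
  calc (m:ℝ) * (4 * Y) ≤ (Y:ℝ) ^ 21 * (4 * Y) := by gcongr
    _ = _ := by ring

lemma Ynat (C : Ctx ω c0 T0 l Y f b W χ) : 100 ≤ Y := by exact_mod_cast C.big.h100

/-- lower bound for `g` in terms of the hitting `G` -/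
lemma g_hit (C : Ctx ω c0 T0 l Y f b W χ) {α : ℝ} (hα : α = ω ∨ α = -ω) (x : ℝ) :
    ∃ m : ℕ, 1 ≤ m ∧ m ≤ Y ^ 21 ∧ 1 ≤ gf ω f b χ (Y ^ 22) x * (3 * (Y:ℝ) ^ 3 * Gf f b α m x) := by
  obtain ⟨m, h1, h2, h3⟩ := C.hit hα x
  refine ⟨m, h1, h2, ?_⟩
  have hY := C.Y0
  have hlt : m < Y ^ 22 := lt_of_le_of_lt h2 (Nat.pow_lt_pow_right (by linarith [C.Ynat]) (by norm_num))
  have hP := Pf_lower C.fpos C.st.hi C.st.bpos.le C.ch.nn α x h1 hlt (C.ch.one _ h3)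
  refine hP.trans ?_
  have h4 := gf_ge_Pf (n := Y ^ 22) C.fpos C.st.bpos.le C.ch.nn x hα
  have h5 := Pf_nonneg (n := Y ^ 22) C.fpos C.st.bpos.le C.ch.nn α x
  have h6 := Gf_nonneg C.fpos C.st.bpos.le α m x
  have h7 : 2 * (Y:ℝ) ^ 2 + b * (Y:ℝ) ^ 2 ≤ 3 * (Y:ℝ) ^ 3 := by
    have h8 := mul_le_mul_of_nonneg_right C.st.ble (by positivity : 0 ≤ (Y:ℝ) ^ 2)
    have h9 := mul_le_mul_of_nonneg_right C.Y1 (by positivity : 0 ≤ (Y:ℝ) ^ 2)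
    nlinarith
  have h10 := C.st.bpos
  gcongr
  exact h5.trans h4

lemma g_lo (C : Ctx ω c0 T0 l Y f b W χ) (x : ℝ) : exp (-(Y:ℝ) ^ 23) ≤ gf ω f b χ (Y ^ 22) x := by
  obtain ⟨m, h1, h2, h3⟩ := C.g_hit (Or.inl rfl) x
  have h4 := C.Gexp ω h2 x
  have hY := C.Y0
  have h5 := C.poly' (k := 3) (by norm_num)
  have h6 : 3 * (Y:ℝ) ^ 3 * Gf f b ω m x ≤ exp ((Y:ℝ) ^ 23) := by
    have h0 := Gf_nonneg C.fpos C.st.bpos.le ω m x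
    calc 3 * (Y:ℝ) ^ 3 * Gf f b ω m x ≤ exp Y * exp (4 * (Y:ℝ) ^ 22) := by
          gcongr
          have : 0 < (Y:ℝ) ^ 3 := by positivity
          linarith
      _ = exp (Y + 4 * (Y:ℝ) ^ 22) := by rw [exp_add]
      _ ≤ _ := by
        refine exp_le_exp.mpr ?_
        have : (Y:ℝ) ≤ (Y:ℝ) ^ 22 := le_self_pow₀ C.Y1 (by norm_num)
        have h100 := C.big.h100
        calc (Y:ℝ) + 4 * (Y:ℝ) ^ 22 ≤ 100 * (Y:ℝ) ^ 22 := by linarith [pow_pos hY 22]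
          _ ≤ Y * (Y:ℝ) ^ 22 := by gcongr
          _ = _ := by ring
  have hg0 : 0 ≤ gf ω f b χ (Y ^ 22) x := (C.ch.nn x).trans (gf_ge_chi C.fpos C.st.bpos.le C.ch.nn x)
  rw [exp_neg, inv_le_iff_one_le_mul₀ (exp_pos _)]
  exact h3.trans (by gcongr)

lemma g_pos (C : Ctx ω c0 T0 l Y f b W χ) (x : ℝ) : 0 < gf ω f b χ (Y ^ 22) x := (exp_pos _).trans_le (C.g_lo x)

lemma g_hi (C : Ctx ω c0 T0 l Y f b W χ) (x : ℝ) : gf ω f b χ (Y ^ 22) x ≤ 2 * (Y:ℝ) ^ 22 + 1 := by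
  have := gf_le (ω := ω) (n := Y ^ 22) C.fpos C.st.bpos.le C.ch.nn C.ch.le1 x
  push_cast at this
  exact this

lemma eta_le (C : Ctx ω c0 T0 l Y f b W χ) : (1/2:ℝ) ^ (2 * Y ^ 24) ≤ exp (-(Y:ℝ) ^ 24) := by
  rw [pow_mul]
  have h1 : ((1/2:ℝ) ^ 2) ≤ exp (-1) := by
    rw [exp_neg]
    have := Real.exp_one_lt_d9
    rw [le_inv_comm₀ (by positivity) (exp_pos _)]
    norm_num
    linarith
  calc ((1/2:ℝ) ^ 2) ^ (Y ^ 24) ≤ (exp (-1)) ^ (Y ^ 24) := by gcongr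
    _ = _ := by rw [← exp_nat_mul]; push_cast; congr 1; ring

lemma eta_g (C : Ctx ω c0 T0 l Y f b W χ) (x : ℝ) :
    (1/2:ℝ) ^ (2 * Y ^ 24) * (2 * ((Y ^ 22 : ℕ):ℝ) + 1) ≤ gf ω f b χ (Y ^ 22) x := by
  refine le_trans ?_ (C.g_lo x)
  have h1 := C.eta_le
  have h2 := C.poly' (k := 22) (by norm_num)
  have hY := C.Y0
  have h3 : (1:ℝ) ≤ (Y:ℝ) ^ 22 := one_le_pow₀ C.Y1
  push_cast
  calc (1/2:ℝ) ^ (2 * Y ^ 24) * (2 * (Y:ℝ) ^ 22 + 1) ≤ exp (-(Y:ℝ) ^ 24) * exp Y := by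
        gcongr; linarith
    _ = exp (-(Y:ℝ) ^ 24 + Y) := by rw [exp_add]
    _ ≤ _ := by
      refine exp_le_exp.mpr ?_
      have : (Y:ℝ) ≤ (Y:ℝ) ^ 23 := le_self_pow₀ C.Y1 (by norm_num)
      have h100 := C.big.h100
      have : 2 * (Y:ℝ) ^ 23 ≤ (Y:ℝ) ^ 24 := by
        calc 2 * (Y:ℝ) ^ 23 ≤ Y * (Y:ℝ) ^ 23 := by gcongr; linarith
          _ = _ := by ring
      linarith

lemma Mten_le (C : Ctx ω c0 T0 l Y f b W χ) : 2 ^ (l+1) * Mten l (Y ^ 22) Y (3 * (Y:ℝ) ^ 35) ≤ (Y:ℝ) ^ 37 := by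
  have hl := C.big.l_le
  have hl2 := C.big.hl
  have hY := C.Y0
  have h100 := C.big.h100
  have hM : Mten l (Y ^ 22) Y (3 * (Y:ℝ) ^ 35) ≤ 4 * (Y:ℝ) ^ 35 := by
    rw [Mten]
    push_cast
    have h1 : 2 * (Y:ℝ) ^ 22 * ((2 * l + 2) * (2 * Y)) ≤ 4 * (Y:ℝ) ^ 24 := by
      calc 2 * (Y:ℝ) ^ 22 * ((2 * l + 2) * (2 * Y)) ≤ 2 * (Y:ℝ) ^ 22 * (Y * (2 * Y)) := by gcongr
        _ = _ := by ring
    have h2 : (2 * (l:ℝ) + 2) * (2 * (Y:ℝ) ^ 22 * ((2 * l + 2) * (2 * Y))) ≤ Y * (4 * (Y:ℝ) ^ 24) := by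
      gcongr
    have h3 : 8 * (Y:ℝ) ^ 25 ≤ (Y:ℝ) ^ 35 := by
      calc 8 * (Y:ℝ) ^ 25 ≤ Y * (Y:ℝ) ^ 25 := by gcongr; linarith
        _ = (Y:ℝ) ^ 26 := by ring
        _ ≤ _ := pow_le_pow_right₀ C.Y1 (by norm_num)
    have h4 : 4 * (Y:ℝ) ^ 24 ≤ 4 * (Y:ℝ) ^ 25 := by
      gcongr
      · exact C.Y1
      · norm_num
    nlinarith
  have h8 : (2:ℝ) ^ (l+1) * 4 ≤ Y := by
    have : (2:ℝ) ^ (l+5) = 2 ^ (l+1) * 16 := by ring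
    have : (0:ℝ) < 2 ^ (l+1) := by positivity
    linarith
  calc 2 ^ (l+1) * Mten l (Y ^ 22) Y (3 * (Y:ℝ) ^ 35) ≤ 2 ^ (l+1) * (4 * (Y:ℝ) ^ 35) := by gcongr
    _ = (2 ^ (l+1) * 4) * (Y:ℝ) ^ 35 := by ring
    _ ≤ Y * (Y:ℝ) ^ 35 := by gcongr
    _ = (Y:ℝ) ^ 36 := by ring
    _ ≤ _ := pow_le_pow_right₀ C.Y1 (by norm_num)

lemma Mten_nn (Y n l : ℕ) : 0 ≤ Mten l n Y (3 * (Y:ℝ) ^ 35) := by rw [Mten]; positivity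

lemma Mcor_le (C : Ctx ω c0 T0 l Y f b W χ) : Mcor l (Y ^ 22) Y (3 * (Y:ℝ) ^ 35) ≤ (Y:ℝ) ^ 40 := by
  have hl := C.big.l_le
  have hY := C.Y0
  have h100 := C.big.h100
  have h1 := C.Mten_le
  have h0 := Mten_nn Y (Y^22) l
  have h2 : Mten l (Y ^ 22) Y (3 * (Y:ℝ) ^ 35) ≤ (Y:ℝ) ^ 37 := by
    have : (1:ℝ) ≤ 2 ^ (l+1) := one_le_pow₀ (by norm_num)
    nlinarith
  have h3 : (Y:ℝ) ≤ (Y:ℝ) ^ 37 := le_self_pow₀ C.Y1 (by norm_num)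
  have h4 : (Y:ℝ) ^ 37 * 100 ≤ (Y:ℝ) ^ 37 * Y := by gcongr
  have h5 : (2 * (l:ℝ) + 2) * (2 * Y + 2 ^ (l+1) * Mten l (Y ^ 22) Y (3 * (Y:ℝ) ^ 35)) ≤ Y * (3 * (Y:ℝ) ^ 37) := by
    gcongr
    linarith
  rw [Mcor]
  have h6 : (Y:ℝ) ^ 37 * Y * 100 ≤ (Y:ℝ) ^ 37 * Y * Y := by gcongr
  have h7 : (Y:ℝ) ^ 37 * Y * Y * 1 ≤ (Y:ℝ) ^ 37 * Y * Y * Y := by gcongr; exact C.Y1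
  nlinarith [pow_pos hY 37]

end Ctx


lemma half_pow_le (k : ℕ) : (1/2:ℝ) ^ (2 * k) ≤ exp (-(k:ℝ)) := by
  rw [pow_mul]
  have h1 : ((1/2:ℝ) ^ 2) ≤ exp (-1) := by
    rw [exp_neg]
    have := Real.exp_one_lt_d9
    rw [le_inv_comm₀ (by positivity) (exp_pos _)]
    norm_num
    linarith
  calc ((1/2:ℝ) ^ 2) ^ k ≤ (exp (-1)) ^ k := by gcongr
    _ = _ := by rw [← exp_nat_mul]; congr 1; ring

/-- doubling of `G` from hits of the core and valleys -/
lemma Gf_doubling {f : ℝ → ℝ} {b α r : ℝ} {A B : ℕ} (hf : ∀ x, 0 < f x) (hb : 0 < b)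
    (hit : ∀ x, ∃ m : ℕ, 1 ≤ m ∧ m ≤ A ∧ near r (x + m * α))
    (core : ∀ y, near r y → 1 ≤ f y)
    (valley : ∀ y, near r y → ∃ m : ℕ, m ≤ B ∧ f (y + m * α) * f (y + (m + 1) * α) ≤ b) (s : ℝ) (i : ℕ) :
    2 * Gf f b α i s ≤ Gf f b α (i + (A + B + 1)) s := by
  obtain ⟨m, h1, h2, h3⟩ := hit (s + i * α)
  obtain ⟨m', h4, h5⟩ := valley _ h3
  have hG0 := Gf_nonneg hf hb.le α i s
  have hmono : Gf f b α (i + m + m' + 1) s ≤ Gf f b α (i + (A + B + 1)) s := Gf_mono hf hb.le α (by omega) s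
  refine le_trans ?_ hmono
  have hJ : b * Gf f b α i s ≤ Jf f b α (i + m + m') s := by
    obtain ⟨k, rfl⟩ := Nat.exists_eq_add_of_le' h1
    have hm : Jf f b α (i + (k+1)) s ≤ Jf f b α (i + (k + 1) + m') s :=
      JJ_mono (aa_pos hf α) (cc_nonneg hb.le) (by omega) s
    refine le_trans ?_ hm
    have e := JJ_succ (α := α) (a := aa f α) (c := cc f b) (i + k) s
    have hj := Jf_one_le hf hb.le α (i + k) s
    have hg : Gf f b α i s ≤ Gf f b α (i + k + 1) s := Gf_mono hf hb.le α (by omega) s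
    rw [← add_assoc, Jf, e]
    rw [Jf] at hj
    have hc : b ≤ cc f b (s + (((i + k : ℕ):ℝ) + 1) * α) := by
      have : s + (((i + k : ℕ):ℝ) + 1) * α = s + i * α + ((k+1 : ℕ):ℝ) * α := by push_cast; ring
      rw [cc, this]
      have := one_le_pow₀ (n := 2) (core _ h3)
      nlinarith
    have : b * Gf f b α i s ≤ cc f b (s + (((i + k : ℕ):ℝ) + 1) * α) * Gf f b α (i + k + 1) s := by
      gcongr
      exact hb.le.trans hc
    rw [Gf, Gf] at this
    rw [Gf]
    linarith
  have e := GG_succ (α := α) (a := aa f α) (c := cc f b) (i + m + m') s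
  have hg : Gf f b α i s ≤ Gf f b α (i + m + m') s := Gf_mono hf hb.le α (by omega) s
  have ha : aa f α (s + ((i + m + m' : ℕ):ℝ) * α) ≤ b := by
    refine le_trans (le_of_eq ?_) h5
    rw [aa]
    push_cast
    congr 2 <;> ring
  have hap := aa_pos hf α (s + ((i + m + m' : ℕ):ℝ) * α)
  have hq : Gf f b α i s ≤ Jf f b α (i + m + m') s / aa f α (s + ((i + m + m' : ℕ):ℝ) * α) := by
    rw [le_div_iff₀ hap]
    refine le_trans ?_ hJ
    rw [mul_comm]
    gcongr
  rw [Gf, Gf] at hg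
  rw [Gf, Jf] at hq
  rw [Gf, Gf, e]
  linarith

/-- The invariant of the construction. -/
structure Level (ω : ℝ) (l Y : ℕ) (f : ℝ → ℝ) : Prop where
  per : Function.Periodic f 1
  dom : Dom l ((Y:ℝ) ^ 40) f f
  lo : ∀ x, exp (-(Y:ℝ) ^ 40) ≤ f x
  hi : ∀ x, f x ≤ (Y:ℝ) ^ 40
  core : ∀ y, near (1 / (Y:ℝ) ^ 10) y → 1 ≤ f y
  valley : ∀ α, α = ω ∨ α = -ω → ∀ y, near (1 / (Y:ℝ) ^ 10) y →
    ∃ m : ℕ, m ≤ Y ^ 10 ∧ f (y + m * α) * f (y + (m + 1) * α) ≤ exp (-(Y:ℝ) ^ 7)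

/-- The new ground state. -/
noncomputable def nf (ω : ℝ) (f : ℝ → ℝ) (b : ℝ) (χ : ℝ → ℝ) (Y : ℕ) (x : ℝ) : ℝ := f x * gf ω f b χ (Y ^ 22) x

namespace Ctx
variable {ω c0 T0 : ℝ} {l Y : ℕ} {f : ℝ → ℝ} {b : ℝ} {W : ℕ} {χ : ℝ → ℝ}

lemma nf_dom (C : Ctx ω c0 T0 l Y f b W χ) : Dom l ((Y:ℝ) ^ 40) (nf ω f b χ Y) (nf ω f b χ Y) := by
  have hY := C.Y0
  have h1 := gf_Dom (ω := ω) (n := Y ^ 22) hY.le C.st.dom C.fpos C.st.bpos.le (by positivity) (by positivity) C.ch.dom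
    (fun x => (C.g_pos x).le) C.eta_g
  have h2 := Dom.mul hY.le C.st.dom h1
  have h0 := Mten_nn Y (Y^22) l
  refine h2.monoM (by positivity) ?_
  have h3 := C.Mten_le
  have h4 : (Y:ℝ) ≤ (Y:ℝ) ^ 37 := le_self_pow₀ C.Y1 (by norm_num)
  have h5 : (Y:ℝ) ^ 37 * 100 ≤ (Y:ℝ) ^ 37 * Y := by gcongr; exact C.big.h100
  have h6 : (Y:ℝ) ^ 38 ≤ (Y:ℝ) ^ 40 := pow_le_pow_right₀ C.Y1 (by norm_num)
  nlinarith [pow_pos hY 37]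

lemma valley_g (C : Ctx ω c0 T0 l Y f b W χ) {α : ℝ} (hα : α = ω ∨ α = -ω) {y : ℝ}
    (hy : near (1 / (Y:ℝ) ^ 10) y) {j : ℕ} (hj1 : Y ^ 9 ≤ j) (hj2 : j ≤ Y ^ 9 + 1) :
    gf ω f b χ (Y ^ 22) (y + j * α) ≤ 2 * (Y:ℝ) ^ 22 * (1/2) ^ (Y ^ 8) := by
  have hY := C.Y0
  have hYn := C.Ynat
  have hz : ∀ i : ℕ, 1 ≤ i → i ≤ 2 * j → χ (y + i * α) = 0 := by
    intro i h1 h2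
    refine C.ch.zero _ ((C.dioα hα).no_near h1 hy ?_)
    have h3 : (i:ℝ) ≤ 2 * ((Y:ℝ) ^ 9 + 1) := by
      have : i ≤ 2 * (Y ^ 9 + 1) := by omega
      exact_mod_cast this
    have h4 := C.big.hc
    rw [div_le_iff₀ C.c0pos] at h4
    have h5 : (1:ℝ) / (Y:ℝ) ^ 10 + 2 / (Y:ℝ) ^ 10 = 3 / (Y:ℝ) ^ 10 := by ring
    rw [h5, div_mul_eq_mul_div, div_lt_iff₀ (by positivity)]
    have h6 : (1:ℝ) < (Y:ℝ) ^ 9 := one_lt_pow₀ (by linarith [C.big.h100]) (by norm_num)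
    have h7 : c0 * (Y:ℝ) ^ 10 = Y * c0 * (Y:ℝ) ^ 9 := by ring
    rw [h7]
    nlinarith
  have hj0 : 1 ≤ j := le_trans (Nat.one_le_pow _ _ (by omega)) hj1
  have key : ∀ β, β = α ∨ β = -α → Pf f b χ (Y ^ 22) β (y + j * α) ≤ (Y:ℝ) ^ 22 * (1/2) ^ (Y ^ 8) := by
    intro β hβ
    have hβω : β = ω ∨ β = -ω := by
      rcases hα with rfl | rfl <;> rcases hβ with rfl | rfl <;> simp
    have h := Pf_decay (n := Y ^ 22) C.fpos C.st.bpos.le C.ch.nn C.ch.le1 (C.st.dbl β hβω) (y + j * α) j ?_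
    · refine h.trans ?_
      push_cast
      gcongr _ * ?_
      refine pow_le_pow_of_le_one (by norm_num) (by norm_num) ?_
      rw [Nat.le_div_iff_mul_le C.st.W1]
      refine le_trans ?_ hj1
      calc Y ^ 8 * W ≤ Y ^ 8 * Y := Nat.mul_le_mul_left _ C.st.WY
        _ = _ := by ring
    · intro k hk1 hk2
      rcases hβ with rfl | rfl
      · have := hz (j + k) (by omega) (by omega)
        push_cast at this
        rw [← this]; congr 1; ring
      · have := hz (j - k) (by omega) (by omega)
        rw [Nat.cast_sub hk2.le] at this
        rw [← this]; congr 1; ring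
  have h0 := hz j hj0 (by omega)
  rw [gf, h0]
  have k1 := key ω (by rcases hα with rfl | rfl <;> simp)
  have k2 := key (-ω) (by rcases hα with rfl | rfl <;> simp)
  linarith

lemma level (C : Ctx ω c0 T0 l Y f b W χ) : Level ω l Y (nf ω f b χ Y) := by
  have hY := C.Y0
  have hY1 := C.Y1
  have h100 := C.big.h100
  have p37 : (Y:ℝ) ^ 23 * 100 ≤ (Y:ℝ) ^ 40 := by
    calc (Y:ℝ) ^ 23 * 100 ≤ (Y:ℝ) ^ 23 * Y := by gcongr
      _ = (Y:ℝ) ^ 24 := by ring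
      _ ≤ _ := pow_le_pow_right₀ hY1 (by norm_num)
  have p1 : (Y:ℝ) ≤ (Y:ℝ) ^ 23 := le_self_pow₀ hY1 (by norm_num)
  refine ⟨?_, C.nf_dom, ?_, ?_, ?_, ?_⟩
  · intro x
    rw [nf, nf, C.st.per, gf_per C.st.per C.ch.per]
  · intro x
    calc exp (-(Y:ℝ) ^ 40) ≤ exp (-Y + -(Y:ℝ) ^ 23) := by
          refine exp_le_exp.mpr ?_
          linarith [pow_pos hY 23]
      _ = exp (-Y) * exp (-(Y:ℝ) ^ 23) := by rw [exp_add]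
      _ ≤ _ := by
        have := C.st.lo x
        have := C.g_lo x
        have := (C.fpos x).le
        rw [nf]; gcongr
  · intro x
    calc nf ω f b χ Y x ≤ Y * (2 * (Y:ℝ) ^ 22 + 1) := by
          have := C.st.hi x
          have := C.g_hi x
          have := (C.g_pos x).le
          rw [nf]; gcongr
      _ = 2 * (Y:ℝ) ^ 23 + Y := by ring
      _ ≤ _ := by linarith [pow_pos hY 23]
  · intro y hy
    have hn : near (2 / (Y:ℝ) ^ 10) y := hy.mono (by gcongr; norm_num)
    have h1 := C.st.core y hn
    have h2 := gf_ge_chi (ω := ω) (n := Y ^ 22) C.fpos C.st.bpos.le C.ch.nn y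
    rw [C.ch.one y hy] at h2
    rw [nf]
    nlinarith
  · intro α hα y hy
    refine ⟨Y ^ 9, Nat.pow_le_pow_right (by linarith [C.Ynat]) (by norm_num), ?_⟩
    have k1 := C.valley_g hα hy (j := Y ^ 9) le_rfl (by omega)
    have k2 := C.valley_g hα hy (j := Y ^ 9 + 1) (by omega) le_rfl
    have e : y + (((Y ^ 9 : ℕ):ℝ) + 1) * α = y + ((Y ^ 9 + 1 : ℕ):ℝ) * α := by push_cast; ring
    rw [e, nf, nf]
    have hp := C.poly' (k := 46) (by norm_num)
    have q1 := C.st.hi (y + ((Y ^ 9 : ℕ):ℝ) * α)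
    have q2 := C.st.hi (y + ((Y ^ 9 + 1 : ℕ):ℝ) * α)
    have q3 := C.fpos (y + ((Y ^ 9 : ℕ):ℝ) * α)
    have q4 := C.fpos (y + ((Y ^ 9 + 1 : ℕ):ℝ) * α)
    have q5 := C.g_pos (y + ((Y ^ 9 : ℕ):ℝ) * α)
    have q6 := C.g_pos (y + ((Y ^ 9 + 1 : ℕ):ℝ) * α)
    have hh := half_pow_le (Y ^ 8)
    push_cast at hh
    calc _ ≤ (Y * (2 * (Y:ℝ) ^ 22 * (1/2) ^ (Y ^ 8))) * (Y * (2 * (Y:ℝ) ^ 22 * (1/2) ^ (Y ^ 8))) := by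
          gcongr
      _ = 4 * (Y:ℝ) ^ 46 * (1/2) ^ (2 * Y ^ 8) := by rw [two_mul (Y ^ 8), pow_add]; ring
      _ ≤ exp Y * exp (-(Y:ℝ) ^ 8) := by
          gcongr
          linarith [pow_pos hY 46]
      _ = exp (Y + -(Y:ℝ) ^ 8) := by rw [exp_add]
      _ ≤ _ := by
          refine exp_le_exp.mpr ?_
          have p2 : (Y:ℝ) ≤ (Y:ℝ) ^ 7 := le_self_pow₀ hY1 (by norm_num)
          have p3 : (Y:ℝ) ^ 7 * 100 ≤ (Y:ℝ) ^ 7 * Y := by gcongr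
          nlinarith [pow_pos hY 7]

lemma step_eq (C : Ctx ω c0 T0 l Y f b W χ) (x : ℝ) :
    pot ω (nf ω f b χ Y) x = pot ω f x + corr ω f b χ (Y ^ 22) x := by
  have := step_identity (n := Y ^ 22) C.fpos C.st.bpos.le (Nat.one_le_pow _ _ (by linarith [C.Ynat])) C.g_pos x
  rw [corr]
  have e : nf ω f b χ Y = fun y => f y * gf ω f b χ (Y ^ 22) y := rfl
  rw [e, this]
  ring

lemma pot_off (C : Ctx ω c0 T0 l Y f b W χ) (x : ℝ) (hx : ¬ near (2 / (Y:ℝ) ^ 10) x) :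
    pot ω f x + b ≤ pot ω (nf ω f b χ Y) x := by
  rw [C.step_eq, corr, C.ch.zero x hx]
  have h1 := ef_nonneg (n := Y ^ 22) C.fpos C.st.bpos.le C.ch.nn ω x
  have h2 := ef_nonneg (n := Y ^ 22) C.fpos C.st.bpos.le C.ch.nn (-ω) x
  have h3 := C.fpos x
  have h4 := C.g_pos x
  have : 0 ≤ (ef f b χ (Y ^ 22) ω x + ef f b χ (Y ^ 22) (-ω) x) / (f x ^ 2 * gf ω f b χ (Y ^ 22) x) := by positivity
  simp only [zero_mul, zero_div]
  linarith

lemma pot_all (C : Ctx ω c0 T0 l Y f b W χ) (x : ℝ) :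
    pot ω f x + b ≤ pot ω (nf ω f b χ Y) x + (Y:ℝ) ^ 3 := by
  have hY := C.Y0
  by_cases hx : near (2 / (Y:ℝ) ^ 10) x
  · rw [C.step_eq, corr]
    have h1 := ef_nonneg (n := Y ^ 22) C.fpos C.st.bpos.le C.ch.nn ω x
    have h2 := ef_nonneg (n := Y ^ 22) C.fpos C.st.bpos.le C.ch.nn (-ω) x
    have h3 := C.fpos x
    have h4 := C.g_pos x
    have h5 : 0 ≤ (ef f b χ (Y ^ 22) ω x + ef f b χ (Y ^ 22) (-ω) x) / (f x ^ 2 * gf ω f b χ (Y ^ 22) x) := by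
      positivity
    have hn : 1 ≤ Y ^ 22 := Nat.one_le_pow _ _ (by linarith [C.Ynat])
    have j1 := jf_le C.fpos C.st.hi C.st.bpos.le hn ω x
    have j2 := jf_le C.fpos C.st.hi C.st.bpos.le hn (-ω) x
    have hf1 := C.st.core x hx
    have hχ := gf_ge_chi (ω := ω) (n := Y ^ 22) C.fpos C.st.bpos.le C.ch.nn x
    have hb := C.st.ble
    have hfi := C.st.hi x
    have hcn := C.ch.nn x
    have h6 : χ x * (b * f x ^ 2 + jf f b (Y ^ 22) ω x + jf f b (Y ^ 22) (-ω) x) / (f x ^ 2 * gf ω f b χ (Y ^ 22) x)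
        ≤ Y ^ 3 := by
      rw [div_le_iff₀ (by positivity)]
      have hf2 : 1 ≤ f x ^ 2 := one_le_pow₀ hf1
      have h7 : b * f x ^ 2 + jf f b (Y ^ 22) ω x + jf f b (Y ^ 22) (-ω) x ≤ Y ^ 3 * f x ^ 2 := by
        have h8 : b * f x ^ 2 ≤ Y * f x ^ 2 := by gcongr
        have h9 : (Y:ℝ) ^ 2 * 1 ≤ (Y:ℝ) ^ 2 * f x ^ 2 := by gcongr
        have h10 : (Y:ℝ) + 2 * (Y:ℝ) ^ 2 ≤ (Y:ℝ) ^ 3 := by nlinarith [C.big.h100]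
        have h11 := mul_le_mul_of_nonneg_right h10 (sq_nonneg (f x))
        linarith
      have hj1 := jf_nonneg (n := Y ^ 22) C.fpos C.st.bpos.le ω x
      have hj2 := jf_nonneg (n := Y ^ 22) C.fpos C.st.bpos.le (-ω) x
      have hbp := C.st.bpos.le
      calc _ ≤ gf ω f b χ (Y ^ 22) x * (Y ^ 3 * f x ^ 2) := by
            gcongr
        _ = _ := by ring
    linarith
  · have := C.pot_off x hx
    have : 0 < (Y:ℝ) ^ 3 := by positivity
    linarith

end Ctx


namespace Ctx
variable {ω c0 T0 : ℝ} {l Y : ℕ} {f : ℝ → ℝ} {b : ℝ} {W : ℕ} {χ : ℝ → ℝ}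

lemma n1 (C : Ctx ω c0 T0 l Y f b W χ) : 1 ≤ Y ^ 22 := Nat.one_le_pow _ _ (by linarith [C.Ynat])

lemma inv_f2 (C : Ctx ω c0 T0 l Y f b W χ) (x : ℝ) : 1 ≤ f x ^ 2 * exp (2 * Y) := by
  have h := C.st.lo x
  have e : exp (2 * (Y:ℝ)) = exp Y ^ 2 := by rw [← exp_nat_mul]; norm_num
  rw [e, ← mul_pow]
  refine one_le_pow₀ ?_
  calc (1:ℝ) = exp (-Y) * exp Y := by rw [← exp_add]; simp
    _ ≤ _ := by gcongr

lemma eta_pos (Y : ℕ) : (0:ℝ) < (1/2) ^ (2 * Y ^ 24) := by positivity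

lemma eta_g' (C : Ctx ω c0 T0 l Y f b W χ) (x : ℝ) : (1/2:ℝ) ^ (2 * Y ^ 24) ≤ gf ω f b χ (Y ^ 22) x := by
  refine le_trans ?_ (C.eta_g x)
  have := eta_pos Y
  have h : (0:ℝ) ≤ ((Y ^ 22 : ℕ):ℝ) := by positivity
  nlinarith

lemma T2 (C : Ctx ω c0 T0 l Y f b W χ)
    (hv : ∀ α, α = ω ∨ α = -ω → ∀ y, near (2 / (Y:ℝ) ^ 10) y →
      ∃ m : ℕ, m ≤ Y ∧ f (y + m * α) * f (y + (m + 1) * α) ≤ b) (x : ℝ) :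
    2 ^ l * (χ x + (1/2) ^ (2 * Y ^ 24)) * (b * f x ^ 2 + jf f b (Y ^ 22) ω x + jf f b (Y ^ 22) (-ω) x)
      / (f x ^ 2 * gf ω f b χ (Y ^ 22) x) ≤ 10 * 2 ^ l * (Y:ℝ) ^ 3 * b + exp (-Y) := by
  have hY := C.Y0
  have hY1 := C.Y1
  have h100 := C.big.h100
  have hf := C.fpos x
  have hg := C.g_pos x
  have hb := C.st.bpos
  have hη := eta_pos Y
  have hj1 := jf_nonneg (n := Y ^ 22) C.fpos C.st.bpos.le ω x
  have hj2 := jf_nonneg (n := Y ^ 22) C.fpos C.st.bpos.le (-ω) x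
  rw [div_le_iff₀ (by positivity)]
  by_cases hx : near (2 / (Y:ℝ) ^ 10) x
  · have hYn : Y < Y ^ 22 := by
      calc Y = Y ^ 1 := (pow_one Y).symm
        _ < Y ^ 22 := Nat.pow_lt_pow_right (by linarith [C.Ynat]) (by norm_num)
    have key : ∀ α, α = ω ∨ α = -ω → jf f b (Y ^ 22) α x ≤ b + (Y:ℝ) ^ 3 * b := by
      intro α hα
      obtain ⟨m, hm, hmv⟩ := hv (-α) (by rcases hα with rfl | rfl <;> simp) x hx
      have := jf_valley (n := Y ^ 22) C.fpos C.st.hi hb.le α x (m := m) (by omega) hmv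
      refine this.trans ?_
      have hm' : (m:ℝ) ≤ Y := by exact_mod_cast hm
      have : (m:ℝ) * (b * (Y:ℝ) ^ 2) ≤ Y * (b * (Y:ℝ) ^ 2) := by gcongr
      nlinarith
    have k1 := key ω (Or.inl rfl)
    have k2 := key (-ω) (Or.inr rfl)
    have hf1 := one_le_pow₀ (n := 2) (C.st.core x hx)
    have hχ := gf_ge_chi (ω := ω) (n := Y ^ 22) C.fpos C.st.bpos.le C.ch.nn x
    have hηg := C.eta_g' x
    have hcn := C.ch.nn x
    have h3 : (1:ℝ) ≤ (Y:ℝ) ^ 3 := one_le_pow₀ hY1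
    have h4 : b * f x ^ 2 + jf f b (Y ^ 22) ω x + jf f b (Y ^ 22) (-ω) x ≤ 5 * (Y:ℝ) ^ 3 * b * f x ^ 2 := by
      have a1 : b ≤ b * (Y:ℝ) ^ 3 := by nlinarith
      have a2 : b * f x ^ 2 ≤ b * (Y:ℝ) ^ 3 * f x ^ 2 := by gcongr
      have a3 : b * (Y:ℝ) ^ 3 ≤ b * (Y:ℝ) ^ 3 * f x ^ 2 := by
        have : 0 < b * (Y:ℝ) ^ 3 := by positivity
        nlinarith
      linarith
    calc _ ≤ 2 ^ l * (2 * gf ω f b χ (Y ^ 22) x) * (5 * (Y:ℝ) ^ 3 * b * f x ^ 2) := by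
          gcongr
          linarith
      _ = (10 * 2 ^ l * (Y:ℝ) ^ 3 * b + 0) * (f x ^ 2 * gf ω f b χ (Y ^ 22) x) := by ring
      _ ≤ _ := by gcongr; positivity
  · rw [C.ch.zero x hx, zero_add]
    have j1 := jf_le C.fpos C.st.hi C.st.bpos.le C.n1 ω x
    have j2 := jf_le C.fpos C.st.hi C.st.bpos.le C.n1 (-ω) x
    have h4 : b * f x ^ 2 + jf f b (Y ^ 22) ω x + jf f b (Y ^ 22) (-ω) x ≤ 3 * (Y:ℝ) ^ 3 := by
      have a1 : b * f x ^ 2 ≤ Y * (Y:ℝ) ^ 2 := by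
        have := C.st.ble
        have := C.st.hi x
        gcongr
      have : (Y:ℝ) ^ 2 * 1 ≤ (Y:ℝ) ^ 2 * Y := by gcongr
      nlinarith
    have hp := C.poly (k := 3) (by norm_num)
    have hη2 := C.eta_le
    have hglo := C.g_lo x
    have hff := C.inv_f2 x
    calc _ ≤ 2 ^ l * exp (-(Y:ℝ) ^ 24) * (3 * (Y:ℝ) ^ 3) := by gcongr
      _ = (3 * 2 ^ l * (Y:ℝ) ^ 3) * exp (-(Y:ℝ) ^ 24) := by ring
      _ ≤ exp Y * exp (-(Y:ℝ) ^ 24) := by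
          gcongr
          have : 0 < 2 ^ l * (Y:ℝ) ^ 3 := by positivity
          nlinarith
      _ ≤ exp (-Y + (-(2 * Y)) + (-(Y:ℝ) ^ 23)) := by
          rw [← exp_add]
          refine exp_le_exp.mpr ?_
          have p1 : (Y:ℝ) ≤ (Y:ℝ) ^ 23 := le_self_pow₀ hY1 (by norm_num)
          have p2 : (Y:ℝ) ^ 23 * 100 ≤ (Y:ℝ) ^ 23 * Y := by gcongr
          nlinarith
      _ = exp (-Y) * (exp (-(2 * Y)) * exp (-(Y:ℝ) ^ 23)) := by rw [exp_add, exp_add, mul_assoc]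
      _ ≤ exp (-Y) * (f x ^ 2 * gf ω f b χ (Y ^ 22) x) := by
          gcongr
          rw [exp_neg, inv_le_iff_one_le_mul₀ (exp_pos _)]
          exact hff
      _ ≤ _ := by
          gcongr
          have : 0 ≤ 10 * 2 ^ l * (Y:ℝ) ^ 3 * b := by positivity
          linarith

lemma T3 (C : Ctx ω c0 T0 l Y f b W χ) {α : ℝ} (hα : α = ω ∨ α = -ω) (x t : ℝ) :
    2 ^ l * (χ t + (1/2) ^ (2 * Y ^ 24)) / Gf f b α (Y ^ 22) x ≤
      exp (-Y) * (f x ^ 2 * gf ω f b χ (Y ^ 22) x) := by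
  have hY := C.Y0
  have hY1 := C.Y1
  have h100 := C.big.h100
  have hf := C.fpos x
  have hg := C.g_pos x
  have hb := C.st.bpos
  have hη : (1/2:ℝ) ^ (2 * Y ^ 24) ≤ 1 := pow_le_one₀ (by norm_num) (by norm_num)
  have hχ := C.ch.le1 t
  obtain ⟨m, h1, h2, h3⟩ := C.g_hit hα x
  have hGn := Gf_pos C.fpos hb.le α C.n1 x
  have hGm := Gf_pos C.fpos hb.le α h1 x
  have hYn := C.Ynat
  have h22 : Y ^ 21 * 100 ≤ Y ^ 22 := by
    calc Y ^ 21 * 100 ≤ Y ^ 21 * Y := Nat.mul_le_mul_left _ hYn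
      _ = _ := by ring
  have h21 : Y ^ 3 ≤ Y ^ 21 := Nat.pow_le_pow_right (by omega) (by norm_num)
  have hd := Gf_decay C.fpos hb.le (C.st.dbl α hα) m (Y ^ 22 - m) x
  rw [Nat.add_sub_cancel' (by omega)] at hd
  have hk : 2 * Y ^ 2 ≤ (Y ^ 22 - m) / W := by
    rw [Nat.le_div_iff_mul_le C.st.W1]
    have : 2 * Y ^ 2 * W ≤ 2 * Y ^ 2 * Y := Nat.mul_le_mul_left _ C.st.WY
    have e : 2 * Y ^ 2 * Y = 2 * Y ^ 3 := by ring
    omega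
  have hp2 : (2:ℝ) ^ (2 * Y ^ 2) * Gf f b α m x ≤ Gf f b α (Y ^ 22) x := by
    refine le_trans ?_ hd
    gcongr
    norm_num
  have hee : exp ((Y:ℝ) ^ 2) ≤ (2:ℝ) ^ (2 * Y ^ 2) := by
    have := half_pow_le (Y ^ 2)
    rw [exp_neg, one_div, inv_pow, inv_le_inv₀ (by positivity) (exp_pos _)] at this
    push_cast at this
    exact this
  have hff := C.inv_f2 x
  have hp := C.poly (k := 3) (by norm_num)
  rw [div_le_iff₀ hGn]
  have hE : exp Y * exp (2 * Y) ≤ exp (-Y) * exp ((Y:ℝ) ^ 2) := by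
    rw [← exp_add, ← exp_add]
    refine exp_le_exp.mpr ?_
    nlinarith
  have hl0 : (0:ℝ) < 2 ^ l := by positivity
  calc 2 ^ l * (χ t + (1/2) ^ (2 * Y ^ 24)) ≤ 2 ^ l * 2 * 1 * 1 := by
        rw [mul_one, mul_one]; gcongr; linarith
    _ ≤ 2 ^ l * 2 * (gf ω f b χ (Y ^ 22) x * (3 * (Y:ℝ) ^ 3 * Gf f b α m x)) * (f x ^ 2 * exp (2 * Y)) := by
        gcongr
    _ = (6 * 2 ^ l * (Y:ℝ) ^ 3) * exp (2 * Y) * Gf f b α m x * (f x ^ 2 * gf ω f b χ (Y ^ 22) x) := by ring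
    _ ≤ exp Y * exp (2 * Y) * Gf f b α m x * (f x ^ 2 * gf ω f b χ (Y ^ 22) x) := by
        gcongr
        have : 0 < 2 ^ l * (Y:ℝ) ^ 3 := by positivity
        nlinarith
    _ ≤ exp (-Y) * exp ((Y:ℝ) ^ 2) * Gf f b α m x * (f x ^ 2 * gf ω f b χ (Y ^ 22) x) := by gcongr
    _ ≤ exp (-Y) * (2:ℝ) ^ (2 * Y ^ 2) * Gf f b α m x * (f x ^ 2 * gf ω f b χ (Y ^ 22) x) := by gcongr
    _ = exp (-Y) * ((2:ℝ) ^ (2 * Y ^ 2) * Gf f b α m x) * (f x ^ 2 * gf ω f b χ (Y ^ 22) x) := by ring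
    _ ≤ exp (-Y) * Gf f b α (Y ^ 22) x * (f x ^ 2 * gf ω f b χ (Y ^ 22) x) := by gcongr
    _ = _ := by ring

lemma corr_bound (C : Ctx ω c0 T0 l Y f b W χ)
    (hv : ∀ α, α = ω ∨ α = -ω → ∀ y, near (2 / (Y:ℝ) ^ 10) y →
      ∃ m : ℕ, m ≤ Y ∧ f (y + m * α) * f (y + (m + 1) * α) ≤ b) :
    ContDiff ℝ l (corr ω f b χ (Y ^ 22)) ∧ ∀ x, ∀ j ≤ l,
    |iteratedDeriv j (corr ω f b χ (Y ^ 22)) x| ≤ (Y:ℝ) ^ (40 * l + 5) * (b + exp (-Y)) := by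
  have hY := C.Y0
  have hY1 := C.Y1
  have h100 := C.big.h100
  have hb := C.st.bpos
  have hD := corr_Dom (ω := ω) (n := Y ^ 22) hY.le C.st.dom C.fpos C.st.bpos.le (eta_pos Y).le (by positivity)
    C.n1 C.ch.dom C.g_pos C.eta_g
  refine ⟨hD.1, fun x j hj => (hD.2 x j hj).trans ?_⟩
  have hM0 : 0 ≤ Mcor l (Y ^ 22) Y (3 * (Y:ℝ) ^ 35) := by
    have := Mten_nn Y (Y ^ 22) l
    rw [Mcor]
    positivity
  have hMj : Mcor l (Y ^ 22) Y (3 * (Y:ℝ) ^ 35) ^ j ≤ (Y:ℝ) ^ (40 * l) := by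
    calc _ ≤ ((Y:ℝ) ^ 40) ^ j := by gcongr; exact C.Mcor_le
      _ = (Y:ℝ) ^ (40 * j) := by rw [pow_mul]
      _ ≤ _ := pow_le_pow_right₀ hY1 (by omega)
  have hf := C.fpos x
  have hg := C.g_pos x
  have t2 := C.T2 hv x
  have t3 := C.T3 (Or.inl rfl) x (x + ((Y ^ 22 : ℕ):ℝ) * ω)
  have t4 := C.T3 (Or.inr rfl) x (x + ((Y ^ 22 : ℕ):ℝ) * (-ω))
  have t5 := div_le_of_le_mul₀ (by positivity) (by positivity : (0:ℝ) ≤ 2 * exp (-Y))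
    ((add_le_add t3 t4).trans (le_of_eq (by ring : _ = 2 * exp (-(Y:ℝ)) * (f x ^ 2 * gf ω f b χ (Y ^ 22) x))))
  have hH : b + (10 * 2 ^ l * (Y:ℝ) ^ 3 * b + exp (-Y)) + 2 * exp (-Y) ≤ (Y:ℝ) ^ 5 * (b + exp (-Y)) := by
    have hl := C.big.hl
    have e32 : (2:ℝ) ^ (l+5) = 2 ^ l * 32 := by ring
    have q1 : 10 * 2 ^ l * (Y:ℝ) ^ 3 * b ≤ Y * (Y:ℝ) ^ 3 * b := by
      gcongr
      have : (0:ℝ) < 2 ^ l := by positivity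
      linarith
    have q2 : (1:ℝ) ≤ (Y:ℝ) ^ 4 := one_le_pow₀ hY1
    have q3 : (Y:ℝ) ^ 4 * 100 ≤ (Y:ℝ) ^ 4 * Y := by gcongr
    have q4 : b * 1 ≤ b * (Y:ℝ) ^ 4 := by gcongr
    have q5 : 3 ≤ (Y:ℝ) ^ 5 := by nlinarith
    have q6 : 2 * (Y:ℝ) ^ 4 ≤ (Y:ℝ) ^ 5 := by nlinarith
    have q7 := mul_le_mul_of_nonneg_right q5 (exp_pos (-(Y:ℝ))).le
    have q8 := mul_le_mul_of_nonneg_right q6 hb.le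
    nlinarith
  calc _ ≤ (Y:ℝ) ^ (40 * l) * ((Y:ℝ) ^ 5 * (b + exp (-Y))) := by
        refine mul_le_mul hMj ?_ ?_ (by positivity)
        · linarith
        · have hj1 := jf_nonneg (n := Y ^ 22) C.fpos C.st.bpos.le ω x
          have hj2 := jf_nonneg (n := Y ^ 22) C.fpos C.st.bpos.le (-ω) x
          have g1 := Gf_pos C.fpos hb.le ω C.n1 x
          have g2 := Gf_pos C.fpos hb.le (-ω) C.n1 x
          have c1 := C.ch.nn x
          have c2 := C.ch.nn (x + ((Y ^ 22 : ℕ):ℝ) * ω)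
          have c3 := C.ch.nn (x + ((Y ^ 22 : ℕ):ℝ) * (-ω))
          positivity
    _ = _ := by rw [pow_add]; ring

end Ctx


/-- Solutions of the difference equation with potential `V`, initial vector `(a, c)`. -/
noncomputable def pq (ω : ℝ) (V : ℝ → ℝ) (x a c : ℝ) : ℕ → ℝ × ℝ
  | 0 => (a, c)
  | i + 1 => (V (x + i * ω) * (pq ω V x a c i).1 - (pq ω V x a c i).2, (pq ω V x a c i).1)

section
variable {ω : ℝ} {f : ℝ → ℝ}

/-- Wronskian with the ground state -/
noncomputable def wr (ω : ℝ) (f V : ℝ → ℝ) (x a c : ℝ) (i : ℕ) : ℝ :=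
  f (x + i * ω - ω) * (pq ω V x a c i).1 - f (x + i * ω) * (pq ω V x a c i).2

lemma wr_succ (hf : ∀ x, 0 < f x) (V : ℝ → ℝ) (x a c : ℝ) (i : ℕ) :
    wr ω f V x a c (i+1) = (V (x + i * ω) - pot ω f (x + i * ω)) * f (x + i * ω) * (pq ω V x a c i).1
      + wr ω f V x a c i := by
  have h1 : x + ((i+1:ℕ):ℝ) * ω - ω = x + i * ω := by push_cast; ring
  have h2 : x + ((i+1:ℕ):ℝ) * ω = x + i * ω + ω := by push_cast; ring
  have h3 : pot ω f (x + i * ω) * f (x + i * ω) = f (x + i * ω + ω) + f (x + i * ω - ω) := by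
    rw [pot, div_mul_cancel₀ _ (hf _).ne']
  rw [wr, wr, h1, h2, pq]
  simp only
  linear_combination ((pq ω V x a c i).1) * h3

lemma pq_succ_fst (V : ℝ → ℝ) (x a c : ℝ) (i : ℕ) :
    f (x + i * ω) * (pq ω V x a c (i+1)).1 = wr ω f V x a c (i+1) + f (x + i * ω + ω) * (pq ω V x a c i).1 := by
  have h1 : x + ((i+1:ℕ):ℝ) * ω - ω = x + i * ω := by push_cast; ring
  have h2 : x + ((i+1:ℕ):ℝ) * ω = x + i * ω + ω := by push_cast; ring
  rw [wr, h1, h2]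
  have : (pq ω V x a c (i+1)).2 = (pq ω V x a c i).1 := rfl
  rw [this]; ring

lemma compare (hf : ∀ x, 0 < f x) {b : ℝ} (hb : 0 ≤ b) {W : ℝ → ℝ} {K : ℝ → ℝ} (hK : ∀ x, 1 ≤ K x)
    (hWK : ∀ x, W x - pot ω f x ≤ K x * b) (x : ℝ) (hp : ∀ i, 0 ≤ (pq ω W x 1 0 i).1) (n : ℕ) :
    0 ≤ (pq ω (fun y => pot ω f y + b) x 1 0 n).1 ∧ 0 ≤ wr ω f (fun y => pot ω f y + b) x 1 0 n ∧
    (pq ω W x 1 0 n).1 ≤ (∏ i ∈ Finset.range n, K (x + i * ω)) * (pq ω (fun y => pot ω f y + b) x 1 0 n).1 ∧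
    wr ω f W x 1 0 n ≤ (∏ i ∈ Finset.range n, K (x + i * ω)) * wr ω f (fun y => pot ω f y + b) x 1 0 n := by
  set V' : ℝ → ℝ := fun y => pot ω f y + b with hV
  induction n with
  | zero =>
    have := (hf (x - ω)).le
    simp [pq, wr, this]
  | succ n ih =>
    obtain ⟨i1, i2, i3, i4⟩ := ih
    have w1 := wr_succ (ω := ω) hf V' x 1 0 n
    have w2 := wr_succ (ω := ω) hf W x 1 0 n
    have q1 := pq_succ_fst (ω := ω) (f := f) V' x 1 0 n
    have q2 := pq_succ_fst (ω := ω) (f := f) W x 1 0 n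
    have e : V' (x + n * ω) - pot ω f (x + n * ω) = b := by rw [hV]; ring
    rw [e] at w1
    rw [Finset.prod_range_succ]
    set Pd := ∏ i ∈ Finset.range n, K (x + i * ω) with hPd
    have hPd1 : 0 ≤ Pd := Finset.prod_nonneg fun i _ => zero_le_one.trans (hK _)
    have f0 := hf (x + n * ω)
    have f1 := hf (x + n * ω + ω)
    have hKn := hK (x + n * ω)
    have hKW := hWK (x + n * ω)
    set k := K (x + n * ω)
    have hw0 : 0 ≤ wr ω f V' x 1 0 (n+1) := by rw [w1]; positivity
    have hp0 : 0 ≤ (pq ω V' x 1 0 (n+1)).1 := by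
      have : 0 ≤ f (x + n * ω) * (pq ω V' x 1 0 (n+1)).1 := by rw [q1]; positivity
      exact nonneg_of_mul_nonneg_right this f0
    have hw : wr ω f W x 1 0 (n+1) ≤ Pd * k * wr ω f V' x 1 0 (n+1) := by
      rw [w1, w2]
      have a1 : (W (x + n * ω) - pot ω f (x + n * ω)) * f (x + n * ω) * (pq ω W x 1 0 n).1 ≤
          (k * b) * f (x + n * ω) * (Pd * (pq ω V' x 1 0 n).1) := by
        have := hp n
        calc _ ≤ (k * b) * f (x + n * ω) * (pq ω W x 1 0 n).1 := by gcongr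
          _ ≤ _ := by gcongr
      have a2 : Pd * wr ω f V' x 1 0 n ≤ Pd * k * wr ω f V' x 1 0 n := by
        have : Pd * 1 ≤ Pd * k := by gcongr
        rw [mul_one] at this
        gcongr
      nlinarith
    refine ⟨hp0, hw0, ?_, hw⟩
    have : f (x + n * ω) * (pq ω W x 1 0 (n+1)).1 ≤ f (x + n * ω) * (Pd * k * (pq ω V' x 1 0 (n+1)).1) := by
      have e2 : f (x + n * ω) * (Pd * k * (pq ω V' x 1 0 (n+1)).1) =
        Pd * k * (f (x + n * ω) * (pq ω V' x 1 0 (n+1)).1) := by ring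
      rw [e2, q1, q2, mul_add]
      refine add_le_add hw ?_
      have a2 : Pd * (pq ω V' x 1 0 n).1 ≤ Pd * k * (pq ω V' x 1 0 n).1 := by
        have : Pd * 1 ≤ Pd * k := by gcongr
        rw [mul_one] at this
        gcongr
      calc _ ≤ f (x + n * ω + ω) * (Pd * k * (pq ω V' x 1 0 n).1) := by
            gcongr; exact i3.trans a2
        _ = _ := by ring
    exact le_of_mul_le_mul_left this f0

/-- At most linear growth for a potential with a ground state. -/
lemma linear_growth (hf : ∀ x, 0 < f x) {m M : ℝ} (hm : 0 < m) (hlo : ∀ x, m ≤ f x) (hhi : ∀ x, f x ≤ M)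
    (x a c : ℝ) (ha : |a| ≤ 1) (hc : |c| ≤ 1) (n : ℕ) :
    |(pq ω (pot ω f) x a c n).1| ≤ M / m + n * (2 * M * M / m ^ 2) := by
  have hM : 0 < M := hm.trans_le ((hlo 0).trans (hhi 0))
  have hw : ∀ n, wr ω f (pot ω f) x a c n = wr ω f (pot ω f) x a c 0 := by
    intro n
    induction n with
    | zero => rfl
    | succ n ih => rw [wr_succ hf, ih]; ring
  have hw0 : |wr ω f (pot ω f) x a c 0| ≤ 2 * M := by
    rw [wr]
    simp only [pq]
    refine (abs_sub _ _).trans ?_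
    rw [abs_mul, abs_mul, abs_of_pos (hf _), abs_of_pos (hf _)]
    have h1 := hhi (x + (0:ℕ) * ω - ω)
    have h2 := hhi (x + (0:ℕ) * ω)
    have h3 : f (x + (0:ℕ) * ω - ω) * |a| ≤ M * 1 := by gcongr
    have h4 : f (x + (0:ℕ) * ω) * |c| ≤ M * 1 := by gcongr
    linarith
  have key : ∀ n : ℕ, |(pq ω (pot ω f) x a c n).1| ≤ f (x + n * ω) * (1 / m + n * (2 * M / m ^ 2)) := by
    intro n
    induction n with
    | zero =>
      simp only [pq, Nat.cast_zero, zero_mul, add_zero]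
      refine ha.trans ?_
      rw [mul_one_div, le_div_iff₀ hm, one_mul]
      exact hlo x
    | succ n ih =>
      have q := pq_succ_fst (ω := ω) (f := f) (pot ω f) x a c n
      rw [hw] at q
      have f0 := hf (x + n * ω)
      have f1 := hf (x + n * ω + ω)
      have e : x + ((n+1:ℕ):ℝ) * ω = x + n * ω + ω := by push_cast; ring
      rw [e]
      have h1 : f (x + n * ω) * |(pq ω (pot ω f) x a c (n+1)).1| ≤ 2 * M + f (x + n * ω + ω) * (f (x + n * ω) * (1 / m + n * (2 * M / m ^ 2))) := by
        rw [← abs_of_pos f0, ← abs_mul, q, abs_of_pos f0]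
        refine (abs_add_le _ _).trans ?_
        rw [abs_mul, abs_of_pos f1]
        gcongr
      have h2 : 2 * M ≤ f (x + n * ω) * f (x + n * ω + ω) * (2 * M / m ^ 2) := by
        have l0 := hlo (x + n * ω)
        have l1 := hlo (x + n * ω + ω)
        calc 2 * M = m * m * (2 * M / m ^ 2) := by field_simp
          _ ≤ _ := by gcongr
      push_cast
      refine le_of_mul_le_mul_left (h1.trans ?_) f0
      nlinarith
  refine (key n).trans ?_
  calc _ ≤ M * (1 / m + n * (2 * M / m ^ 2)) := by gcongr; exact hhi _
    _ = _ := by ring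

end

/-- Uniform exponential growth. -/
def Growth (ω : ℝ) (V : ℝ → ℝ) (κ : ℝ) : Prop :=
  ∃ c > 0, ∀ (n : ℕ) (x : ℝ), c * exp (n * κ) ≤ (pq ω V x 1 0 n).1

lemma Growth.mono {ω : ℝ} {V : ℝ → ℝ} {κ κ' : ℝ} (h : Growth ω V κ) (hk : κ' ≤ κ) : Growth ω V κ' := by
  obtain ⟨c, hc, h⟩ := h
  refine ⟨c, hc, fun n x => le_trans ?_ (h n x)⟩
  gcongr

lemma growth_const (ω κ : ℝ) : Growth ω (fun _ => exp κ + exp (-κ)) κ := by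
  refine ⟨1, one_pos, fun n x => ?_⟩
  have : exp (n * κ) ≤ (pq ω (fun _ => exp κ + exp (-κ)) x 1 0 n).1 ∧
      exp κ * (pq ω (fun _ => exp κ + exp (-κ)) x 1 0 n).2 ≤ (pq ω (fun _ => exp κ + exp (-κ)) x 1 0 n).1 := by
    induction n with
    | zero => simp [pq]
    | succ n ih =>
      obtain ⟨i1, i2⟩ := ih
      simp only [pq]
      set p := (pq ω (fun _ => exp κ + exp (-κ)) x 1 0 n).1
      set q := (pq ω (fun _ => exp κ + exp (-κ)) x 1 0 n).2
      have e : exp (-κ) * (exp κ * q) = q := by rw [← mul_assoc, ← exp_add]; simp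
      have h1 := mul_le_mul_of_nonneg_left i2 (exp_pos (-κ)).le
      rw [e] at h1
      refine ⟨?_, by linarith⟩
      have e2 : exp (((n+1:ℕ):ℝ) * κ) = exp κ * exp (n * κ) := by rw [← exp_add]; congr 1; push_cast; ring
      rw [e2]
      have h2 := mul_le_mul_of_nonneg_left i1 (exp_pos κ).le
      linarith
  rw [one_mul]; exact this.1

lemma card_visits (P : ℕ → Prop) [DecidablePred P] {N : ℕ} (hN : 0 < N) (hP : ∀ i k, 1 ≤ k → k < N → P i → ¬ P (i + k)) (n : ℕ) :
    ((Finset.range n).filter P).card ≤ n / N + 1 := by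
  have := Finset.card_le_card_of_injOn (s := (Finset.range n).filter P) (t := Finset.range (n / N + 1)) (fun i => i / N) (by
      intro i hi
      simp only [Finset.coe_filter, Finset.mem_range, Set.mem_ofPred_eq, Finset.coe_range, Set.mem_Iio] at hi ⊢
      have := Nat.div_le_div_right (c := N) hi.1.le
      omega) (by
      intro i hi j hj h
      simp only [Finset.coe_filter, Finset.mem_range, Set.mem_ofPred_eq] at hi hj h
      by_contra hne
      have h1 := Nat.div_add_mod i N
      have h2 := Nat.div_add_mod j N
      have h3 := Nat.mod_lt i hN
      have h4 := Nat.mod_lt j hN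
      rw [h] at h1
      rcases lt_or_gt_of_ne hne with hlt | hlt
      · have := hP i (j - i) (by omega) (by omega) hi.2
        rw [Nat.add_sub_cancel' hlt.le] at this
        exact this hj.2
      · have := hP j (i - j) (by omega) (by omega) hj.2
        rw [Nat.add_sub_cancel' hlt.le] at this
        exact this hi.2)
  simpa using this

namespace Ctx
variable {ω c0 T0 : ℝ} {l Y : ℕ} {f : ℝ → ℝ} {b : ℝ} {W : ℕ} {χ : ℝ → ℝ}

open Classical in
lemma growth (C : Ctx ω c0 T0 l Y f b W χ) {κ : ℝ} (hG : Growth ω (fun y => pot ω f y + b) κ) :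
    Growth ω (fun y => pot ω (nf ω f b χ Y) y + exp (-(Y:ℝ) ^ 7)) (κ - 2 / (Y:ℝ) ^ 2) := by
  obtain ⟨c, hc, hG⟩ := hG
  have hY := C.Y0
  have hY1 := C.Y1
  have h100 := C.big.h100
  refine ⟨c * exp (-(2 * (Y:ℝ) ^ 7)), by positivity, fun n x => ?_⟩
  set b' := exp (-(Y:ℝ) ^ 7) with hb'
  have hb'0 : 0 < b' := exp_pos _
  set Km : ℝ := exp (2 * (Y:ℝ) ^ 7) with hKm
  have hKm1 : 1 ≤ Km := one_le_exp (by positivity)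
  have hKb : (Y:ℝ) ^ 3 ≤ Km * b' := by
    rw [hKm, hb', ← exp_add]
    have e : 2 * (Y:ℝ) ^ 7 + -(Y:ℝ) ^ 7 = (Y:ℝ) ^ 7 := by ring
    rw [e]
    have h1 := C.poly' (k := 3) (by norm_num)
    have h2 : exp (Y:ℝ) ≤ exp ((Y:ℝ) ^ 7) := exp_le_exp.mpr (le_self_pow₀ hY1 (by norm_num))
    linarith [pow_pos hY 3]
  let K : ℝ → ℝ := fun y => if near (2 / (Y:ℝ) ^ 10) y then Km else 1
  have hK1 : ∀ y, 1 ≤ K y := by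
    intro y; simp only [K]; split_ifs
    · exact hKm1
    · exact le_rfl
  have hfp : ∀ y, 0 < nf ω f b χ Y y := fun y => (exp_pos _).trans_le (C.level.lo y)
  have hcmp := compare (ω := ω) hfp hb'0.le (W := fun y => pot ω f y + b) hK1 (by
    intro y
    simp only [K]
    split_ifs with h
    · linarith [C.pot_all y]
    · linarith [C.pot_off y h]) x (fun i => le_trans (by positivity) (hG i x)) n
  obtain ⟨h0, -, hcmp, -⟩ := hcmp
  have hprod : (∏ i ∈ Finset.range n, K (x + i * ω)) ≤ exp (n * (2 / (Y:ℝ) ^ 2)) * exp (2 * (Y:ℝ) ^ 7) := by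
    have hcard := card_visits (fun i : ℕ => near (2 / (Y:ℝ) ^ 10) (x + i * ω)) (N := Y ^ 9) (Nat.pow_pos (by linarith [C.Ynat])) (by
      intro i k hk hkN hi
      have := C.dio.no_near hk hi (r2 := 2 / (Y:ℝ) ^ 10) (by
        have h4 := C.big.hc
        rw [div_le_iff₀ C.c0pos] at h4
        have h5 : (2:ℝ) / (Y:ℝ) ^ 10 + 2 / (Y:ℝ) ^ 10 = 4 / (Y:ℝ) ^ 10 := by ring
        rw [h5, div_mul_eq_mul_div, div_lt_iff₀ (by positivity)]
        have h6 : (k:ℝ) < (Y:ℝ) ^ 9 := by exact_mod_cast hkN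
        have h7 : c0 * (Y:ℝ) ^ 10 = Y * c0 * (Y:ℝ) ^ 9 := by ring
        rw [h7]
        nlinarith [pow_pos hY 9])
      have e : x + ((i + k : ℕ):ℝ) * ω = x + i * ω + k * ω := by push_cast; ring
      rw [e]; exact this) n
    have e1 : (∏ i ∈ Finset.range n, K (x + i * ω)) =
        Km ^ ((Finset.range n).filter (fun i : ℕ => near (2 / (Y:ℝ) ^ 10) (x + i * ω))).card := by
      simp only [K]
      rw [Finset.prod_ite]
      simp
    rw [e1]
    calc _ ≤ Km ^ (n / Y ^ 9 + 1) := pow_le_pow_right₀ hKm1 hcard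
      _ = exp (((n / Y ^ 9 : ℕ):ℝ) * (2 * (Y:ℝ) ^ 7)) * exp (2 * (Y:ℝ) ^ 7) := by
          rw [pow_succ, hKm, ← exp_nat_mul]
      _ ≤ _ := by
          refine mul_le_mul_of_nonneg_right (exp_le_exp.mpr ?_) (exp_pos _).le
          have : ((n / Y ^ 9 : ℕ):ℝ) ≤ (n:ℝ) / (Y:ℝ) ^ 9 := by
            refine (Nat.cast_div_le).trans ?_
            push_cast; rfl
          calc ((n / Y ^ 9 : ℕ):ℝ) * (2 * (Y:ℝ) ^ 7) ≤ (n:ℝ) / (Y:ℝ) ^ 9 * (2 * (Y:ℝ) ^ 7) := by gcongr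
            _ = _ := by field_simp
  have h1 := hG n x
  have h2 : c * exp (n * κ) ≤ exp (n * (2 / (Y:ℝ) ^ 2)) * exp (2 * (Y:ℝ) ^ 7) *
      (pq ω (fun y => pot ω (nf ω f b χ Y) y + b') x 1 0 n).1 := h1.trans (hcmp.trans (by gcongr))
  have e3 : c * exp (-(2 * (Y:ℝ) ^ 7)) * exp (n * (κ - 2 / (Y:ℝ) ^ 2)) =
      (exp (n * (2 / (Y:ℝ) ^ 2)) * exp (2 * (Y:ℝ) ^ 7))⁻¹ * (c * exp (n * κ)) := by
    rw [← exp_add, ← exp_neg, mul_assoc, ← exp_add, mul_left_comm, ← exp_add]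
    congr 2; ring
  rw [e3, inv_mul_le_iff₀ (by positivity)]
  exact h2

end Ctx


lemma Big.hit {ω c0 T0 : ℝ} {l Y : ℕ} (hB : Big c0 T0 l Y) (hc0 : 0 < c0) {α : ℝ} (hd : Dio c0 α) (x : ℝ) :
    ∃ m : ℕ, 1 ≤ m ∧ m ≤ Y ^ 21 ∧ near (1 / (Y:ℝ) ^ 10) (x + m * α) := by
  have hY : (0:ℝ) < Y := by linarith [hB.h100]
  have hY1 : (1:ℝ) ≤ Y := by linarith [hB.h100]
  obtain ⟨m, h1, h2, h3⟩ := hd.hit hc0 (ε := 1 / (Y:ℝ) ^ 10) (by positivity)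
    (by rw [div_le_one (by positivity)]; exact one_le_pow₀ hY1) x
  refine ⟨m, h1, ?_, h3⟩
  have : (m:ℝ) ≤ (Y:ℝ) ^ 21 := by
    refine h2.trans ?_
    have e : 12 / c0 / (1 / (Y:ℝ) ^ 10) ^ 2 = 12 / c0 * (Y:ℝ) ^ 20 := by field_simp
    rw [e]
    calc 12 / c0 * (Y:ℝ) ^ 20 ≤ Y * (Y:ℝ) ^ 20 := by gcongr; exact hB.hc
      _ = _ := by ring
  exact_mod_cast this

lemma Level.pos {ω : ℝ} {l Y : ℕ} {f : ℝ → ℝ} (h : Level ω l Y f) (x : ℝ) : 0 < f x := (exp_pos _).trans_le (h.lo x)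

lemma Level.stepIn {ω c0 T0 : ℝ} {l Y : ℕ} {f : ℝ → ℝ} (h : Level ω l Y f) (hB : Big c0 T0 l Y) (hc0 : 0 < c0)
    (hd : Dio c0 ω) : StepIn ω l (Y ^ 40) f (exp (-(Y:ℝ) ^ 7)) (Y ^ 21 + Y ^ 10 + 1) := by
  have hY : (0:ℝ) < Y := by linarith [hB.h100]
  have hY1 : (1:ℝ) ≤ Y := by linarith [hB.h100]
  have hYn : 100 ≤ Y := by exact_mod_cast hB.h100
  refine ⟨h.per, ?_, ?_, ?_, exp_pos _, ?_, by omega, ?_, ?_, ?_⟩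
  · push_cast; exact h.dom
  · push_cast; exact h.lo
  · push_cast; exact h.hi
  · push_cast
    exact (exp_le_one_iff.mpr (by have := pow_pos hY 7; linarith)).trans (one_le_pow₀ hY1)
  · have h1 : Y ^ 10 ≤ Y ^ 21 := Nat.pow_le_pow_right (by omega) (by norm_num)
    have h2 : 1 ≤ Y ^ 21 := Nat.one_le_pow _ _ (by omega)
    have h3 : Y ^ 21 * 100 ≤ Y ^ 21 * Y := Nat.mul_le_mul_left _ hYn
    have h4 : Y ^ 21 * Y = Y ^ 22 := by ring
    have h5 : Y ^ 22 ≤ Y ^ 40 := Nat.pow_le_pow_right (by omega) (by norm_num)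
    omega
  · intro α hα s i
    have hdα : Dio c0 α := by
      rcases hα with rfl | rfl
      · exact hd
      · exact hd.neg
    exact Gf_doubling h.pos (exp_pos _) (fun x => hB.hit (ω := ω) hc0 hdα x) h.core (h.valley α hα) s i
  · intro y hy
    refine h.core y (hy.mono ?_)
    push_cast
    rw [← pow_mul, div_le_div_iff₀ (by positivity) (by positivity), one_mul]
    calc 2 * (Y:ℝ) ^ 10 ≤ Y * (Y:ℝ) ^ 10 := by gcongr; linarith [hB.h100]
      _ = (Y:ℝ) ^ 11 := by ring
      _ ≤ _ := pow_le_pow_right₀ hY1 (by norm_num)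

lemma pot_contDiff {ω : ℝ} {l : ℕ} {f : ℝ → ℝ} (hf : ContDiff ℝ l f) (hp : ∀ x, 0 < f x) : ContDiff ℝ l (pot ω f) := by
  have h1 : ContDiff ℝ l (fun x => f (x + ω)) := hf.comp (contDiff_id.add contDiff_const)
  have h2 : ContDiff ℝ l (fun x => f (x - ω)) := hf.comp (contDiff_id.sub contDiff_const)
  exact (h1.add h2).div hf (fun x => (hp x).ne')

lemma pot_per {ω : ℝ} {f : ℝ → ℝ} (hf : Function.Periodic f 1) : Function.Periodic (pot ω f) 1 := by
  intro x
  have e1 : x + 1 + ω = x + ω + 1 := by ring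
  have e2 : x + 1 - ω = x - ω + 1 := by ring
  rw [pot, pot, e1, e2, hf, hf, hf]

lemma level_step {ω c0 T0 κ : ℝ} {l Y : ℕ} (hc0 : 0 < c0) (hd : Dio c0 ω) (hT1 : 1 ≤ T0)
    (hθ : ∀ ε : ℝ, 0 < ε → ε ≤ 1/8 → ∃ θ : ℝ → ℝ,
    Function.Periodic θ 1 ∧ (∀ x, 0 ≤ θ x) ∧ (∀ x, θ x ≤ 1) ∧ (∀ x, near ε x → θ x = 1) ∧
    (∀ x, ¬ near (2 * ε) x → θ x = 0) ∧ Dom l (T0 / ε) θ (fun _ => 1))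
    (hB : Big c0 T0 l Y) (hB' : Big c0 T0 l (Y ^ 40))
    (hE : 2 * (Y:ℝ) ^ (40 * (40 * l + 5) + 1) ≤ exp Y)
    {f : ℝ → ℝ} (h : Level ω l Y f) (hG : Growth ω (fun y => pot ω f y + exp (-(Y:ℝ) ^ 7)) (κ + 2 / Y)) :
    ∃ f', Level ω l (Y ^ 40) f' ∧
      Growth ω (fun y => pot ω f' y + exp (-((Y ^ 40 : ℕ):ℝ) ^ 7)) (κ + 2 / ((Y ^ 40 : ℕ):ℝ)) ∧
      ∀ x, ∀ j ≤ l, |iteratedDeriv j (fun y => pot ω f' y - pot ω f y) x| ≤ 1 / Y := by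
  have hY : (0:ℝ) < Y := by linarith [hB.h100]
  have hY1 : (1:ℝ) ≤ Y := by linarith [hB.h100]
  have hYn : 100 ≤ Y := by exact_mod_cast hB.h100
  obtain ⟨χ, hχ⟩ := exists_chi hB' hT1 hθ
  have C : Ctx ω c0 T0 l (Y ^ 40) f (exp (-(Y:ℝ) ^ 7)) (Y ^ 21 + Y ^ 10 + 1) χ :=
    ⟨hc0, hd, hB', h.stepIn hB hc0 hd, hχ⟩
  refine ⟨_, C.level, ?_, ?_⟩
  · refine (C.growth hG).mono ?_
    push_cast
    have h2 : 100 * (Y:ℝ) ≤ (Y:ℝ) ^ 40 := by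
      calc 100 * (Y:ℝ) ≤ Y * Y := by gcongr; exact hB.h100
        _ = (Y:ℝ) ^ 2 := by ring
        _ ≤ _ := pow_le_pow_right₀ hY1 (by norm_num)
    have h3 : 2 / (Y:ℝ) ^ 40 ≤ 2 / (100 * Y) := by gcongr
    have h4 : 2 / ((Y:ℝ) ^ 40) ^ 2 ≤ 2 / (100 * Y) := by
      gcongr
      refine h2.trans (le_self_pow₀ (one_le_pow₀ hY1) (by norm_num))
    have h5 : 2 / (100 * (Y:ℝ)) = (2 / Y) / 100 := by ring
    have h6 : 0 < 2 / (Y:ℝ) := by positivity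
    linarith
  · intro x j hj
    have e : (fun y => pot ω (nf ω f (exp (-(Y:ℝ) ^ 7)) χ (Y ^ 40)) y - pot ω f y) =
        corr ω f (exp (-(Y:ℝ) ^ 7)) χ ((Y ^ 40) ^ 22) := by
      funext y; rw [C.step_eq]; ring
    rw [e]
    refine ((C.corr_bound ?_).2 x j hj).trans ?_
    · intro α hα y hy
      obtain ⟨m, hm, hmv⟩ := h.valley α hα y (by
        refine hy.mono ?_
        push_cast
        rw [← pow_mul, div_le_div_iff₀ (by positivity) (by positivity), one_mul]
        calc 2 * (Y:ℝ) ^ 10 ≤ Y * (Y:ℝ) ^ 10 := by gcongr; linarith [hB.h100]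
          _ = (Y:ℝ) ^ 11 := by ring
          _ ≤ _ := pow_le_pow_right₀ hY1 (by norm_num))
      exact ⟨m, hm.trans (Nat.pow_le_pow_right (by omega) (by norm_num)), hmv⟩
    · push_cast
      have h1 : exp (-(Y:ℝ) ^ 7) ≤ exp (-Y) := exp_le_exp.mpr (neg_le_neg (le_self_pow₀ hY1 (by norm_num)))
      have h2 : exp (-(Y:ℝ) ^ 40) ≤ exp (-Y) := exp_le_exp.mpr (neg_le_neg (le_self_pow₀ hY1 (by norm_num)))
      rw [le_div_iff₀ hY, ← pow_mul]
      calc (Y:ℝ) ^ (40 * (40 * l + 5)) * (exp (-(Y:ℝ) ^ 7) + exp (-(Y:ℝ) ^ 40)) * Y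
          ≤ (Y:ℝ) ^ (40 * (40 * l + 5)) * (exp (-Y) + exp (-Y)) * Y := by gcongr
        _ = 2 * (Y:ℝ) ^ (40 * (40 * l + 5) + 1) * exp (-Y) := by rw [pow_succ]; ring
        _ ≤ exp Y * exp (-Y) := by gcongr
        _ = 1 := by rw [← exp_add]; simp

lemma base_dbl {b : ℝ} (hb : 0 < b) (α : ℝ) (i : ℕ) (s : ℝ) :
    b * Gf (fun _ => 1) b α i s ≤ Jf (fun _ => 1) b α i s ∧ 
    (1 + b) * Gf (fun _ => 1) b α i s ≤ Gf (fun _ => 1) b α (i+1) s := by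
  have hf : ∀ x : ℝ, (0:ℝ) < (fun _ : ℝ => (1:ℝ)) x := fun _ => one_pos
  have h1 : b * Gf (fun _ => 1) b α i s ≤ Jf (fun _ => 1) b α i s := by
    cases i with
    | zero => 
      have := Jf_one_le hf hb.le α 0 s
      simp only [Gf, GG_zero, mul_zero]
      linarith
    | succ i =>
      have := Jf_one_le hf hb.le α i s
      rw [Jf] at *
      rw [JJ_succ, Gf, cc]
      linarith
  refine ⟨h1, ?_⟩
  have e := GG_succ (α := α) (a := aa (fun _ => 1) α) (c := cc (fun _ => 1) b) i s
  rw [Gf, Jf] at h1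
  rw [Gf, Gf, e, aa]
  simp only [mul_one, div_one]
  linarith

lemma base_stepIn {b : ℝ} (hb : 0 < b) (ω : ℝ) (l : ℕ) : ∃ W : ℕ, 1 ≤ W ∧ ∀ Y : ℕ, 1 ≤ (Y:ℝ) → W ≤ Y → b ≤ Y →
    StepIn ω l Y (fun _ => 1) b W := by
  obtain ⟨W, hW⟩ := pow_unbounded_of_one_lt 2 (by linarith : 1 < 1 + b)
  refine ⟨W + 1, by omega, fun Y hY1 hWY hbY => ⟨fun x => rfl, ?_, ?_, fun _ => hY1, hb, hbY, by omega, hWY, ?_, fun _ _ => le_rfl⟩⟩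
  · have := Dom.const (l := l) (M := (Y:ℝ)) 1 (by linarith)
    simpa using this
  · intro x
    exact exp_le_one_iff.mpr (by linarith)
  · intro α _ s i
    have hf : ∀ x : ℝ, (0:ℝ) < (fun _ : ℝ => (1:ℝ)) x := fun _ => one_pos
    have h : ∀ k, (1 + b) ^ k * Gf (fun _ => 1) b α i s ≤ Gf (fun _ => 1) b α (i+k) s := by
      intro k
      induction k with
      | zero => simp
      | succ k ih =>
        have := (base_dbl hb α (i+k) s).2
        rw [← add_assoc, pow_succ]
        nlinarith
    have hG := Gf_nonneg hf hb.le α i s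
    have h2 : Gf (fun _ => 1) b α (i+W) s ≤ Gf (fun _ => 1) b α (i+(W+1)) s := Gf_mono hf hb.le α (by omega) s
    have h3 := h W
    nlinarith

lemma exists_seq {ω c0 T0 κ : ℝ} {l : ℕ} (hκ : 0 < κ) (hc0 : 0 < c0) (hd : Dio c0 ω) (hT1 : 1 ≤ T0)
    (hθ : ∀ ε : ℝ, 0 < ε → ε ≤ 1/8 → ∃ θ : ℝ → ℝ,
    Function.Periodic θ 1 ∧ (∀ x, 0 ≤ θ x) ∧ (∀ x, θ x ≤ 1) ∧ (∀ x, near ε x → θ x = 1) ∧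
    (∀ x, ¬ near (2 * ε) x → θ x = 0) ∧ Dom l (T0 / ε) θ (fun _ => 1)) :
    ∃ (F : ℕ → ℝ → ℝ) (β : ℕ → ℝ), (∀ k, 0 ≤ β k ∧ β k ≤ (1/2) ^ k) ∧
      (∀ k, Function.Periodic (F k) 1 ∧ ContDiff ℝ l (F k) ∧ ∃ m M, 0 < m ∧ ∀ x, m ≤ F k x ∧ F k x ≤ M) ∧
      (∀ k, Growth ω (fun y => pot ω (F k) y + β k) κ) ∧
      ∀ k x, ∀ j ≤ l, |iteratedDeriv j (fun y => pot ω (F (k+1)) y - pot ω (F k) y) x| ≤ (1/2) ^ k := by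
  have hev : ∀ᶠ Y : ℕ in atTop, 2 * (Y:ℝ) ^ (40 * (40 * l + 5) + 1) ≤ exp Y := by
    have hcast : Tendsto (fun Y : ℕ => (Y:ℝ)) atTop atTop := tendsto_natCast_atTop_atTop
    have := (Real.tendsto_exp_div_pow_atTop (40 * (40 * l + 5) + 1)).comp hcast
    filter_upwards [this.eventually_ge_atTop 2, hcast.eventually_ge_atTop 1] with Y hY hY1
    simp only [Function.comp] at hY
    rwa [le_div_iff₀ (by positivity)] at hY
  obtain ⟨Ys, hYs⟩ := eventually_atTop.mp ((eventually_big c0 T0 l).and hev)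
  -- base
  set κ0 := κ + 1 with hκ0
  set b := exp κ0 + exp (-κ0) - 2 with hb
  have hb0 : 0 < b := by
    have h1 : 1 < exp κ0 := one_lt_exp_iff.mpr (by linarith)
    have h2 : exp (-κ0) = (exp κ0)⁻¹ := exp_neg _
    rw [hb, h2]
    have h3 : exp κ0 + (exp κ0)⁻¹ - 2 = (exp κ0 - 1) ^ 2 / exp κ0 := by field_simp; ring
    rw [h3]
    have : 0 < exp κ0 - 1 := by linarith
    positivity
  obtain ⟨W, hW1, hW⟩ := base_stepIn hb0 ω l
  obtain ⟨Yb, hYb⟩ := exists_nat_ge b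
  set Y0 := Ys + W + Yb + 2 with hY0
  obtain ⟨hB0, -⟩ := hYs Y0 (by omega)
  obtain ⟨χ, hχ⟩ := exists_chi hB0 hT1 hθ
  have hS := hW Y0 (by linarith [hB0.h100]) (by omega) (hYb.trans (by exact_mod_cast (by omega : Yb ≤ Y0)))
  have C : Ctx ω c0 T0 l Y0 (fun _ => 1) b W χ := ⟨hc0, hd, hB0, hS, hχ⟩
  have hG0 : Growth ω (fun y => pot ω (fun _ => 1) y + b) κ0 := by
    have := growth_const ω κ0
    convert this using 2
    rw [pot, hb]; norm_num
  have hG1 : Growth ω (fun y => pot ω (nf ω (fun _ => 1) b χ Y0) y + exp (-(Y0:ℝ) ^ 7)) (κ + 2 / Y0) := by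
    refine (C.growth hG0).mono ?_
    have h100 := hB0.h100
    have h1 : 2 / (Y0:ℝ) ≤ 2 / 100 := by gcongr
    have h2 : 2 / (Y0:ℝ) ^ 2 ≤ 2 / 100 := by
      gcongr
      exact h100.trans (le_self_pow₀ (by linarith) (by norm_num))
    linarith
  let Yk : ℕ → ℕ := fun k => Y0 ^ (40 ^ k)
  have hYk1 : ∀ k, Yk (k+1) = Yk k ^ 40 := by
    intro k; simp only [Yk]; rw [← pow_mul, pow_succ]
  have hYk0 : ∀ k, Y0 ≤ Yk k := by
    intro k
    exact Nat.le_self_pow (by positivity) Y0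
  have hYk2 : ∀ k, (2:ℝ) ^ k ≤ Yk k := by
    intro k
    have h1 : k < 40 ^ k := Nat.lt_pow_self (by norm_num)
    have : 2 ^ k ≤ Yk k := by
      calc 2 ^ k ≤ 2 ^ (40 ^ k) := Nat.pow_le_pow_right (by norm_num) h1.le
        _ ≤ _ := Nat.pow_le_pow_left (by omega) _
    exact_mod_cast this
  let Q : ℕ → (ℝ → ℝ) → Prop := fun k f => Level ω l (Yk k) f ∧
    Growth ω (fun y => pot ω f y + exp (-(Yk k:ℝ) ^ 7)) (κ + 2 / (Yk k:ℝ))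
  have hQ0 : Q 0 (nf ω (fun _ => 1) b χ Y0) := by
    have e : Yk 0 = Y0 := by simp [Yk]
    simp only [Q, e]
    exact ⟨C.level, hG1⟩
  have hstep : ∀ k f, Q k f → ∃ f', Q (k+1) f' ∧
      ∀ x, ∀ j ≤ l, |iteratedDeriv j (fun y => pot ω f' y - pot ω f y) x| ≤ 1 / (Yk k:ℝ) := by
    intro k f hf
    have h1 := hYs (Yk k) (le_trans (by omega) (hYk0 k))
    have h2 := hYs (Yk (k+1)) (le_trans (by omega) (hYk0 (k+1)))
    rw [hYk1] at h2
    obtain ⟨f', a1, a2, a3⟩ := level_step hc0 hd hT1 hθ h1.1 h2.1 h1.2 hf.1 hf.2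
    refine ⟨f', ?_, a3⟩
    simp only [Q, hYk1]
    exact ⟨a1, a2⟩
  choose! nx hnx1 hnx2 using hstep
  let F : ℕ → ℝ → ℝ := fun k => Nat.rec (nf ω (fun _ => 1) b χ Y0) (fun k f => nx k f) k
  have hF : ∀ k, Q k (F k) := by
    intro k
    induction k with
    | zero => exact hQ0
    | succ k ih => exact hnx1 k _ ih
  have hYpos : ∀ k, (0:ℝ) < Yk k := fun k => lt_of_lt_of_le (by positivity) (hYk2 k)
  have hinv : ∀ k, 1 / (Yk k:ℝ) ≤ (1/2) ^ k := by
    intro k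
    rw [one_div_pow]
    exact one_div_le_one_div_of_le (by positivity) (hYk2 k)
  refine ⟨F, fun k => exp (-(Yk k:ℝ) ^ 7), fun k => ⟨(exp_pos _).le, ?_⟩, ?_, ?_, ?_⟩
  · refine le_trans ?_ (hinv k)
    have h1 : (1:ℝ) ≤ Yk k := le_trans (one_le_pow₀ (by norm_num)) (hYk2 k)
    show exp (-(Yk k:ℝ) ^ 7) ≤ 1 / (Yk k:ℝ)
    rw [exp_neg, one_div]
    refine inv_anti₀ (hYpos k) ?_
    calc (Yk k:ℝ) ≤ (Yk k:ℝ) ^ 7 := le_self_pow₀ h1 (by norm_num)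
      _ ≤ (Yk k:ℝ) ^ 7 + 1 := by linarith
      _ ≤ _ := add_one_le_exp _
  · intro k
    exact ⟨(hF k).1.per, (hF k).1.dom.1, _, _, exp_pos _, fun x => ⟨(hF k).1.lo x, (hF k).1.hi x⟩⟩
  · intro k
    refine (hF k).2.mono ?_
    have := hYpos k
    have : 0 < 2 / (Yk k:ℝ) := by positivity
    linarith
  · intro k x j hj
    exact (hnx2 k (F k) (hF k) x j hj).trans (hinv k)


lemma opNorm_mul (A B : Matrix (Fin 2) (Fin 2) ℝ) : opNorm (A * B) ≤ opNorm A * opNorm B := by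
  unfold opNorm
  rw [map_mul]
  exact norm_mul_le _ _

lemma opNorm_entry (A : Matrix (Fin 2) (Fin 2) ℝ) (i j : Fin 2) : |A i j| ≤ opNorm A := by
  unfold opNorm
  have h1 := ContinuousLinearMap.le_opNorm
    (Matrix.toEuclideanCLM (𝕜 := ℝ) A : EuclideanSpace ℝ (Fin 2) →L[ℝ] EuclideanSpace ℝ (Fin 2))
    (EuclideanSpace.single j 1)
  have h2 := PiLp.norm_apply_le ((Matrix.toEuclideanCLM (𝕜 := ℝ) A : EuclideanSpace ℝ (Fin 2) →L[ℝ] EuclideanSpace ℝ (Fin 2))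
    (EuclideanSpace.single j 1)) i
  have h3 : ((Matrix.toEuclideanCLM (𝕜 := ℝ) A : EuclideanSpace ℝ (Fin 2) →L[ℝ] EuclideanSpace ℝ (Fin 2))
    (EuclideanSpace.single j 1)) i = A i j := by
    simp [Matrix.ofLp_toEuclideanCLM]
  rw [h3, Real.norm_eq_abs] at h2
  simp at h1
  linarith

lemma opNorm_le_sum (A : Matrix (Fin 2) (Fin 2) ℝ) :
    opNorm A ≤ |A 0 0| + |A 0 1| + |A 1 0| + |A 1 1| := by
  unfold opNorm
  refine ContinuousLinearMap.opNorm_le_bound _ (by positivity) fun v => ?_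
  have e : ∀ i, ((Matrix.toEuclideanCLM (𝕜 := ℝ) A : EuclideanSpace ℝ (Fin 2) →L[ℝ] EuclideanSpace ℝ (Fin 2))
    v) i = A i 0 * v 0 + A i 1 * v 1 := by
    intro i
    simp [Matrix.ofLp_toEuclideanCLM, Matrix.mulVec, dotProduct, Fin.sum_univ_two]
  have h0 := PiLp.norm_apply_le v 0
  have h1 := PiLp.norm_apply_le v 1
  rw [Real.norm_eq_abs] at h0 h1
  have hb : ∀ i, |A i 0 * v 0 + A i 1 * v 1| ≤ (|A i 0| + |A i 1|) * ‖v‖ := by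
    intro i
    refine (abs_add_le _ _).trans ?_
    rw [abs_mul, abs_mul, add_mul]
    gcongr
  have hn : ∀ w : EuclideanSpace ℝ (Fin 2), ‖w‖ ≤ |w 0| + |w 1| := by
    intro w
    rw [EuclideanSpace.norm_eq, Fin.sum_univ_two]
    refine Real.sqrt_le_iff.2 ⟨by positivity, ?_⟩
    simp only [Real.norm_eq_abs]
    nlinarith [mul_nonneg (abs_nonneg (w 0)) (abs_nonneg (w 1))]
  refine (hn _).trans ?_
  rw [e, e]
  linarith [hb 0, hb 1]

lemma opNorm_continuous : Continuous opNorm := by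
  unfold opNorm
  refine continuous_norm.comp ?_
  exact LinearMap.continuous_of_finiteDimensional
    ({ toFun := fun A => Matrix.toEuclideanCLM (n := Fin 2) (𝕜 := ℝ) A
       map_add' := fun A B => map_add _ A B
       map_smul' := fun c A => map_smul _ c A } : Matrix (Fin 2) (Fin 2) ℝ →ₗ[ℝ]
        (EuclideanSpace ℝ (Fin 2) →L[ℝ] EuclideanSpace ℝ (Fin 2)))

lemma opNorm_sq_ge {A : Matrix (Fin 2) (Fin 2) ℝ} (h : A.det = 1) : 1 ≤ 2 * opNorm A ^ 2 := by
  rw [Matrix.det_fin_two] at h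
  have a := opNorm_entry A 0 0
  have b := opNorm_entry A 0 1
  have c := opNorm_entry A 1 0
  have d := opNorm_entry A 1 1
  have h1 : A 0 0 * A 1 1 ≤ opNorm A * opNorm A := by
    refine (le_abs_self _).trans ?_
    rw [abs_mul]
    exact mul_le_mul a d (abs_nonneg _) ((abs_nonneg _).trans a)
  have h2 : -(A 0 1 * A 1 0) ≤ opNorm A * opNorm A := by
    refine (neg_le_abs _).trans ?_
    rw [abs_mul]
    exact mul_le_mul b c (abs_nonneg _) ((abs_nonneg _).trans a)
  nlinarith

lemma opNorm_pos {A : Matrix (Fin 2) (Fin 2) ℝ} (h : A.det = 1) : 0 < opNorm A := by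
  have h0 : 0 ≤ opNorm A := (abs_nonneg _).trans (opNorm_entry A 0 0)
  have := opNorm_sq_ge h
  rcases h0.lt_or_eq with h1 | h1
  · exact h1
  · rw [← h1] at this; norm_num at this

lemma log_opNorm_ge {A : Matrix (Fin 2) (Fin 2) ℝ} (h : A.det = 1) : -1 ≤ log (opNorm A) := by
  rw [Real.le_log_iff_exp_le (opNorm_pos h)]
  have h1 := opNorm_sq_ge h
  have h2 : exp (-1) ≤ 1 / 2 := by
    rw [exp_neg, one_div]
    refine inv_anti₀ (by norm_num) ?_
    linarith [add_one_le_exp (1:ℝ)]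
  nlinarith [opNorm_pos h]

section gen
variable {ω : ℝ} {A : ℝ → Matrix (Fin 2) (Fin 2) ℝ}

lemma cocycle_det (hd : ∀ x, (A x).det = 1) (n : ℕ) (x : ℝ) : (cocycle ω A n x).det = 1 := by
  induction n with
  | zero => simp [cocycle]
  | succ n ih => rw [cocycle, Matrix.det_mul, hd, ih, one_mul]

lemma cocycle_add (m n : ℕ) (x : ℝ) :
    cocycle ω A (m + n) x = cocycle ω A m (x + n * ω) * cocycle ω A n x := by
  induction m with
  | zero => simp [cocycle]
  | succ m ih =>
    rw [show m + 1 + n = (m + n) + 1 by ring, cocycle, cocycle, ih, Matrix.mul_assoc]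
    congr 2
    push_cast; ring

lemma cocycle_cont (hA : Continuous A) (n : ℕ) : Continuous (cocycle ω A n) := by
  induction n with
  | zero => exact continuous_const
  | succ n ih =>
    have : cocycle ω A (n + 1) = fun x => A (x + n * ω) * cocycle ω A n x := rfl
    rw [this]
    exact (hA.comp (by fun_prop)).matrix_mul ih

lemma cocycle_per (hA : Function.Periodic A 1) (n : ℕ) : Function.Periodic (cocycle ω A n) 1 := by
  intro x
  induction n with
  | zero => rfl
  | succ n ih =>
    rw [cocycle, cocycle, ih, show x + 1 + n * ω = x + n * ω + 1 by ring, hA]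

lemma log_cont (hA : Continuous A) (hd : ∀ x, (A x).det = 1) (n : ℕ) :
    Continuous fun x => log (opNorm (cocycle ω A n x)) :=
  Continuous.log (opNorm_continuous.comp (cocycle_cont hA n))
    fun x => (opNorm_pos (cocycle_det hd n x)).ne'

lemma subadd (hA : Continuous A) (hp : Function.Periodic A 1) (hd : ∀ x, (A x).det = 1) :
    Subadditive fun n => ∫ x in (0:ℝ)..1, log (opNorm (cocycle ω A n x)) := by
  intro m n
  have hc := fun n => log_cont (ω := ω) hA hd n
  have h1 : ∫ x in (0:ℝ)..1, log (opNorm (cocycle ω A m x))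
      = ∫ x in (0:ℝ)..1, log (opNorm (cocycle ω A m (x + n * ω))) := by
    rw [intervalIntegral.integral_comp_add_right (fun x => log (opNorm (cocycle ω A m x)))]
    have hpp : Function.Periodic (fun x => log (opNorm (cocycle ω A m x))) 1 := by
      intro x
      show log (opNorm (cocycle ω A m (x + 1))) = _
      rw [cocycle_per hp]
    have := hpp.intervalIntegral_add_eq 0 (n * ω)
    rw [zero_add] at this
    rw [this, zero_add, add_comm]
  simp only []
  rw [h1, ← intervalIntegral.integral_add]
  · refine intervalIntegral.integral_mono_on (by norm_num) ((hc _).intervalIntegrable _ _) ?_ ?_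
    · exact (((hc m).comp (by fun_prop : Continuous fun x : ℝ => x + n * ω)).add (hc n)).intervalIntegrable _ _
    · intro x _
      rw [← Real.log_mul (opNorm_pos (cocycle_det hd _ _)).ne' (opNorm_pos (cocycle_det hd _ _)).ne']
      refine Real.log_le_log (opNorm_pos (cocycle_det hd _ _)) ?_
      rw [cocycle_add]
      exact opNorm_mul _ _
  · exact ((hc m).comp (by fun_prop : Continuous fun x : ℝ => x + n * ω)).intervalIntegrable _ _
  · exact (hc n).intervalIntegrable _ _

lemma int_ge (hA : Continuous A) (hd : ∀ x, (A x).det = 1) (n : ℕ) (c : ℝ)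
    (h : ∀ x, c ≤ log (opNorm (cocycle ω A n x))) :
    c ≤ ∫ x in (0:ℝ)..1, log (opNorm (cocycle ω A n x)) := by
  have := intervalIntegral.integral_mono_on (μ := volume) (a := 0) (b := 1) (f := fun _ => c) (by norm_num)
    (by simp) ((log_cont (ω := ω) hA hd n).intervalIntegrable _ _) (fun x _ => h x)
  simpa using this

lemma int_le (hA : Continuous A) (hd : ∀ x, (A x).det = 1) (n : ℕ) (c : ℝ)
    (h : ∀ x, log (opNorm (cocycle ω A n x)) ≤ c) :
    ∫ x in (0:ℝ)..1, log (opNorm (cocycle ω A n x)) ≤ c := by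
  have := intervalIntegral.integral_mono_on (μ := volume) (a := 0) (b := 1) (g := fun _ => c) (by norm_num)
    ((log_cont (ω := ω) hA hd n).intervalIntegrable _ _) (by simp) (fun x _ => h x)
  simpa using this

lemma LEn_eq (n : ℕ) : LEn ω A n = (∫ x in (0:ℝ)..1, log (opNorm (cocycle ω A n x))) / n := by
  unfold LEn; ring

lemma bddb (hA : Continuous A) (hd : ∀ x, (A x).det = 1) :
    BddBelow (Set.range fun n : ℕ => (∫ x in (0:ℝ)..1, log (opNorm (cocycle ω A n x))) / n) := by
  refine ⟨-1, ?_⟩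
  rintro _ ⟨n, rfl⟩
  have h := int_ge (ω := ω) hA hd n (-1) fun x => log_opNorm_ge (cocycle_det hd n x)
  rcases Nat.eq_zero_or_pos n with h0 | h0
  · subst h0; simp
  · have : (1:ℝ) ≤ n := by exact_mod_cast h0
    simp only []
    rw [le_div_iff₀ (by linarith)]
    linarith

lemma LEn_tendsto (hA : Continuous A) (hp : Function.Periodic A 1) (hd : ∀ x, (A x).det = 1) :
    Tendsto (fun n => LEn ω A n) atTop (nhds (subadd (ω := ω) hA hp hd).lim) := by
  simp only [LEn_eq]
  exact (subadd (ω := ω) hA hp hd).tendsto_lim (bddb hA hd)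

/-- uniform exponential growth bounds every finite exponent below -/
lemma LEn_ge (hA : Continuous A) (hp : Function.Periodic A 1) (hd : ∀ x, (A x).det = 1)
    {κ c : ℝ} (hc : 0 < c) (h : ∀ (n : ℕ) x, c * exp (n * κ) ≤ opNorm (cocycle ω A n x))
    {n : ℕ} (hn : n ≠ 0) : κ ≤ LEn ω A n := by
  have h1 := (subadd (ω := ω) hA hp hd).lim_le_div (bddb hA hd) hn
  rw [LEn_eq]
  refine le_trans ?_ h1
  have h2 := LEn_tendsto (ω := ω) hA hp hd
  have h3 : Tendsto (fun n : ℕ => log c / n + κ) atTop (nhds (0 + κ)) :=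
    (tendsto_const_div_atTop_nhds_zero_nat _).add tendsto_const_nhds
  rw [zero_add] at h3
  refine le_of_tendsto_of_tendsto h3 h2 ?_
  filter_upwards [eventually_gt_atTop 0] with k hk
  have hk' : (0:ℝ) < k := by exact_mod_cast hk
  rw [LEn_eq, le_div_iff₀ hk']
  have : (log c / k + κ) * k = log c + k * κ := by field_simp
  rw [this]
  refine int_ge hA hd _ _ fun x => ?_
  have := Real.log_le_log (by positivity) (h k x)
  rwa [Real.log_mul hc.ne' (exp_pos _).ne', Real.log_exp] at this

end gen


section sch
variable {ω : ℝ} {V : ℝ → ℝ}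

lemma sch_cocycle (n : ℕ) (x : ℝ) : cocycle ω (SchrodingerCocycle V) n x =
    !![(pq ω V x 1 0 n).1, (pq ω V x 0 1 n).1; (pq ω V x 1 0 n).2, (pq ω V x 0 1 n).2] := by
  induction n with
  | zero => simp [cocycle, pq, Matrix.one_fin_two]
  | succ n ih =>
    rw [cocycle, ih, SchrodingerCocycle, Matrix.mul_fin_two]
    simp [pq, sub_eq_add_neg]

lemma sch_det (x : ℝ) : (SchrodingerCocycle V x).det = 1 := by
  simp [SchrodingerCocycle, Matrix.det_fin_two]

lemma sch_per (h : Function.Periodic V 1) : Function.Periodic (SchrodingerCocycle V) 1 := by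
  intro x; simp [SchrodingerCocycle, h x]

lemma sch_eq : SchrodingerCocycle V = fun x =>
    (!![0, -1; 1, 0] : Matrix (Fin 2) (Fin 2) ℝ) + V x • !![1, 0; 0, 0] := by
  funext x
  ext i j
  fin_cases i <;> fin_cases j <;> simp [SchrodingerCocycle]

lemma sch_contDiff {l : ℕ} (h : ContDiff ℝ l V) : ContDiff ℝ l (SchrodingerCocycle V) := by
  rw [sch_eq]
  exact contDiff_const.add (h.smul contDiff_const)

lemma sch_cont (h : Continuous V) : Continuous (SchrodingerCocycle V) := by
  rw [sch_eq]
  exact continuous_const.add (h.smul continuous_const)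

lemma sch_growth {κ : ℝ} (h : Growth ω V κ) (hV : Continuous V) (hp : Function.Periodic V 1)
    {n : ℕ} (hn : n ≠ 0) : κ ≤ LEn ω (SchrodingerCocycle V) n := by
  obtain ⟨c, hc, h⟩ := h
  refine LEn_ge (sch_cont hV) (sch_per hp) sch_det hc (fun n x => ?_) hn
  refine (h n x).trans ((le_abs_self _).trans ?_)
  have := opNorm_entry (cocycle ω (SchrodingerCocycle V) n x) 0 0
  rw [sch_cocycle] at this ⊢
  simpa using this

lemma sch_zero {f : ℝ → ℝ} {m M : ℝ} (hp : Function.Periodic f 1) (hcf : Continuous f)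
    (hm : 0 < m) (hlo : ∀ x, m ≤ f x) (hhi : ∀ x, f x ≤ M) :
    Tendsto (fun n => LEn ω (SchrodingerCocycle (pot ω f)) n) atTop (nhds 0) := by
  have hf : ∀ x, 0 < f x := fun x => hm.trans_le (hlo x)
  have hV : Continuous (pot ω f) := by
    unfold pot
    exact ((hcf.comp (by fun_prop)).add (hcf.comp (by fun_prop))).div hcf fun x => (hf x).ne'
  have hM : 0 < M := (hf 0).trans_le (hhi 0)
  set a := M / m with ha
  set b := 2 * M * M / m ^ 2 with hb
  have ha0 : 0 < a := by positivity
  have hb0 : 0 < b := by positivity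
  set K : ℝ := 4 * (a + b + 1) with hK
  have hK0 : 0 < K := by positivity
  have hlg := linear_growth (ω := ω) hf hm hlo hhi
  have hent : ∀ (x s t : ℝ), |s| ≤ 1 → |t| ≤ 1 → ∀ n : ℕ,
      |(pq ω (pot ω f) x s t n).1| ≤ (a + b + 1) * (n + 1) ∧
      |(pq ω (pot ω f) x s t n).2| ≤ (a + b + 1) * (n + 1) := by
    intro x s t hs ht n
    have h1 : ∀ n : ℕ, |(pq ω (pot ω f) x s t n).1| ≤ (a + b + 1) * (n + 1) := by
      intro n
      refine (hlg x s t hs ht n).trans ?_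
      have : (0:ℝ) ≤ n := n.cast_nonneg
      rw [← ha, ← hb]
      nlinarith [mul_nonneg this ha0.le]
    refine ⟨h1 n, ?_⟩
    cases n with
    | zero => simp only [pq]; push_cast; linarith
    | succ n =>
      have := h1 n
      simp only [pq]
      refine this.trans ?_
      push_cast
      nlinarith
  have hop : ∀ (n : ℕ) x, opNorm (cocycle ω (SchrodingerCocycle (pot ω f)) n x) ≤ K * (n + 1) := by
    intro n x
    refine (opNorm_le_sum _).trans ?_
    rw [sch_cocycle]
    have h1 := hent x 1 0 (by norm_num) (by norm_num) n
    have h2 := hent x 0 1 (by norm_num) (by norm_num) n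
    simp only [Matrix.of_apply, Matrix.cons_val', Matrix.cons_val_zero, Matrix.cons_val_one,
      Matrix.cons_val_fin_one]
    linarith [h1.1, h1.2, h2.1, h2.2]
  have hup : Tendsto (fun n : ℕ => (log K + log (n + 1)) / n) atTop (nhds 0) := by
    have t1 : Tendsto (fun n : ℕ => log K / (n:ℝ)) atTop (nhds 0) :=
      tendsto_const_div_atTop_nhds_zero_nat _
    have t2 : Tendsto (fun n : ℕ => log ((n:ℝ) + 1) / n) atTop (nhds 0) := by
      have := (Real.isLittleO_log_id_atTop.comp_tendsto
        (tendsto_natCast_atTop_atTop (R := ℝ) |>.comp (tendsto_add_atTop_nat 1))).tendsto_div_nhds_zero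
      have t3 : Tendsto (fun n : ℕ => 1 + 1 / (n:ℝ)) atTop (nhds (1 + 0)) :=
        tendsto_const_nhds.add (tendsto_const_div_atTop_nhds_zero_nat _)
      have t4 := this.mul t3
      rw [zero_mul] at t4
      refine t4.congr' ?_
      filter_upwards [eventually_gt_atTop 0] with n hn
      have : (0:ℝ) < n := by exact_mod_cast hn
      simp only [Function.comp, id]
      push_cast
      field_simp
    have := t1.add t2
    rw [add_zero] at this
    exact this.congr fun n => by ring
  have hdn : Tendsto (fun n : ℕ => (-1:ℝ) / n) atTop (nhds 0) :=
    tendsto_const_div_atTop_nhds_zero_nat _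
  refine tendsto_of_tendsto_of_tendsto_of_le_of_le hdn hup (fun n => ?_) (fun n => ?_)
  · simp only [LEn_eq]
    have := int_ge (ω := ω) (sch_cont hV) sch_det n (-1)
      fun x => log_opNorm_ge (cocycle_det sch_det n x)
    gcongr
  · simp only [LEn_eq]
    have := int_le (ω := ω) (sch_cont hV) sch_det n (log K + log (n + 1)) fun x => by
      rw [← Real.log_mul hK0.ne' (by positivity)]
      exact Real.log_le_log (opNorm_pos (cocycle_det sch_det n x)) (hop n x)
    gcongr

/-- continuity of finite exponents under uniform convergence of potentials -/
lemma sch_LEn_lim {W : ℕ → ℝ → ℝ} {B : ℝ} (hW : ∀ k, Continuous (W k)) (hV : Continuous V)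
    (hB : ∀ k x, |W k x| ≤ B) (hlim : ∀ x, Tendsto (fun k => W k x) atTop (nhds (V x))) (n : ℕ) :
    Tendsto (fun k => LEn ω (SchrodingerCocycle (W k)) n) atTop
      (nhds (LEn ω (SchrodingerCocycle V) n)) := by
  have hB0 : 0 ≤ B := (abs_nonneg _).trans (hB 0 0)
  have hcoc : ∀ x, Tendsto (fun k => cocycle ω (SchrodingerCocycle (W k)) n x) atTop
      (nhds (cocycle ω (SchrodingerCocycle V) n x)) := by
    intro x
    induction n with
    | zero => exact tendsto_const_nhds
    | succ n ih =>
      simp only [cocycle]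
      refine Tendsto.mul ?_ ih
      simp only [sch_eq]
      exact tendsto_const_nhds.add ((hlim _).smul tendsto_const_nhds)
  have hbd : ∀ k x, opNorm (cocycle ω (SchrodingerCocycle (W k)) n x) ≤ 4 * (B + 2) ^ n := by
    clear hcoc
    intro k x
    induction n with
    | zero =>
      refine (opNorm_le_sum _).trans ?_
      simp [cocycle]; norm_num
    | succ n ih =>
      rw [cocycle]
      refine (opNorm_mul _ _).trans ?_
      have h1 : opNorm (SchrodingerCocycle (W k) (x + n * ω)) ≤ B + 2 := by
        refine (opNorm_le_sum _).trans ?_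
        simp [SchrodingerCocycle]
        linarith [hB k (x + n * ω)]
      calc _ ≤ (B + 2) * (4 * (B + 2) ^ n) :=
            mul_le_mul h1 ih
              ((abs_nonneg _).trans (opNorm_entry _ 0 0)) (by linarith)
        _ = _ := by ring
  simp only [LEn]
  refine Tendsto.const_mul _ ?_
  refine intervalIntegral.tendsto_integral_filter_of_dominated_convergence
    (fun _ => 1 + |log (4 * (B + 2) ^ n)|) ?_ ?_ (by simp) ?_
  · exact Eventually.of_forall fun k =>
      (log_cont (ω := ω) (sch_cont (hW k)) sch_det n).aestronglyMeasurable
  · refine Eventually.of_forall fun k => ae_of_all _ fun x _ => ?_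
    rw [Real.norm_eq_abs, abs_le]
    have h1 := log_opNorm_ge (cocycle_det (ω := ω) (A := SchrodingerCocycle (W k)) sch_det n x)
    have h2 := Real.log_le_log (opNorm_pos (cocycle_det (ω := ω) (A := SchrodingerCocycle (W k)) sch_det n x)) (hbd k x)
    have h3 := le_abs_self (log (4 * (B + 2) ^ n))
    have h4 := abs_nonneg (log (4 * (B + 2) ^ n))
    constructor <;> linarith
  · refine ae_of_all _ fun x _ => ?_
    exact ((opNorm_continuous.tendsto _).comp (hcoc x)).log
      (opNorm_pos (cocycle_det sch_det n x)).ne'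

lemma sch_diff {l : ℕ} {U : ℝ → ℝ} (hU : ContDiff ℝ l U) (hV : ContDiff ℝ l V) {j : ℕ} (hj : j ≤ l)
    (x : ℝ) : opNorm (iteratedDeriv j (fun y => SchrodingerCocycle U y - SchrodingerCocycle V y) x)
      ≤ |iteratedDeriv j (fun y => U y - V y) x| := by
  have e : (fun y => SchrodingerCocycle U y - SchrodingerCocycle V y) =
      fun y => (U y - V y) • (!![1, 0; 0, 0] : Matrix (Fin 2) (Fin 2) ℝ) := by
    rw [sch_eq, sch_eq]
    funext y
    simp only []
    rw [sub_smul]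
    abel
  have hw : ContDiff ℝ l (fun y => U y - V y) := hU.sub hV
  have key : ∀ i ≤ l, iteratedDeriv i (fun y => (U y - V y) • (!![1, 0; 0, 0] : Matrix (Fin 2) (Fin 2) ℝ))
      = fun y => iteratedDeriv i (fun y => U y - V y) y • (!![1, 0; 0, 0] : Matrix (Fin 2) (Fin 2) ℝ) := by
    intro i
    induction i with
    | zero => intro _; simp
    | succ i ih =>
      intro hi
      rw [iteratedDeriv_succ, ih (by omega)]
      funext y
      have hdi := (hw.differentiable_iteratedDeriv i (by exact_mod_cast hi)) y
      rw [iteratedDeriv_succ]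
      exact (hdi.hasDerivAt.smul_const _).deriv
  rw [e, key j hj]
  refine (opNorm_le_sum _).trans ?_
  simp
end sch


lemma tsum_Cl {l : ℕ} {d : ℕ → ℝ → ℝ} {C : ℝ} (hd : ∀ i, ContDiff ℝ l (d i))
    (hb : ∀ i x, ∀ j ≤ l, |iteratedDeriv j (d i) x| ≤ C * (1/2) ^ i) :
    ContDiff ℝ l (fun x => ∑' i, d i x) ∧
    ∀ x, ∀ j ≤ l, |iteratedDeriv j (fun x => ∑' i, d i x) x| ≤ 2 * C := by
  have hs : HasSum (fun i : ℕ => C * (1/2:ℝ) ^ i) (C * 2) := hasSum_geometric_two.mul_left C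
  have hf' : ∀ i, ContDiff ℝ ((l : ℕ∞) : WithTop ℕ∞) (d i) := fun i => by exact_mod_cast hd i
  have hb' : ∀ (k : ℕ) (i : ℕ) (x : ℝ), (k : ℕ∞) ≤ (l : ℕ∞) →
      ‖iteratedFDeriv ℝ k (d i) x‖ ≤ (fun (_ : ℕ) (i : ℕ) => C * (1/2:ℝ) ^ i) k i := by
    intro k i x hk
    rw [norm_iteratedFDeriv_eq_norm_iteratedDeriv]
    exact hb i x k (by exact_mod_cast hk)
  refine ⟨by exact_mod_cast contDiff_tsum (N := (l:ℕ∞)) hf' (fun _ _ => hs.summable) hb', ?_⟩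
  intro x j hj
  have hj' : (j : ℕ∞) ≤ (l : ℕ∞) := by exact_mod_cast hj
  have h1 := iteratedFDeriv_tsum_apply (N := (l:ℕ∞)) hf' (fun _ _ => hs.summable) hb' hj' x
  rw [← Real.norm_eq_abs, ← norm_iteratedFDeriv_eq_norm_iteratedDeriv, h1, mul_comm]
  exact tsum_of_norm_bounded hs fun i => hb' j i x hj'

lemma lim_Cl {l : ℕ} {v : ℕ → ℝ → ℝ} (hv : ∀ k, ContDiff ℝ l (v k))
    (hb : ∀ k x, ∀ j ≤ l, |iteratedDeriv j (fun y => v (k + 1) y - v k y) x| ≤ (1/2) ^ k) :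
    ∃ w, ContDiff ℝ l w ∧ ∀ k x, ∀ j ≤ l, |iteratedDeriv j (fun y => v k y - w y) x| ≤ 2 * (1/2) ^ k := by
  set d : ℕ → ℝ → ℝ := fun k y => v (k + 1) y - v k y with hd
  have hdC : ∀ k, ContDiff ℝ l (d k) := fun k => (hv (k+1)).sub (hv k)
  have hT : ∀ k, ContDiff ℝ l (fun x => ∑' i, d (i + k) x) ∧
    ∀ x, ∀ j ≤ l, |iteratedDeriv j (fun x => ∑' i, d (i + k) x) x| ≤ 2 * (1/2) ^ k := by
    intro k
    refine tsum_Cl (fun i => hdC _) fun i x j hj => ?_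
    refine (hb (i + k) x j hj).trans (le_of_eq ?_)
    rw [pow_add]; ring
  have hsum : ∀ x, Summable fun i => d i x := by
    intro x
    refine Summable.of_norm_bounded (g := fun i : ℕ => (1/2:ℝ) ^ i) summable_geometric_two fun i => ?_
    have := hb i x 0 (Nat.zero_le _)
    rw [iteratedDeriv_zero] at this
    exact this
  have htel : ∀ k x, ∑ i ∈ Finset.range k, d i x = v k x - v 0 x := by
    intro k x
    exact Finset.sum_range_sub (fun i => v i x) k
  refine ⟨fun x => v 0 x + ∑' i, d i x, (hv 0).add (by simpa using (hT 0).1), ?_⟩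
  intro k x j hj
  have e : (fun y => v k y - (v 0 y + ∑' i, d i y)) = fun y => -(∑' i, d (i + k) y) := by
    funext y
    rw [← (hsum y).sum_add_tsum_nat_add k, htel]
    ring
  rw [e, iteratedDeriv_fun_neg, abs_neg]
  exact (hT k).2 x j hj

theorem sl2_positive_LE_not_Cl_open_approx
    (ω : ℝ) (hω : Irrational ω)
    (M : ℝ) (hM : 1 ≤ M) (hbt : ∀ k : ℕ, cfDen ω (k + 1) ≤ M * cfDen ω k)
    (l : ℕ) (κ : ℝ) (hκ : 0 < κ) :
    ∃ (D : ℝ → Matrix (Fin 2) (Fin 2) ℝ) (C : ℕ → ℝ → Matrix (Fin 2) (Fin 2) ℝ),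
      Function.Periodic D 1 ∧ ContDiff ℝ l D ∧ (∀ x, (D x).det = 1) ∧
      (∀ k, Function.Periodic (C k) 1 ∧ ContDiff ℝ l (C k) ∧ ∀ x, ((C k) x).det = 1) ∧
      -- (i) L(D) ≥ κ
      (∃ L : ℝ, κ ≤ L ∧ Tendsto (fun m => LEn ω D m) atTop (nhds L)) ∧
      -- (ii) L(C_k) = 0 for every k
      (∀ k, Tendsto (fun m => LEn ω (C k) m) atTop (nhds 0)) ∧
      -- (iii) C_k → D in the C^l topology
      (∀ j ≤ l, ∀ ε : ℝ, 0 < ε → ∃ K : ℕ, ∀ k ≥ K, ∀ x : ℝ,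
        opNorm (iteratedDeriv j (fun y => C k y - D y) x) ≤ ε) := by
  obtain ⟨c0, hc0, hc1, hdio⟩ := cf_dioph ω hω M hM hbt
  obtain ⟨T0, hT1, hθ⟩ := exists_theta l
  obtain ⟨F, β, hβ, hF, hG, hdif⟩ := exists_seq (l := l) hκ hc0 hdio hT1 hθ
  have hpos : ∀ k x, 0 < F k x := by
    intro k x
    obtain ⟨m, M, hm, h⟩ := (hF k).2.2
    exact hm.trans_le (h x).1
  have hvC : ∀ k, ContDiff ℝ l (pot ω (F k)) := fun k => pot_contDiff (hF k).2.1 (hpos k)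
  have hvP : ∀ k, Function.Periodic (pot ω (F k)) 1 := fun k => pot_per (hF k).1
  obtain ⟨w, hwC, hw⟩ := lim_Cl hvC hdif
  have hp2 : Tendsto (fun k : ℕ => (1/2:ℝ) ^ k) atTop (nhds 0) :=
    tendsto_pow_atTop_nhds_zero_of_lt_one (by norm_num) (by norm_num)
  have hp2' : Tendsto (fun k : ℕ => 2 * (1/2:ℝ) ^ k) atTop (nhds 0) := by
    simpa using hp2.const_mul 2
  have hw0 : ∀ k x, |pot ω (F k) x - w x| ≤ 2 * (1/2) ^ k := by
    intro k x
    have := hw k x 0 (Nat.zero_le _)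
    rwa [iteratedDeriv_zero] at this
  have hlim : ∀ x, Tendsto (fun k => pot ω (F k) x) atTop (nhds (w x)) := by
    intro x
    rw [tendsto_iff_norm_sub_tendsto_zero]
    exact squeeze_zero (fun _ => norm_nonneg _) (fun k => hw0 k x) hp2'
  have hβ0 : Tendsto β atTop (nhds 0) := squeeze_zero (fun k => (hβ k).1) (fun k => (hβ k).2) hp2
  have hwP : Function.Periodic w 1 := by
    intro x
    refine tendsto_nhds_unique (hlim (x + 1)) ?_
    simp only [(hvP _) x]
    exact hlim x
  have hwcont : Continuous w := hwC.continuous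
  obtain ⟨B, hB⟩ : ∃ B, ∀ x, |w x| ≤ B := by
    obtain ⟨B, hB⟩ := (isCompact_Icc (a := (0:ℝ)) (b := 1)).exists_bound_of_continuousOn hwcont.continuousOn
    refine ⟨B, fun x => ?_⟩
    obtain ⟨y, hy, hxy⟩ := hwP.exists_mem_Ico₀ one_pos x
    rw [hxy]
    exact hB y ⟨hy.1, hy.2.le⟩
  have hp1 : ∀ k : ℕ, (1/2:ℝ) ^ k ≤ 1 := fun k => pow_le_one₀ (by norm_num) (by norm_num)
  have hgood : ∀ n : ℕ, n ≠ 0 → κ ≤ LEn ω (SchrodingerCocycle w) n := by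
    intro n hn
    have ht := sch_LEn_lim (ω := ω) (V := w) (W := fun k y => pot ω (F k) y + β k) (B := B + 3)
      (fun k => (hvC k).continuous.add continuous_const) hwcont ?_ ?_ n
    · refine ge_of_tendsto' ht fun k => ?_
      refine sch_growth (hG k) ((hvC k).continuous.add continuous_const) ?_ hn
      intro x
      show pot ω (F k) (x + 1) + β k = _
      rw [hvP k x]
    · intro k x
      have h1 := abs_le.1 (hw0 k x)
      have h2 := abs_le.1 (hB x)
      have h3 := hβ k
      have h4 := hp1 k
      rw [abs_le]
      constructor <;> linarith [h1.1, h1.2, h2.1, h2.2, h3.1, h3.2]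
    · intro x
      simpa using (hlim x).add hβ0
  have hLD := LEn_tendsto (ω := ω) (sch_cont hwcont) (sch_per hwP) sch_det
  refine ⟨SchrodingerCocycle w, fun k => SchrodingerCocycle (pot ω (F k)), sch_per hwP,
    sch_contDiff hwC, sch_det, fun k => ⟨sch_per (hvP k), sch_contDiff (hvC k), sch_det⟩,
    ⟨_, ?_, hLD⟩, ?_, ?_⟩
  · refine ge_of_tendsto hLD ?_
    filter_upwards [eventually_ne_atTop 0] with n hn using hgood n hn
  · intro k
    obtain ⟨hper, hcd, m, M, hm, h⟩ := hF k
    exact sch_zero hper hcd.continuous hm (fun x => (h x).1) (fun x => (h x).2)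
  · intro j hj ε hε
    obtain ⟨K, hK⟩ := eventually_atTop.1 (hp2'.eventually (gt_mem_nhds hε))
    refine ⟨K, fun k hk x => ?_⟩
    exact (sch_diff (hvC k) hwC hj x).trans ((hw k x j hj).trans (hK k hk).le)
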